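/- Suppose b : ℝ → ℝ is positive with b(T) → 0 as T → ∞, and suppose that for all sufficiently large T, every nontrivial zero ρ = β + iγ of the Riemann zeta function with T < γ ≤ 2T satisfies |β − 1/2| < b(T)/(2 log T). Then, as T → ∞, the number of nontrivial zeros ρ = β + iγ of ζ with T < γ ≤ 2T that are simple and satisfy β = 1/2 is at least (1/3 + o(1)) times the total number of nontrivial zeros ρ = β + iγ of ζ with T < γ ≤ 2T (zeros counted with multiplicity). -/

import Mathlib

open Filter Topology MeasureTheory Set

/-- The multiplicity of `ρ` as a zero of the Riemann zeta function:
the least `n` such that the `n`-th iterated derivative of `ζ` is nonzero at `ρ`. -/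
noncomputable def zetaMult (ρ : ℂ) : ℕ :=
  sInf {n : ℕ | iteratedDeriv n riemannZeta ρ ≠ 0}

/-- `ρ` is a nontrivial zero of the Riemann zeta function. -/
def IsNontrivialZero (ρ : ℂ) : Prop :=
  riemannZeta ρ = 0 ∧ 0 < ρ.re ∧ ρ.re < 1

/-- The set of nontrivial zeros `ρ = β + iγ` with `T < γ ≤ 2T`. -/
def zeroBand (T : ℝ) : Set ℂ :=
  {ρ | IsNontrivialZero ρ ∧ T < ρ.im ∧ ρ.im ≤ 2 * T}

/-- Number of nontrivial zeros with `T < γ ≤ 2T`, counted with multiplicity. -/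
noncomputable def Ntot (T : ℝ) : ℝ :=
  ∑ᶠ ρ ∈ zeroBand T, (zetaMult ρ : ℝ)

/-- Number of simple nontrivial zeros with `T < γ ≤ 2T`. -/
noncomputable def Nsimple (T : ℝ) : ℝ :=
  ∑ᶠ ρ ∈ {ρ ∈ zeroBand T | zetaMult ρ = 1}, (1 : ℝ)

/-- Number of nontrivial zeros with `T < γ ≤ 2T` on the critical line, with multiplicity. -/
noncomputable def Nline (T : ℝ) : ℝ :=
  ∑ᶠ ρ ∈ {ρ ∈ zeroBand T | ρ.re = 1/2}, (zetaMult ρ : ℝ)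

/-- Number of simple critical-line nontrivial zeros with `T < γ ≤ 2T`. -/
noncomputable def NlineSimple (T : ℝ) : ℝ :=
  ∑ᶠ ρ ∈ {ρ ∈ zeroBand T | ρ.re = 1/2 ∧ zetaMult ρ = 1}, (1 : ℝ)

theorem hd_factor_one (f : ℂ → ℂ) (hf : Differentiable ℂ f) (ρ : ℂ) (n : ℕ)
    (hn : analyticOrderAt f ρ = n) :
    ∃ G : ℂ → ℂ, Differentiable ℂ G ∧ G ρ ≠ 0 ∧ ∀ s, f s = (s - ρ) ^ n * G s := by
  obtain ⟨g, hg, hg0, hfg⟩ := (hf.analyticAt ρ).analyticOrderAt_eq_natCast.1 hn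
  classical
  refine ⟨fun s => if s = ρ then g ρ else f s / (s - ρ) ^ n, ?_, by simpa using hg0, ?_⟩
  · intro s
    by_cases hs : s = ρ
    · subst hs
      refine hg.differentiableAt.congr_of_eventuallyEq ?_
      filter_upwards [hfg] with z hz
      by_cases h : z = s
      · simp [h]
      · have : (z - s) ^ n ≠ 0 := pow_ne_zero _ (sub_ne_zero.2 h)
        simp only [h, if_false, hz, smul_eq_mul]
        field_simp
    · have h1 : DifferentiableAt ℂ (fun s => f s / (s - ρ) ^ n) s := by
        apply DifferentiableAt.div (hf s) (by fun_prop)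
        exact pow_ne_zero _ (sub_ne_zero.2 hs)
      refine h1.congr_of_eventuallyEq ?_
      filter_upwards [isOpen_ne.mem_nhds hs] with z hz
      simp [show z ≠ ρ from hz]
  · intro s
    by_cases hs : s = ρ
    · subst hs
      have := hfg.self_of_nhds
      simpa using this
    · have : (s - ρ) ^ n ≠ 0 := pow_ne_zero _ (sub_ne_zero.2 hs)
      simp only [hs, if_false]
      field_simp

theorem hd_factor_fin (f : ℂ → ℂ) (hf : Differentiable ℂ f)
    (hfin : ∀ ρ, analyticOrderAt f ρ ≠ ⊤) (Z : Finset ℂ) :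
    ∃ G : ℂ → ℂ, Differentiable ℂ G ∧ (∀ ρ ∈ Z, G ρ ≠ 0) ∧
      ∀ s, f s = (∏ ρ ∈ Z, (s - ρ) ^ (analyticOrderNatAt f ρ)) * G s := by
  classical
  induction Z using Finset.induction_on with
  | empty => exact ⟨f, hf, by simp, by simp⟩
  | insert a Z ha ih =>
    obtain ⟨G, hG, hGZ, hfG⟩ := ih
    have hP : Differentiable ℂ (fun s => ∏ ρ ∈ Z, (s - ρ) ^ (analyticOrderNatAt f ρ)) := by
      fun_prop
    have hPa : (fun s => ∏ ρ ∈ Z, (s - ρ) ^ (analyticOrderNatAt f ρ)) a ≠ 0 := by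
      refine Finset.prod_ne_zero_iff.2 fun ρ hρ => pow_ne_zero _ (sub_ne_zero.2 ?_)
      rintro rfl; exact ha hρ
    have hord : analyticOrderAt G a = analyticOrderNatAt f a := by
      have h1 : f = (fun s => ∏ ρ ∈ Z, (s - ρ) ^ (analyticOrderNatAt f ρ)) * G := by
        ext s; exact hfG s
      have h2 := analyticOrderAt_mul (hP.analyticAt a) (hG.analyticAt a)
      rw [← h1, (hP.analyticAt a).analyticOrderAt_eq_zero.2 hPa, zero_add] at h2
      rw [← h2, Nat.cast_analyticOrderNatAt (hfin a)]
    obtain ⟨G', hG', hG'a, hGG'⟩ := hd_factor_one G hG a _ hord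
    refine ⟨G', hG', ?_, ?_⟩
    · intro ρ hρ
      rcases Finset.mem_insert.1 hρ with rfl | h
      · exact hG'a
      · intro h0
        apply hGZ ρ h
        rw [hGG', h0, mul_zero]
    · intro s
      rw [Finset.prod_insert ha, hfG, hGG']
      ring

/-- logarithmic derivative increments of zero-free functions -/
theorem hd_zero_free (H : ℂ → ℂ) (hH : Differentiable ℂ H) (k B : ℝ) (hk : 0 < k) (hB : 0 < B)
    (h0 : H 0 = 1) (hne : ∀ s ∈ Metric.ball (0:ℂ) (2*k), H s ≠ 0)
    (hb : ∀ s ∈ Metric.ball (0:ℂ) (2*k), ‖H s‖ ≤ Real.exp B) (s1 s2 : ℂ)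
    (h1 : ‖s1‖ ≤ k/4) (h2 : ‖s2‖ ≤ k/4) :
    ‖logDeriv H s1 - logDeriv H s2‖ ≤ 16 * B / k^2 * ‖s1 - s2‖ := by
  have hld : DifferentiableOn ℂ (logDeriv H) (Metric.ball (0:ℂ) (2*k)) := by
    intro s hs
    have hd : DifferentiableAt ℂ (deriv H) s := (hH.analyticAt s).deriv.differentiableAt
    exact (hd.div (hH s) (hne s hs)).differentiableWithinAt
  obtain ⟨l0, hl0⟩ := hld.isExactOn_ball
  set l : ℂ → ℂ := fun s => l0 s - l0 0 with hl
  have hlder : ∀ s ∈ Metric.ball (0:ℂ) (2*k), HasDerivAt l (logDeriv H s) s := by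
    intro s hs; exact (hl0 s hs).sub_const _
  have hl00 : l 0 = 0 := by simp [hl]
  have hexp : ∀ s ∈ Metric.ball (0:ℂ) (2*k), H s = Complex.exp (l s) := by
    have hconst : ∀ s ∈ Metric.ball (0:ℂ) (2*k), HasDerivAt (fun s => H s * Complex.exp (-l s)) 0 s := by
      intro s hs
      have := (hH s).hasDerivAt.mul ((hlder s hs).neg.cexp)
      have e : deriv H s * Complex.exp ((-l) s) + H s * (Complex.exp ((-l) s) * -logDeriv H s) = 0 := by
        rw [logDeriv_apply]
        have := hne s hs
        field_simp; ring
      rw [e] at this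
      exact this
    intro s hs
    have hz : (0:ℂ) ∈ Metric.ball (0:ℂ) (2*k) := by simp; linarith
    have := Metric.isOpen_ball.is_const_of_deriv_eq_zero (convex_ball (0:ℂ) (2*k)).isPreconnected
      (f := fun s => H s * Complex.exp (-l s))
      (fun z hz => (hconst z hz).differentiableAt.differentiableWithinAt)
      (fun z hz => (hconst z hz).deriv) hs hz
    simp only [h0, hl00, neg_zero, Complex.exp_zero, mul_one] at this
    rw [Complex.exp_neg] at this
    have h3 := Complex.exp_ne_zero (l s)
    field_simp at this
    exact this
  have hlb : ∀ z, ‖z‖ ≤ k → ‖l z‖ ≤ 2 * B := by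
    intro z hz
    have := Complex.borelCaratheodory_zero (f := l) (M := B) (R := 2*k) (z := z) hB
      (fun z hz => (hlder z hz).differentiableAt.differentiableWithinAt)
      (by
        intro z hz
        have h4 := hb z hz
        rw [hexp z hz, Complex.norm_exp] at h4
        exact Real.exp_le_exp.1 h4) (by linarith) (by simp; linarith) hl00
    refine this.trans ?_
    rw [div_le_iff₀ (by linarith)]
    nlinarith [norm_nonneg z]
  have hdb : ∀ z, ‖z‖ ≤ k/2 → ‖logDeriv H z‖ ≤ 4 * B / k := by
    intro z hz
    have hsub : Metric.closedBall z (k/2) ⊆ Metric.ball (0:ℂ) (2*k) := by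
      intro w hw
      simp only [Metric.mem_closedBall, dist_eq_norm, Metric.mem_ball, sub_zero] at hw ⊢
      have := norm_le_norm_add_norm_sub z w
      rw [norm_sub_rev] at this
      linarith
    have h5 := Complex.norm_deriv_le_of_forall_mem_sphere_norm_le (f := l) (c := z) (R := k/2) (C := 2*B)
      (by linarith)
      (DifferentiableOn.diffContOnCl (fun w hw =>
        (hlder w (hsub (Metric.closure_ball_subset_closedBall hw))).differentiableAt.differentiableWithinAt))
      (by
        intro w hw
        apply hlb
        simp only [Metric.mem_sphere, dist_eq_norm] at hw
        have := norm_le_norm_add_norm_sub z w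
        rw [norm_sub_rev] at this
        linarith)
    rw [(hlder z (hsub (by simp; linarith))).deriv] at h5
    convert h5 using 1
    field_simp; ring
  have hddb : ∀ z ∈ Metric.closedBall (0:ℂ) (k/4), ‖deriv (logDeriv H) z‖ ≤ 16 * B / k^2 := by
    intro z hz
    have hz : ‖z‖ ≤ k/4 := by simpa using hz
    have hw0 : ∀ w ∈ Metric.closedBall z (k/4), ‖w‖ ≤ k/2 := by
      intro w hw
      simp only [Metric.mem_closedBall, dist_eq_norm] at hw
      have := norm_le_norm_add_norm_sub z w
      rw [norm_sub_rev] at this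
      linarith
    have h5 := Complex.norm_deriv_le_of_forall_mem_sphere_norm_le (f := logDeriv H) (c := z) (R := k/4) (C := 4 * B / k)
      (by linarith)
      (DifferentiableOn.diffContOnCl (hld.mono (by
        intro w hw
        have := hw0 w (Metric.closure_ball_subset_closedBall hw)
        simp; linarith)))
      (by
        intro w hw
        exact hdb w (hw0 w (Metric.sphere_subset_closedBall hw)))
    convert h5 using 1
    field_simp; ring
  refine (convex_closedBall (0:ℂ) (k/4)).norm_image_sub_le_of_norm_deriv_le (f := logDeriv H) ?_ hddb ?_ ?_
  · intro z hz
    have hz : ‖z‖ ≤ k/4 := by simpa using hz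
    exact (hld z (by simp; linarith)).differentiableAt (Metric.isOpen_ball.mem_nhds (by simp; linarith))
  · simpa using h2
  · simpa using h1

theorem hd_order_ne_top (f : ℂ → ℂ) (hf : Differentiable ℂ f) (h0 : f 0 = 1) (ρ : ℂ) :
    analyticOrderAt f ρ ≠ ⊤ := by
  intro h
  rw [analyticOrderAt_eq_top] at h
  have := AnalyticOnNhd.eqOn_zero_of_preconnected_of_frequently_eq_zero
    (f := f) (U := univ) (z₀ := ρ) (fun z _ => hf.analyticAt z) isPreconnected_univ (mem_univ _)
    ((h.filter_mono nhdsWithin_le_nhds).frequently) 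
  have := this (mem_univ 0)
  simp [h0] at this

theorem hd_finite (f : ℂ → ℂ) (hf : Differentiable ℂ f) (h0 : f 0 = 1) (R : ℝ) :
    {s ∈ Metric.closedBall (0:ℂ) R | f s = 0}.Finite := by
  by_contra hinf
  obtain ⟨z, hz, hacc⟩ := (Set.not_finite.1 hinf |>.exists_accPt_of_subset_isCompact
    (isCompact_closedBall (0:ℂ) R) (fun s hs => hs.1))
  have hfr : ∃ᶠ w in 𝓝[≠] z, f w = 0 := by
    have := accPt_iff_frequently_nhdsNE.1 hacc
    exact this.mono fun w hw => hw.2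
  have := AnalyticOnNhd.eqOn_zero_of_preconnected_of_frequently_eq_zero
    (f := f) (U := univ) (z₀ := z) (fun z _ => hf.analyticAt z) isPreconnected_univ (mem_univ _) hfr
  have := this (mem_univ 0)
  simp [h0] at this

/-- partial sums of the Hadamard product -/
theorem hd_main (f : ℂ → ℂ) (hf : Differentiable ℂ f) (h0 : f 0 = 1) (C : ℝ) (hC : 0 < C)
    (hgr : ∀ R : ℝ, 1 ≤ R → ∀ s, ‖s‖ ≤ R → ‖f s‖ ≤ Real.exp (C * R ^ (3/2 : ℝ)))
    (s1 s2 : ℂ) (h1 : f s1 ≠ 0) (h2 : f s2 ≠ 0) :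
    Tendsto (fun k : ℕ => ∑ ρ ∈ (hd_finite f hf h0 (2 * k)).toFinset,
      (analyticOrderNatAt f ρ : ℂ) * (1 / (s1 - ρ) - 1 / (s2 - ρ))) atTop
      (𝓝 (logDeriv f s1 - logDeriv f s2)) := by
  have key : ∀ k : ℕ, 1 ≤ k → ‖s1‖ ≤ k/4 → ‖s2‖ ≤ k/4 →
      ‖∑ ρ ∈ (hd_finite f hf h0 (2 * k)).toFinset,
      (analyticOrderNatAt f ρ : ℂ) * (1 / (s1 - ρ) - 1 / (s2 - ρ)) - (logDeriv f s1 - logDeriv f s2)‖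
      ≤ 16 * (C * (4 * k) ^ (3/2:ℝ)) / k^2 * ‖s1 - s2‖ := by
    intro k hk hs1 hs2
    have hk' : (1:ℝ) ≤ k := by exact_mod_cast hk
    set Z := (hd_finite f hf h0 (2 * k)).toFinset with hZ
    have hZm : ∀ ρ, ρ ∈ Z ↔ ‖ρ‖ ≤ 2 * k ∧ f ρ = 0 := by
      intro ρ; simp [hZ]
    have hZ0 : ∀ ρ ∈ Z, ρ ≠ 0 := by
      rintro ρ hρ rfl
      have := ((hZm _).1 hρ).2
      simp [h0] at this
    obtain ⟨G, hG, hGZ, hfG⟩ := hd_factor_fin f hf (hd_order_ne_top f hf h0) Z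
    set c : ℂ := ∏ ρ ∈ Z, (-ρ) ^ (analyticOrderNatAt f ρ) with hc
    have hc0 : c ≠ 0 := Finset.prod_ne_zero_iff.2 fun ρ hρ => pow_ne_zero _ (neg_ne_zero.2 (hZ0 ρ hρ))
    set H : ℂ → ℂ := fun s => c * G s with hHdef
    have hHd : Differentiable ℂ H := hG.const_mul c
    have hH0 : H 0 = 1 := by
      have := hfG 0
      rw [h0] at this
      simp only [zero_sub] at this
      exact this.symm
    have hfH : ∀ s, f s = (∏ ρ ∈ Z, (1 - s/ρ) ^ (analyticOrderNatAt f ρ)) * H s := by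
      intro s
      rw [hfG s, hHdef]
      simp only
      rw [← mul_assoc, hc, ← Finset.prod_mul_distrib]
      congr 1
      refine Finset.prod_congr rfl fun ρ hρ => ?_
      rw [← mul_pow]
      congr 1
      have := hZ0 ρ hρ
      field_simp
      ring
    have hHne : ∀ s ∈ Metric.ball (0:ℂ) (2*k), H s ≠ 0 := by
      intro s hs h
      have hs' : ‖s‖ < 2 * k := by simpa using hs
      have hfs : f s = 0 := by rw [hfH, h, mul_zero]
      have := hGZ s ((hZm s).2 ⟨hs'.le, hfs⟩)
      exact mul_ne_zero hc0 this h
    have hsph : ∀ s, ‖s‖ = 4 * k → ‖H s‖ ≤ Real.exp (C * (4 * k) ^ (3/2:ℝ)) := by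
      intro s hs
      have hfs := hgr (4 * k) (by linarith) s hs.le
      refine le_trans ?_ hfs
      rw [hfH s, norm_mul (∏ ρ ∈ Z, (1 - s / ρ) ^ analyticOrderNatAt f ρ) (H s)]
      refine le_mul_of_one_le_left (norm_nonneg (H s)) ?_
      rw [norm_prod]
      refine Finset.prod_induction _ (fun x : ℝ => 1 ≤ x) (fun a b ha hb => one_le_mul_of_one_le_of_one_le ha hb)
        le_rfl fun ρ hρ => ?_
      rw [norm_pow]
      refine one_le_pow₀ ?_
      have hρ0 := hZ0 ρ hρ
      have hρ2 := ((hZm ρ).1 hρ).1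
      have h3 : 2 ≤ ‖s/ρ‖ := by
        rw [norm_div, hs, le_div_iff₀ (show (0:ℝ) < ‖ρ‖ from norm_pos_iff.2 hρ0)]
        linarith
      have := norm_sub_norm_le (s/ρ) (1:ℂ)
      rw [norm_one, norm_sub_rev] at this
      linarith
    have hHb : ∀ s ∈ Metric.ball (0:ℂ) (2*k), ‖H s‖ ≤ Real.exp (C * (4 * k) ^ (3/2:ℝ)) := by
      intro s hs
      have hs' : ‖s‖ < 2 * k := by simpa using hs
      refine Complex.norm_le_of_forall_mem_frontier_norm_le (U := Metric.ball (0:ℂ) (4*k))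
        Metric.isBounded_ball hHd.diffContOnCl ?_ (subset_closure (by simp; linarith))
      intro z hz
      rw [frontier_ball _ (by positivity)] at hz
      exact hsph z (by simpa using hz)
    have hfin := hd_zero_free H hHd k (C * (4 * k) ^ (3/2:ℝ)) (by linarith) (by positivity) hH0 hHne hHb s1 s2 hs1 hs2
    have hlog : ∀ s, f s ≠ 0 → ‖s‖ ≤ k/4 →
        logDeriv f s = (∑ ρ ∈ Z, (analyticOrderNatAt f ρ : ℂ) * (1 / (s - ρ))) + logDeriv H s := by
      intro s hs hsk
      have hsZ : ∀ ρ ∈ Z, s - ρ ≠ 0 := by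
        intro ρ hρ h
        rw [sub_eq_zero] at h
        subst h
        exact hs ((hZm s).1 hρ).2
      have he : f = fun s => (∏ ρ ∈ Z, (s - ρ) ^ (analyticOrderNatAt f ρ)) * G s := by
        ext s; exact hfG s
      have hGs : G s ≠ 0 := by
        intro h; apply hs; rw [hfG, h, mul_zero]
      conv_lhs => rw [he]
      rw [logDeriv_mul (f := fun s => ∏ ρ ∈ Z, (s - ρ) ^ (analyticOrderNatAt f ρ)) (g := G) s
        (Finset.prod_ne_zero_iff.2 fun ρ hρ => pow_ne_zero _ (hsZ ρ hρ)) hGs (by fun_prop) (hG s)]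
      congr 1
      · rw [logDeriv_prod]
        · refine Finset.sum_congr rfl fun ρ hρ => ?_
          rw [logDeriv_fun_pow (by fun_prop)]
          congr 1
          rw [logDeriv_apply]
          simp
        · intro ρ hρ; exact pow_ne_zero _ (hsZ ρ hρ)
        · intro ρ hρ; fun_prop
      · rw [hHdef, logDeriv_const_mul _ _ hc0]
    rw [hlog s1 h1 hs1, hlog s2 h2 hs2]
    rw [norm_sub_rev]
    have e : ∀ a b c d : ℂ, a + c - (b + d) - (a - b) = c - d := by intros; ring
    simp only [mul_sub, Finset.sum_sub_distrib] at *
    rw [e]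
    exact hfin
  rw [tendsto_iff_norm_sub_tendsto_zero]
  have hlim : Tendsto (fun k : ℕ => 128 * C * ‖s1 - s2‖ * ((k:ℝ) ^ (-(1/2:ℝ)))) atTop (𝓝 0) := by
    have := (tendsto_rpow_neg_atTop (show (0:ℝ) < 1/2 by norm_num)).comp (tendsto_natCast_atTop_atTop (R := ℝ))
    simpa using this.const_mul (128 * C * ‖s1 - s2‖)
  refine squeeze_zero' (Eventually.of_forall fun _ => norm_nonneg _) ?_ hlim
  have e1 : ∀ᶠ k : ℕ in atTop, ‖s1‖ * 4 ≤ k := tendsto_natCast_atTop_atTop.eventually_ge_atTop _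
  have e2 : ∀ᶠ k : ℕ in atTop, ‖s2‖ * 4 ≤ k := tendsto_natCast_atTop_atTop.eventually_ge_atTop _
  filter_upwards [e1, e2, eventually_ge_atTop 1] with k hk1 hk2 hk
  refine (key k hk (by linarith) (by linarith)).trans (le_of_eq ?_)
  have hkp : (0:ℝ) < k := by exact_mod_cast hk
  rw [Real.mul_rpow (by norm_num) hkp.le]
  have h4 : (4:ℝ) ^ (3/2:ℝ) = 8 := by
    rw [show (4:ℝ) = 2 ^ (2:ℝ) by norm_num, ← Real.rpow_mul (by norm_num)]
    norm_num
  have h5 : (k:ℝ) ^ (3/2:ℝ) = k ^ 2 * (k:ℝ) ^ (-(1/2:ℝ)) := by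
    rw [← Real.rpow_natCast, ← Real.rpow_add hkp]; norm_num
  rw [h4, h5]
  field_simp
  ring

noncomputable def xiF (s : ℂ) : ℂ := s * (s - 1) * completedRiemannZeta₀ s + 1

theorem xiF_diff : Differentiable ℂ xiF := by
  have := differentiable_completedZeta₀
  unfold xiF
  fun_prop

theorem xiF_zero : xiF 0 = 1 := by simp [xiF]

theorem xiF_symm (s : ℂ) : xiF (1 - s) = xiF s := by
  unfold xiF
  rw [completedRiemannZeta₀_one_sub]; ring

theorem xiF_eq (s : ℂ) (h0 : s ≠ 0) (h1 : s ≠ 1) : xiF s = s * (s - 1) * completedRiemannZeta s := by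
  unfold xiF
  rw [completedRiemannZeta_eq]
  have : s - 1 ≠ 0 := sub_ne_zero.2 h1
  have : 1 - s ≠ 0 := sub_ne_zero.2 h1.symm
  field_simp
  ring

theorem xiF_eq_zeta (s : ℂ) (h0 : 0 < s.re) (h1 : s ≠ 1) :
    xiF s = s * (s - 1) * (Complex.Gammaℝ s * riemannZeta s) := by
  have hs : s ≠ 0 := by rintro rfl; simp at h0
  rw [xiF_eq s hs h1, riemannZeta_def_of_ne_zero hs]
  have := Complex.Gammaℝ_ne_zero_of_re_pos h0
  field_simp

theorem L0_repr (s : ℂ) : completedRiemannZeta₀ s =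
    (∫ t in Ioi (0:ℝ), (t:ℂ) ^ (s/2 - 1) • (HurwitzZeta.hurwitzEvenFEPair 0).f_modif t) / 2 := rfl

theorem fmod_conv (s : ℂ) : MellinConvergent (HurwitzZeta.hurwitzEvenFEPair 0).f_modif s :=
  ((HurwitzZeta.hurwitzEvenFEPair 0).isStrongFEPair_toStrongFEPair.hasMellin s).1

theorem fmod_conj (x : ℝ) : (starRingEnd ℂ) ((HurwitzZeta.hurwitzEvenFEPair 0).f_modif x) =
    (HurwitzZeta.hurwitzEvenFEPair 0).f_modif x := by
  simp only [WeakFEPair.f_modif, HurwitzZeta.hurwitzEvenFEPair, Pi.add_apply, Set.indicator]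
  split_ifs <;> simp [Function.comp]

theorem L0_conj (s : ℂ) : completedRiemannZeta₀ ((starRingEnd ℂ) s) =
    (starRingEnd ℂ) (completedRiemannZeta₀ s) := by
  rw [L0_repr, L0_repr, map_div₀, ← integral_conj]
  congr 1
  · refine setIntegral_congr_fun measurableSet_Ioi fun t ht => ?_
    simp only [smul_eq_mul, map_mul, fmod_conj]
    congr 1
    have h : (t:ℂ).arg ≠ Real.pi := by
      rw [Complex.arg_ofReal_of_nonneg (le_of_lt ht)]; exact Real.pi_pos.ne
    have := Complex.cpow_conj (t:ℂ) (s/2-1) h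
    rw [Complex.conj_ofReal] at this
    have e2 : (starRingEnd ℂ) 2 = 2 := Complex.conj_ofNat 2
    rw [← this]; simp [e2]
  · exact (Complex.conj_ofNat 2).symm

theorem xiF_conj (s : ℂ) : xiF ((starRingEnd ℂ) s) = (starRingEnd ℂ) (xiF s) := by
  unfold xiF
  rw [L0_conj]; simp

theorem L0_strip : ∃ M : ℝ, ∀ s : ℂ, 1/2 ≤ s.re → s.re ≤ 2 → ‖completedRiemannZeta₀ s‖ ≤ M := by
  set f := (HurwitzZeta.hurwitzEvenFEPair 0).f_modif
  refine ⟨(∫ t in Ioi (0:ℝ), (‖(t:ℂ) ^ ((1/4:ℂ) - 1) • f t‖ + ‖(t:ℂ) ^ ((1:ℂ) - 1) • f t‖)) / 2, fun s h1 h2 => ?_⟩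
  rw [L0_repr, norm_div]
  have : ‖(2:ℂ)‖ = 2 := by simp
  rw [this]
  refine div_le_div_of_nonneg_right ?_ (by norm_num)
  refine norm_integral_le_of_norm_le ?_ ?_
  · exact (fmod_conv (1/4)).norm.add (fmod_conv 1).norm
  · refine (ae_restrict_mem measurableSet_Ioi).mono fun t ht => ?_
    have ht' : (0:ℝ) < t := ht
    change ‖(t:ℂ) ^ (s/2 - 1) • f t‖ ≤ _
    rw [norm_smul, norm_smul, norm_smul, ← add_mul]
    refine mul_le_mul_of_nonneg_right ?_ (norm_nonneg _)
    rw [Complex.norm_cpow_eq_rpow_re_of_pos ht', Complex.norm_cpow_eq_rpow_re_of_pos ht',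
      Complex.norm_cpow_eq_rpow_re_of_pos ht']
    have e1 : ((1/4:ℂ) - 1).re = -3/4 := by norm_num
    have e2 : (s/2 - 1).re = s.re/2 - 1 := by simp
    have e3 : ((1:ℂ) - 1).re = 0 := by simp
    rw [e1, e2, e3]
    rcases le_total 1 t with h | h
    · have := Real.rpow_le_rpow_of_exponent_le h (show s.re/2 - 1 ≤ 0 by linarith)
      have := Real.rpow_nonneg ht'.le (-3/4)
      linarith
    · have := Real.rpow_le_rpow_of_exponent_ge ht' h (show -3/4 ≤ s.re/2 - 1 by linarith)
      exact this.trans (le_add_of_nonneg_right (Real.rpow_nonneg ht'.le _))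

theorem zeta_bd : ∃ M : ℝ, 0 < M ∧ ∀ s : ℂ, 2 ≤ s.re → ‖riemannZeta s‖ ≤ M := by
  have hs : Summable (fun n : ℕ => 1 / ((n:ℝ) + 1)^2) := by
    have := (summable_nat_add_iff 1).2 (Real.summable_one_div_nat_pow.2 (show 1 < 2 by norm_num))
    simpa using this
  refine ⟨∑' n : ℕ, 1 / ((n:ℝ) + 1)^2, hs.tsum_pos (fun n => by positivity) 0 (by norm_num), fun s h => ?_⟩
  rw [zeta_eq_tsum_one_div_nat_add_one_cpow (by linarith)]
  refine tsum_of_norm_bounded hs.hasSum fun n => ?_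
  rw [norm_div, norm_one]
  have e : ((n:ℂ) + 1) = (((n:ℝ) + 1 : ℝ) : ℂ) := by push_cast; rfl
  rw [e, Complex.norm_cpow_eq_rpow_re_of_pos (by positivity)]
  refine one_div_le_one_div_of_le (by positivity) ?_
  rw [← Real.rpow_natCast]
  refine Real.rpow_le_rpow_of_exponent_le ?_ (by exact_mod_cast h)
  have : (0:ℝ) ≤ n := by positivity
  linarith

theorem norm_Gamma_le' (s : ℂ) (h : 0 < s.re) : ‖Complex.Gamma s‖ ≤ Real.Gamma s.re := by
  rw [Complex.Gamma_eq_integral h, Real.Gamma_eq_integral h]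
  refine (norm_integral_le_integral_norm _).trans (le_of_eq ?_)
  refine setIntegral_congr_fun measurableSet_Ioi fun t ht => ?_
  simp only [norm_mul]
  rw [Complex.norm_cpow_eq_rpow_re_of_pos ht]
  have e : ‖Complex.exp (-(t:ℂ))‖ = Real.exp (-t) := by
    rw [Complex.norm_exp]; simp
  simp [e]

theorem Gamma_bd (x R : ℝ) (hR : 1 ≤ R) (hx : 1 ≤ x) (hxR : x ≤ R) :
    Real.Gamma x ≤ Real.exp (20 * R ^ (3/2:ℝ)) := by
  have h1 : Real.Gamma x ≤ Real.Gamma (x+1) := by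
    rw [Real.Gamma_add_one (by linarith)]
    exact le_mul_of_one_le_left (Real.Gamma_pos_of_pos (by linarith)).le hx
  set n := ⌈R⌉₊ with hn
  have hnR : R ≤ n := Nat.le_ceil R
  have hn2 : (n:ℝ) ≤ 2 * R := by
    have := Nat.ceil_lt_add_one (show 0 ≤ R by linarith)
    linarith
  have h2 : Real.Gamma (x+1) ≤ Real.Gamma (n + 1) :=
    Real.Gamma_strictMonoOn_Ici.monotoneOn (by simp; linarith) (by simp; linarith) (by linarith)
  rw [Real.Gamma_nat_eq_factorial] at h2
  have h3 : (n.factorial:ℝ) ≤ (n:ℝ)^n := by exact_mod_cast Nat.factorial_le_pow n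
  have hnp : (0:ℝ) < n := by linarith
  have h4 : (n:ℝ)^n = Real.exp (n * Real.log n) := by
    rw [mul_comm, Real.exp_mul, Real.exp_log hnp, Real.rpow_natCast]
  have h5 : Real.log n ≤ 2 * (n:ℝ)^(1/2:ℝ) := by
    have := Real.log_le_rpow_div hnp.le (show (0:ℝ) < 1/2 by norm_num)
    linarith
  have h6 : (n:ℝ)^(1/2:ℝ) ≤ 2 * R^(1/2:ℝ) := by
    calc (n:ℝ)^(1/2:ℝ) ≤ (4*R)^(1/2:ℝ) := Real.rpow_le_rpow hnp.le (by linarith) (by norm_num)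
      _ = 2 * R^(1/2:ℝ) := by
        rw [Real.mul_rpow (by norm_num) (by linarith)]
        congr 1
        rw [show (4:ℝ) = 2 ^ (2:ℝ) by norm_num, ← Real.rpow_mul (by norm_num)]
        norm_num
  have h7 : R^(3/2:ℝ) = R * R^(1/2:ℝ) := by
    nth_rewrite 2 [← Real.rpow_one R]
    rw [← Real.rpow_add (by linarith)]; norm_num
  have hRp := Real.rpow_nonneg (show 0 ≤ R by linarith) (1/2:ℝ)
  refine h1.trans (h2.trans (h3.trans ?_))
  rw [h4]
  refine Real.exp_le_exp.2 ?_
  rw [h7]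
  calc (n:ℝ) * Real.log n ≤ (2 * R) * (2 * (2 * R^(1/2:ℝ))) := by
        refine mul_le_mul hn2 (by linarith) (Real.log_nonneg (by linarith)) (by linarith)
    _ ≤ _ := by nlinarith

theorem xiF_growth : ∃ C : ℝ, 0 < C ∧ ∀ R : ℝ, 1 ≤ R → ∀ s, ‖s‖ ≤ R →
    ‖xiF s‖ ≤ Real.exp (C * R ^ (3/2 : ℝ)) := by
  obtain ⟨M1, hM1⟩ := L0_strip
  obtain ⟨M2, hM2p, hM2⟩ := zeta_bd
  have hM1p : 0 ≤ M1 := (norm_nonneg _).trans (hM1 1 (by norm_num) (by norm_num))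
  -- right half plane bound with radius
  have hright : ∀ R : ℝ, 1 ≤ R → ∀ s : ℂ, ‖s‖ ≤ R → 1/2 ≤ s.re →
      ‖xiF s‖ ≤ Real.exp ((22 + M1 + M2) * R ^ (3/2 : ℝ)) := by
    intro R hR s hs hre
    have hR32 : R ≤ R ^ (3/2:ℝ) := by
      nth_rewrite 1 [← Real.rpow_one R]
      exact Real.rpow_le_rpow_of_exponent_le hR (by norm_num)
    set E := R ^ (3/2:ℝ)
    have hE1 : 1 ≤ E := hR.trans hR32
    have hs1 : ‖s * (s-1)‖ ≤ 2 * R^2 := by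
      rw [norm_mul]
      have := norm_sub_le s 1
      rw [norm_one] at this
      nlinarith [norm_nonneg s, norm_nonneg (s-1)]
    have hRe : R ≤ Real.exp R - 1 := by linarith [Real.add_one_le_exp R]
    have hR2 : 2 * R ^ 2 + 1 ≤ Real.exp (2 * R) := by
      have hq := Real.quadratic_le_exp_of_nonneg (show 0 ≤ 2 * R by linarith)
      nlinarith
    rcases le_total s.re 2 with h2 | h2
    · have hL := hM1 s hre h2
      have : ‖xiF s‖ ≤ 2 * R^2 * M1 + 1 := by
        unfold xiF
        refine (norm_add_le _ _).trans ?_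
        rw [norm_one, norm_mul]
        have := mul_le_mul hs1 hL (norm_nonneg _) (by positivity)
        linarith
      refine this.trans ?_
      have hM : M1 + 1 ≤ Real.exp M1 := Real.add_one_le_exp M1
      calc 2 * R^2 * M1 + 1 ≤ (2 * R^2 + 1) * (M1 + 1) := by nlinarith
        _ ≤ Real.exp (2 * R) * Real.exp M1 := by gcongr
        _ = Real.exp (2 * R + M1) := (Real.exp_add _ _).symm
        _ ≤ _ := by
          refine Real.exp_le_exp.2 ?_
          nlinarith
    · have hs1' : s ≠ 1 := by rintro rfl; norm_num at h2
      rw [xiF_eq_zeta s (by linarith) hs1', norm_mul, norm_mul (Complex.Gammaℝ s)]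
      have hz := hM2 s h2
      have hre2 : s.re ≤ R := (Complex.re_le_norm s).trans hs
      have hG : ‖Complex.Gammaℝ s‖ ≤ Real.exp (20 * E) := by
        rw [Complex.Gammaℝ_def, norm_mul]
        have e1 : ‖(Real.pi:ℂ) ^ (-s/2)‖ ≤ 1 := by
          rw [Complex.norm_cpow_eq_rpow_re_of_pos Real.pi_pos]
          refine Real.rpow_le_one_of_one_le_of_nonpos (by linarith [Real.pi_gt_three]) ?_
          simp; linarith
        have e0 : (s/2).re = s.re/2 := by simp
        have e2 : ‖Complex.Gamma (s/2)‖ ≤ Real.exp (20 * E) := by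
          refine (norm_Gamma_le' (s/2) (by rw [e0]; linarith)).trans ?_
          exact Gamma_bd _ R hR (by rw [e0]; linarith) (by rw [e0]; linarith)
        calc _ ≤ 1 * Real.exp (20 * E) := mul_le_mul e1 e2 (norm_nonneg _) (by norm_num)
          _ = _ := one_mul _
      have hM : M2 ≤ Real.exp M2 := by linarith [Real.add_one_le_exp M2]
      calc _ ≤ Real.exp (2 * R) * (Real.exp (20 * E) * Real.exp M2) := by
            refine mul_le_mul (by linarith) ?_ (by positivity) (by positivity)
            exact mul_le_mul hG (hz.trans hM) (norm_nonneg _) (by positivity)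
        _ = Real.exp (2 * R + (20 * E + M2)) := by rw [Real.exp_add, Real.exp_add]
        _ ≤ _ := by
          refine Real.exp_le_exp.2 ?_
          nlinarith
  refine ⟨8 * (22 + M1 + M2), by positivity, fun R hR s hs => ?_⟩
  have hexp : (22 + M1 + M2) * (2 * R) ^ (3/2 : ℝ) ≤ 8 * (22 + M1 + M2) * R ^ (3/2 : ℝ) := by
    rw [Real.mul_rpow (by norm_num) (by linarith)]
    have : (2:ℝ) ^ (3/2:ℝ) ≤ 8 := by
      calc (2:ℝ) ^ (3/2:ℝ) ≤ 2 ^ (3:ℝ) := Real.rpow_le_rpow_of_exponent_le (by norm_num) (by norm_num)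
        _ = 8 := by norm_num
    have h0 : 0 ≤ R ^ (3/2 : ℝ) := Real.rpow_nonneg (by linarith) _
    calc _ ≤ (22 + M1 + M2) * (8 * R ^ (3/2 : ℝ)) := by gcongr
      _ = _ := by ring
  refine le_trans ?_ (Real.exp_le_exp.2 hexp)
  rcases le_total (1/2) s.re with h | h
  · exact hright (2*R) (by linarith) s (by linarith) h
  · rw [← xiF_symm]
    refine hright (2*R) (by linarith) (1 - s) ?_ (by simp; linarith)
    have := norm_sub_le 1 s
    rw [norm_one] at this
    linarith

noncomputable def mz (ρ : ℂ) : ℕ := analyticOrderNatAt xiF ρ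

theorem mz_eq_zero_iff (ρ : ℂ) : mz ρ = 0 ↔ xiF ρ ≠ 0 := by
  have h := Nat.cast_analyticOrderNatAt (hd_order_ne_top xiF xiF_diff xiF_zero ρ)
  rw [← (xiF_diff.analyticAt ρ).analyticOrderAt_eq_zero, ← h]
  simp [mz]

theorem xiF_one : xiF 1 = 1 := by simp [xiF]

theorem xiF_ne_of_one_le (s : ℂ) (h : 1 ≤ s.re) : xiF s ≠ 0 := by
  by_cases h1 : s = 1
  · simp [h1, xiF_one]
  · rw [xiF_eq_zeta s (by linarith) h1]
    have hs : s ≠ 0 := by rintro rfl; norm_num at h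
    exact mul_ne_zero (mul_ne_zero hs (sub_ne_zero.2 h1))
      (mul_ne_zero (Complex.Gammaℝ_ne_zero_of_re_pos (by linarith)) (riemannZeta_ne_zero_of_one_le_re h))

theorem xiF_zero_iff (s : ℂ) : xiF s = 0 ↔ IsNontrivialZero s := by
  constructor
  · intro h
    have h1 : s.re < 1 := by
      by_contra h'
      exact xiF_ne_of_one_le s (not_lt.1 h') h
    have h0 : 0 < s.re := by
      by_contra h'
      rw [← xiF_symm] at h
      exact xiF_ne_of_one_le (1 - s) (by simp; linarith) h
    refine ⟨?_, h0, h1⟩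
    have hs1 : s ≠ 1 := by rintro rfl; norm_num at h1
    have hs : s ≠ 0 := by rintro rfl; norm_num at h0
    rw [xiF_eq_zeta s h0 hs1] at h
    have := Complex.Gammaℝ_ne_zero_of_re_pos h0
    have := sub_ne_zero.2 hs1
    simp_all
  · rintro ⟨h, h0, h1⟩
    have hs1 : s ≠ 1 := by rintro rfl; norm_num at h1
    rw [xiF_eq_zeta s h0 hs1, h]; simp

theorem mz_strip (ρ : ℂ) (h : mz ρ ≠ 0) : 0 < ρ.re ∧ ρ.re < 1 := by
  have : xiF ρ = 0 := by by_contra h'; exact h ((mz_eq_zero_iff ρ).2 h')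
  exact ((xiF_zero_iff ρ).1 this).2

theorem mz_pos_iff (ρ : ℂ) : mz ρ ≠ 0 ↔ IsNontrivialZero ρ := by
  rw [← xiF_zero_iff, ne_eq, mz_eq_zero_iff, not_not]

theorem mz_order (ρ : ℂ) : analyticOrderAt xiF ρ = mz ρ :=
  (Nat.cast_analyticOrderNatAt (hd_order_ne_top xiF xiF_diff xiF_zero ρ)).symm

theorem mz_of_factor (ρ : ℂ) (n : ℕ) (G : ℂ → ℂ) (hG : Differentiable ℂ G) (hG0 : G ρ ≠ 0)
    (h : ∀ s, xiF s = (s - ρ)^n * G s) : mz ρ = n := by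
  have : analyticOrderAt xiF ρ = n := by
    rw [(xiF_diff.analyticAt ρ).analyticOrderAt_eq_natCast]
    exact ⟨G, hG.analyticAt ρ, hG0, Eventually.of_forall fun s => by rw [h s, smul_eq_mul]⟩
  rw [mz_order] at this
  exact_mod_cast this

theorem mz_symm (ρ : ℂ) : mz (1 - ρ) = mz ρ := by
  obtain ⟨G, hG, hG0, h⟩ := hd_factor_one xiF xiF_diff ρ _ (mz_order ρ)
  refine mz_of_factor (1 - ρ) (mz ρ) (fun s => (-1) ^ (mz ρ) * G (1 - s)) ?_ ?_ ?_
  · exact (hG.comp (by fun_prop : Differentiable ℂ fun s : ℂ => 1 - s)).const_mul _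
  · simpa using hG0
  · intro s
    rw [← xiF_symm, h, ← mul_assoc, ← mul_pow]
    congr 2
    ring

theorem mz_conj (ρ : ℂ) : mz ((starRingEnd ℂ) ρ) = mz ρ := by
  obtain ⟨G, hG, hG0, h⟩ := hd_factor_one xiF xiF_diff ρ _ (mz_order ρ)
  refine mz_of_factor ((starRingEnd ℂ) ρ) (mz ρ) (fun s => (starRingEnd ℂ) (G ((starRingEnd ℂ) s))) ?_ ?_ ?_
  · intro s
    have := (hG ((starRingEnd ℂ) s)).conj_conj
    simpa [Function.comp_def] using this
  · simpa using hG0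
  · intro s
    have : xiF s = (starRingEnd ℂ) (xiF ((starRingEnd ℂ) s)) := by rw [xiF_conj]; simp
    rw [this, h]
    simp

theorem zetaMult_eq (ρ : ℂ) (hρ : IsNontrivialZero ρ) : zetaMult ρ = mz ρ := by
  obtain ⟨hz, h0, h1⟩ := hρ
  have hs1 : ρ ≠ 1 := by rintro rfl; norm_num at h1
  have hs0 : ρ ≠ 0 := by rintro rfl; norm_num at h0
  have hU : IsOpen {s : ℂ | 0 < s.re ∧ s ≠ 1} :=
    (isOpen_lt continuous_const Complex.continuous_re).inter isOpen_ne
  have hzan : AnalyticAt ℂ riemannZeta ρ := by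
    refine DifferentiableOn.analyticAt (s := {s : ℂ | 0 < s.re ∧ s ≠ 1}) ?_ (hU.mem_nhds ⟨h0, hs1⟩)
    intro s hs
    exact (differentiableAt_riemannZeta hs.2).differentiableWithinAt
  have hgan : AnalyticAt ℂ (fun s => s * (s - 1) * Complex.Gammaℝ s) ρ := by
    refine DifferentiableOn.analyticAt (s := {s : ℂ | 0 < s.re ∧ s ≠ 1}) ?_ (hU.mem_nhds ⟨h0, hs1⟩)
    intro s hs
    have : DifferentiableAt ℂ Complex.Gammaℝ s := by
      have h := Complex.differentiable_Gammaℝ_inv s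
      have h2 := h.inv (inv_ne_zero (Complex.Gammaℝ_ne_zero_of_re_pos hs.1))
      have e : (fun s => (Complex.Gammaℝ s)⁻¹)⁻¹ = Complex.Gammaℝ := by ext; simp
      rwa [e] at h2
    exact (by fun_prop : DifferentiableAt ℂ (fun s => s * (s - 1) * Complex.Gammaℝ s) s).differentiableWithinAt
  have hord : analyticOrderAt riemannZeta ρ = mz ρ := by
    rw [← mz_order]
    have e : xiF =ᶠ[𝓝 ρ] (fun s => s * (s - 1) * Complex.Gammaℝ s) * riemannZeta := by
      filter_upwards [hU.mem_nhds ⟨h0, hs1⟩] with s hs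
      rw [xiF_eq_zeta s hs.1 hs.2]
      simp only [Pi.mul_apply]; ring
    rw [analyticOrderAt_congr e, analyticOrderAt_mul hgan hzan, hgan.analyticOrderAt_eq_zero.2, zero_add]
    exact mul_ne_zero (mul_ne_zero hs0 (sub_ne_zero.2 hs1)) (Complex.Gammaℝ_ne_zero_of_re_pos h0)
  have hlow : ∀ i < mz ρ, iteratedDeriv i riemannZeta ρ = 0 :=
    (natCast_le_analyticOrderAt_iff_iteratedDeriv_eq_zero hzan).1 hord.ge
  have hne : iteratedDeriv (mz ρ) riemannZeta ρ ≠ 0 := by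
    intro h
    have : ((mz ρ + 1 : ℕ) : ℕ∞) ≤ analyticOrderAt riemannZeta ρ := by
      rw [natCast_le_analyticOrderAt_iff_iteratedDeriv_eq_zero hzan]
      intro i hi
      rcases Nat.lt_succ_iff_lt_or_eq.1 hi with h' | h'
      · exact hlow i h'
      · rw [h']; exact h
    rw [hord] at this
    have : mz ρ + 1 ≤ mz ρ := by exact_mod_cast this
    omega
  unfold zetaMult
  apply le_antisymm
  · exact Nat.sInf_le hne
  · refine le_csInf ⟨_, hne⟩ fun n hn => ?_
    by_contra h
    exact hn (hlow n (not_le.1 h))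

theorem hasSum_exhaust (f : ℂ → ℝ) (hf : ∀ ρ, 0 ≤ f ρ) (Z : ℕ → Finset ℂ) (hZ : Monotone Z)
    (hex : ∀ ρ, f ρ ≠ 0 → ∃ k, ρ ∈ Z k) (a : ℝ)
    (h : Tendsto (fun k => ∑ ρ ∈ Z k, f ρ) atTop (𝓝 a)) : HasSum f a := by
  classical
  have hmono : Monotone (fun k => ∑ ρ ∈ Z k, f ρ) := fun i j hij =>
    Finset.sum_le_sum_of_subset_of_nonneg (hZ hij) fun ρ _ _ => hf ρ
  refine hasSum_of_isLUB_of_nonneg a hf ⟨?_, ?_⟩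
  · rintro _ ⟨F, rfl⟩
    have : ∃ k, ∀ ρ ∈ F, f ρ ≠ 0 → ρ ∈ Z k := by
      choose! k hk using hex
      refine ⟨F.sup k, fun ρ hρ h0 => hZ (Finset.le_sup hρ) (hk ρ h0)⟩
    obtain ⟨k, hk⟩ := this
    refine le_trans ?_ (hmono.ge_of_tendsto h k)
    calc ∑ ρ ∈ F, f ρ = ∑ ρ ∈ F.filter (fun ρ => f ρ ≠ 0), f ρ := (Finset.sum_filter_ne_zero F).symm
      _ ≤ _ := Finset.sum_le_sum_of_subset_of_nonneg (fun ρ hρ => by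
          rw [Finset.mem_filter] at hρ; exact hk ρ hρ.1 hρ.2) fun ρ _ _ => hf ρ
  · intro b hb
    exact le_of_tendsto' h fun k => hb ⟨Z k, rfl⟩

/-- Poisson kernel -/
noncomputable def pk (b y : ℝ) : ℝ := b / (b^2 + y^2)

theorem pk_nonneg (b y : ℝ) (hb : 0 ≤ b) : 0 ≤ pk b y := by unfold pk; positivity

theorem ldxi_left (t : ℝ) : logDeriv xiF (-1 + t * Complex.I) =
    -(starRingEnd ℂ) (logDeriv xiF (2 + t * Complex.I)) := by
  have h1 : ∀ s, logDeriv xiF (1 - s) = - logDeriv xiF s := by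
    intro s
    have hd : HasDerivAt xiF (-deriv xiF (1 - s)) s := by
      have := HasDerivAt.comp_const_sub 1 s (xiF_diff (1 - s)).hasDerivAt
      simp only [xiF_symm] at this
      exact this
    rw [logDeriv_apply, logDeriv_apply, hd.deriv, xiF_symm]
    ring
  have h2 : ∀ s, logDeriv xiF ((starRingEnd ℂ) s) = (starRingEnd ℂ) (logDeriv xiF s) := by
    intro s
    have hd := (xiF_diff s).hasDerivAt.conj_conj
    have e : (⇑(starRingEnd ℂ) ∘ xiF ∘ ⇑(starRingEnd ℂ)) = xiF := by
      ext s; simp [xiF_conj]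
    rw [e] at hd
    rw [logDeriv_apply, logDeriv_apply, hd.deriv, xiF_conj, map_div₀]
  rw [← h2, ← h1]
  congr 1
  have : (starRingEnd ℂ) 2 = 2 := Complex.conj_ofNat 2
  simp [this]
  ring

theorem zero_sum (t : ℝ) : HasSum (fun ρ : ℂ => (mz ρ : ℝ) * (pk (2 - ρ.re) (ρ.im - t) + pk (1 + ρ.re) (ρ.im - t)))
    (2 * (logDeriv xiF (2 + t * Complex.I)).re) := by
  obtain ⟨C, hC, hgr⟩ := xiF_growth
  have hne1 : xiF (2 + t * Complex.I) ≠ 0 := xiF_ne_of_one_le _ (by simp)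
  have hne2 : xiF (-1 + t * Complex.I) ≠ 0 := by
    rw [← xiF_symm]; exact xiF_ne_of_one_le _ (by simp)
  have hT := hd_main xiF xiF_diff xiF_zero C hC hgr _ _ hne1 hne2
  refine hasSum_exhaust _ ?_ (fun k => (hd_finite xiF xiF_diff xiF_zero (2 * k)).toFinset) ?_ ?_ _ ?_
  · intro ρ
    by_cases h : mz ρ = 0
    · simp [h]
    · have := mz_strip ρ h
      exact mul_nonneg (by positivity) (add_nonneg (pk_nonneg _ _ (by linarith)) (pk_nonneg _ _ (by linarith)))
  · intro i j hij ρ hρ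
    have : (i:ℝ) ≤ j := by exact_mod_cast hij
    simp only [Finite.mem_toFinset, Metric.mem_closedBall, dist_zero_right, mem_ofPred_eq] at hρ ⊢
    exact ⟨by linarith [hρ.1], hρ.2⟩
  · intro ρ h
    have hm : mz ρ ≠ 0 := by intro h'; simp [h'] at h
    obtain ⟨k, hk⟩ := exists_nat_ge ‖ρ‖
    refine ⟨k, ?_⟩
    simp only [Finite.mem_toFinset, Metric.mem_closedBall, dist_zero_right, mem_ofPred_eq]
    refine ⟨by linarith [norm_nonneg ρ], (xiF_zero_iff ρ).2 ((mz_pos_iff ρ).1 hm)⟩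
  · rw [ldxi_left] at hT
    have hT' := (Complex.continuous_re.tendsto _).comp hT
    have e : (logDeriv xiF (2 + ↑t * Complex.I) - -(starRingEnd ℂ) (logDeriv xiF (2 + ↑t * Complex.I))).re
        = 2 * (logDeriv xiF (2 + t * Complex.I)).re := by
      simp; ring
    rw [e] at hT'
    refine hT'.congr fun k => ?_
    simp only [Function.comp_apply, Complex.re_sum]
    refine Finset.sum_congr rfl fun ρ hρ => ?_
    have : (analyticOrderNatAt xiF ρ : ℂ) = ((mz ρ : ℝ) : ℂ) := by simp [mz]
    rw [this, Complex.re_ofReal_mul]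
    congr 1
    rw [Complex.sub_re, one_div, one_div, Complex.inv_re, Complex.inv_re]
    simp only [Complex.normSq_apply, pk]
    simp
    rw [sub_eq_add_neg, ← neg_div]
    congr 2 <;> ring

theorem gseq_norm_le (z : ℂ) (hz : 0 < z.re) (n : ℕ) (hn : n ≠ 0) :
    ‖Complex.GammaSeq z n‖ ≤ Real.Gamma z.re := by
  have hnp : (0:ℝ) < n := by positivity
  have h1 : ‖Complex.GammaSeq z n‖ ≤
      (n:ℝ) ^ z.re * n.factorial / ∏ j ∈ Finset.range (n+1), (z.re + j) := by
    rw [Complex.GammaSeq, norm_div, norm_mul, norm_prod]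
    have e : ‖(n:ℂ) ^ z‖ = (n:ℝ) ^ z.re := by
      rw [← Complex.ofReal_natCast, Complex.norm_cpow_eq_rpow_re_of_pos hnp]
    rw [e]
    have e2 : ‖(n.factorial : ℂ)‖ = n.factorial := by simp
    rw [e2]
    refine div_le_div_of_nonneg_left (by positivity) (Finset.prod_pos fun j _ => by positivity) ?_
    refine Finset.prod_le_prod (fun j _ => by positivity) fun j _ => ?_
    calc z.re + j = (z + j).re := by simp
      _ ≤ _ := Complex.re_le_norm _
  refine h1.trans ?_
  have h2 := Real.BohrMollerup.ge_logGammaSeq Real.convexOn_log_Gamma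
    (fun {y} hy => by
      simp only [Function.comp_apply]
      rw [Real.Gamma_add_one hy.ne', Real.log_mul hy.ne' (Real.Gamma_pos_of_pos hy).ne', add_comm]) hz hn
  simp only [Function.comp_apply, Real.Gamma_one, Real.log_one, zero_add] at h2
  have h3 := Real.exp_le_exp.2 h2
  rw [Real.exp_log (Real.Gamma_pos_of_pos hz)] at h3
  refine le_trans (le_of_eq ?_) h3
  rw [Real.BohrMollerup.logGammaSeq, Real.exp_sub, Real.exp_add, Real.exp_sum, mul_comm z.re,
    Real.exp_mul, Real.exp_log hnp, Real.exp_log (by positivity)]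
  congr 1
  refine Finset.prod_congr rfl fun j _ => ?_
  rw [Real.exp_log (by positivity)]

theorem gseq_diff (n : ℕ) (hn : n ≠ 0) (z : ℂ) (hz : 0 < z.re) :
    DifferentiableAt ℂ (fun z => Complex.GammaSeq z n) z := by
  unfold Complex.GammaSeq
  have hnc : (n:ℂ) ≠ 0 := by exact_mod_cast hn
  refine DifferentiableAt.div ?_ (by fun_prop) ?_
  · exact ((differentiableAt_id.const_cpow (Or.inl hnc))).mul_const _
  · refine Finset.prod_ne_zero_iff.2 fun j _ h => ?_
    have := congrArg Complex.re h
    simp at this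
    have : (0:ℝ) ≤ j := by positivity
    linarith

theorem gseq_deriv_tendsto (s : ℂ) (hs : 0 < s.re) :
    Tendsto (fun n : ℕ => deriv (fun z => Complex.GammaSeq z n) s) atTop (𝓝 (deriv Complex.Gamma s)) := by
  set r := s.re/2 with hr
  have hrp : 0 < r := by linarith
  have hre : ∀ z ∈ Metric.closedBall s r, 0 < z.re := by
    intro z hz
    simp only [Metric.mem_closedBall, dist_eq_norm] at hz
    have := (Complex.abs_re_le_norm (z - s)).trans hz
    rw [abs_le, Complex.sub_re] at this
    linarith
  have hG : DiffContOnCl ℂ Complex.Gamma (Metric.ball s r) := by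
    refine DifferentiableOn.diffContOnCl fun z hz => ?_
    refine (Complex.differentiableAt_Gamma _ fun m h => ?_).differentiableWithinAt
    have h2 := hre z (Metric.closure_ball_subset_closedBall hz)
    rw [h] at h2
    simp at h2
    have : (0:ℝ) ≤ m := by positivity
    linarith
  have hS : ∀ n : ℕ, n ≠ 0 → DiffContOnCl ℂ (fun z => Complex.GammaSeq z n) (Metric.ball s r) := by
    intro n hn
    refine DifferentiableOn.diffContOnCl fun z hz => ?_
    exact (gseq_diff n hn z (hre z (Metric.closure_ball_subset_closedBall hz))).differentiableWithinAt
  have h1 := hG.deriv_eq_smul_circleIntegral hrp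
  have h2 := fun n hn => (hS n hn).deriv_eq_smul_circleIntegral hrp
  have hmap : ∀ θ, circleMap s r θ ∈ Metric.closedBall s r := fun θ =>
    Metric.sphere_subset_closedBall (circleMap_mem_sphere _ hrp.le _)
  have hcont : ∀ f : ℂ → ℂ, DiffContOnCl ℂ f (Metric.ball s r) → Continuous fun θ => f (circleMap s r θ) := by
    intro f hf
    have := hf.continuousOn
    rw [closure_ball _ hrp.ne'] at this
    exact this.comp_continuous (continuous_circleMap s r) hmap
  have hlim : Tendsto (fun n : ℕ => ∮ z in C(s, r), (1 / (z - s) ^ 2) • Complex.GammaSeq z n) atTop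
      (𝓝 (∮ z in C(s, r), (1 / (z - s) ^ 2) • Complex.Gamma z)) := by
    unfold circleIntegral
    refine intervalIntegral.tendsto_integral_filter_of_dominated_convergence
      (fun θ => r⁻¹ * Real.Gamma (circleMap s r θ).re) ?_ ?_ ?_ ?_
    · filter_upwards [eventually_ne_atTop 0] with n hn
      refine Continuous.aestronglyMeasurable ?_
      have := hcont _ (hS n hn)
      simp only [smul_eq_mul]
      refine Continuous.mul ?_ (Continuous.mul ?_ this)
      · have e : (fun θ => deriv (circleMap s r) θ) = fun θ => circleMap 0 r θ * Complex.I := by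
          ext θ; exact deriv_circleMap _ _ _
        have hc : Continuous (deriv (circleMap s r)) := by
          change Continuous (fun θ => deriv (circleMap s r) θ)
          rw [e]; fun_prop
        exact hc
      · refine Continuous.div continuous_const (by fun_prop) fun θ => pow_ne_zero _ ?_
        simp [circleMap, hrp.ne']
    · filter_upwards [eventually_ne_atTop 0] with n hn
      refine Eventually.of_forall fun θ _ => ?_
      have := gseq_norm_le (circleMap s r θ) (hre _ (hmap θ)) n hn
      rw [norm_smul, norm_smul, norm_div, norm_pow, norm_one, deriv_circleMap, norm_mul,
        Complex.norm_I, circleMap_sub_center, norm_circleMap_zero, abs_of_pos hrp]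
      rw [show r * 1 * (1 / r^2 * ‖Complex.GammaSeq (circleMap s r θ) n‖) =
        r⁻¹ * ‖Complex.GammaSeq (circleMap s r θ) n‖ by field_simp]
      gcongr
    · refine Continuous.intervalIntegrable ?_ _ _
      refine continuous_const.mul ?_
      rw [continuous_iff_continuousAt]
      intro θ
      have := (Real.differentiableAt_Gamma (s := (circleMap s r θ).re) (fun m h => by
        have h2 := hre _ (hmap θ)
        rw [h] at h2
        have : (0:ℝ) ≤ m := by positivity
        linarith)).continuousAt
      exact ContinuousAt.comp (f := fun θ => (circleMap s r θ).re) this (by fun_prop)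
    · refine Eventually.of_forall fun θ _ => ?_
      exact ((Complex.GammaSeq_tendsto_Gamma _).const_smul _).const_smul _
  rw [h1] at hlim
  have hc : (2 * (Real.pi:ℂ) * Complex.I) ≠ 0 := Complex.two_pi_I_ne_zero
  have := hlim.const_smul (2 * (Real.pi:ℂ) * Complex.I)⁻¹
  rw [inv_smul_smul₀ hc] at this
  refine this.congr' ?_
  filter_upwards [eventually_ne_atTop 0] with n hn
  rw [h2 n hn, inv_smul_smul₀ hc]

theorem gseq_logDeriv (n : ℕ) (hn : n ≠ 0) (s : ℂ) (hs : 0 < s.re) :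
    logDeriv (fun z => Complex.GammaSeq z n) s =
      Complex.log n - ∑ j ∈ Finset.range (n+1), 1 / (s + j) := by
  have hnc : (n:ℂ) ≠ 0 := by exact_mod_cast hn
  have hj : ∀ j : ℕ, s + j ≠ 0 := by
    intro j h
    have := congrArg Complex.re h
    simp at this
    have : (0:ℝ) ≤ j := by positivity
    linarith
  unfold Complex.GammaSeq
  rw [logDeriv_div (f := fun z => (n:ℂ)^z * (n.factorial : ℂ)) (g := fun z => ∏ j ∈ Finset.range (n+1), (z + j)) s
    (mul_ne_zero (by simp [Complex.cpow_eq_zero_iff, hnc]) (by exact_mod_cast n.factorial_ne_zero))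
    (Finset.prod_ne_zero_iff.2 fun j _ => hj j)
    (((differentiableAt_id.const_cpow (Or.inl hnc))).mul_const _) (by fun_prop)]
  congr 1
  · rw [logDeriv_mul_const _ _ (by exact_mod_cast n.factorial_ne_zero), logDeriv_apply]
    have := (hasDerivAt_id s).const_cpow (c := (n:ℂ)) (Or.inl hnc)
    simp only [id, mul_one] at this
    rw [this.deriv]
    have h3 : (n:ℂ)^s ≠ 0 := by simp [Complex.cpow_eq_zero_iff, hnc]
    field_simp
  · rw [logDeriv_prod]
    · refine Finset.sum_congr rfl fun j _ => ?_
      rw [logDeriv_apply]; simp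
    · intro j _; exact hj j
    · intro j _; fun_prop

theorem digamma_sum (y : ℝ) : HasSum (fun j : ℕ => 1/((j:ℝ)+1) - ((j:ℝ)+1)/(((j:ℝ)+1)^2 + y^2))
    ((logDeriv Complex.Gamma (1 + y * Complex.I)).re - (logDeriv Complex.Gamma 1).re) := by
  have key : ∀ s : ℂ, 0 < s.re → Tendsto (fun n : ℕ => logDeriv (fun z => Complex.GammaSeq z n) s) atTop
      (𝓝 (logDeriv Complex.Gamma s)) := by
    intro s hs
    simp only [logDeriv_apply]
    exact (gseq_deriv_tendsto s hs).div (Complex.GammaSeq_tendsto_Gamma s) (Complex.Gamma_ne_zero_of_re_pos hs)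
  have h := (key (1 + y * Complex.I) (by simp)).sub (key 1 (by simp))
  have h' := (Complex.continuous_re.tendsto _).comp h
  rw [Complex.sub_re] at h'
  rw [hasSum_iff_tendsto_nat_of_nonneg]
  · rw [← tendsto_add_atTop_iff_nat 1]
    refine h'.congr' ?_
    filter_upwards [eventually_ne_atTop 0] with n hn
    simp only [Function.comp_apply]
    rw [gseq_logDeriv n hn _ (by simp), gseq_logDeriv n hn _ (by simp)]
    rw [sub_sub_sub_cancel_left, ← Finset.sum_sub_distrib, Complex.re_sum]
    refine Finset.sum_congr rfl fun j _ => ?_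
    rw [Complex.sub_re]
    congr 1
    · rw [show (1 + (j:ℂ)) = (((j:ℝ) + 1 : ℝ) : ℂ) by push_cast; ring, ← Complex.ofReal_one,
        ← Complex.ofReal_div, Complex.ofReal_re]
    · rw [one_div, Complex.inv_re, Complex.normSq_apply]
      simp
      congr 1 <;> ring
  · intro j
    have hj : (0:ℝ) ≤ j := by positivity
    rw [sub_nonneg, div_le_div_iff₀ (by positivity) (by positivity)]
    nlinarith [sq_nonneg y]

noncomputable def cG : ℝ := (logDeriv Complex.Gamma 1).re - Real.log Real.pi

/-- digamma terms -/
noncomputable def dgT (τ : ℝ) (n : ℕ) : ℝ := 2/(2*(n:ℝ)+2) - 2 * pk (2*n+2) τ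

noncomputable def vM (n : ℕ) : ℝ := ArithmeticFunction.vonMangoldt n

theorem dgT_hasSum (τ : ℝ) : HasSum (dgT τ)
    ((logDeriv Complex.Gamma (1 + (τ/2:ℝ) * Complex.I)).re - (logDeriv Complex.Gamma 1).re) := by
  convert digamma_sum (τ/2) using 1
  ext n
  unfold dgT pk
  congr 1
  · field_simp
  · field_simp

theorem ld_zeta (τ : ℝ) : HasSum (fun n : ℕ => vM n / (n:ℝ)^2 * Real.cos (τ * Real.log n))
    (-(logDeriv riemannZeta (2 + τ * Complex.I))).re := by
  have hs : 1 < (2 + τ * Complex.I).re := by simp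
  have h1 := (ArithmeticFunction.LSeriesSummable_vonMangoldt hs).LSeriesHasSum
  rw [ArithmeticFunction.LSeries_vonMangoldt_eq_deriv_riemannZeta_div hs] at h1
  have h2 := Complex.hasSum_re h1
  rw [neg_div, ← logDeriv_apply] at h2
  convert h2 using 1
  ext n
  by_cases hn : n = 0
  · simp [hn, vM]
  · rw [LSeries.term_of_ne_zero hn]
    have hnp : (0:ℝ) < n := by positivity
    have e : (n:ℂ) ^ (2 + τ * Complex.I) = ((n:ℝ)^2 : ℝ) * Complex.exp ((τ * Real.log n : ℝ) * Complex.I) := by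
      rw [Complex.cpow_add _ _ (by exact_mod_cast hn), Complex.cpow_ofNat]
      congr 1
      · push_cast; rfl
      · rw [Complex.cpow_def_of_ne_zero (by exact_mod_cast hn), ← Complex.natCast_log]
        congr 1
        push_cast; ring
    rw [e, vM]
    have e2 : ((ArithmeticFunction.vonMangoldt n : ℝ) : ℂ) / (((n:ℝ)^2 : ℝ) * Complex.exp ((τ * Real.log n : ℝ) * Complex.I))
      = ((ArithmeticFunction.vonMangoldt n / (n:ℝ)^2 : ℝ) : ℂ) * Complex.exp ((-(τ * Real.log n) : ℝ) * Complex.I) := by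
      rw [Complex.ofReal_neg, neg_mul, Complex.exp_neg]
      push_cast
      field_simp
    rw [e2, Complex.re_ofReal_mul, Complex.exp_ofReal_mul_I_re, Real.cos_neg]

theorem ldxi_right (τ : ℝ) : 2 * (logDeriv xiF (2 + τ * Complex.I)).re =
    2 * pk 2 τ + 2 * pk 1 τ + cG + ∑' n, dgT τ n
      - 2 * ∑' n : ℕ, vM n / (n:ℝ)^2 * Real.cos (τ * Real.log n) := by
  set s : ℂ := 2 + τ * Complex.I with hs
  have hre : s.re = 2 := by simp [hs]
  have hs0 : s ≠ 0 := by intro h; rw [h] at hre; norm_num at hre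
  have hs1 : s ≠ 1 := by intro h; rw [h] at hre; norm_num at hre
  have hU : IsOpen {s : ℂ | 0 < s.re ∧ s ≠ 1} :=
    (isOpen_lt continuous_const Complex.continuous_re).inter isOpen_ne
  have e : xiF =ᶠ[𝓝 s] fun s => (s * (s - 1)) * ((Real.pi:ℂ) ^ (-s/2) * (Complex.Gamma (s/2) * riemannZeta s)) := by
    filter_upwards [hU.mem_nhds ⟨by rw [hre]; norm_num, hs1⟩] with z hz
    rw [xiF_eq_zeta z hz.1 hz.2, Complex.Gammaℝ_def]
    ring
  have hpi : (Real.pi:ℂ) ≠ 0 := by exact_mod_cast Real.pi_ne_zero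
  have hG0 : Complex.Gamma (s/2) ≠ 0 := Complex.Gamma_ne_zero_of_re_pos (by simp [hre])
  have hz0 : riemannZeta s ≠ 0 := riemannZeta_ne_zero_of_one_le_re (by rw [hre]; norm_num)
  have hp0 : (Real.pi:ℂ) ^ (-s/2) ≠ 0 := by simp [Complex.cpow_eq_zero_iff, hpi]
  have hdG' : DifferentiableAt ℂ Complex.Gamma (s/2) := by
    refine Complex.differentiableAt_Gamma _ fun m h => ?_
    have := congrArg Complex.re h
    simp [hre] at this
    have : (0:ℝ) ≤ m := by positivity
    linarith
  have hdG : DifferentiableAt ℂ (fun s => Complex.Gamma (s/2)) s :=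
    DifferentiableAt.comp (g := Complex.Gamma) (f := fun s : ℂ => s/2) s hdG' (by fun_prop)
  have hdz : DifferentiableAt ℂ riemannZeta s := differentiableAt_riemannZeta hs1
  have hdp : HasDerivAt (fun s : ℂ => (Real.pi:ℂ) ^ (-s/2)) ((Real.pi:ℂ) ^ (-s/2) * Complex.log Real.pi * (-1/2)) s := by
    have h0 : HasDerivAt (fun s : ℂ => -s/2) (-1/2) s := by
      have := ((hasDerivAt_id s).neg).div_const 2
      simpa using this
    exact h0.const_cpow (Or.inl hpi)
  have h1 : logDeriv xiF s = (1/s + 1/(s-1)) + (-(Real.log Real.pi : ℂ)/2 + (logDeriv Complex.Gamma (s/2) / 2 + logDeriv riemannZeta s)) := by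
    have : logDeriv xiF s = logDeriv (fun s => (s * (s - 1)) * ((Real.pi:ℂ) ^ (-s/2) * (Complex.Gamma (s/2) * riemannZeta s))) s := by
      rw [logDeriv_apply, logDeriv_apply, e.deriv_eq, e.self_of_nhds]
    rw [this, logDeriv_mul (f := fun s : ℂ => s * (s-1)) (g := fun s => ((Real.pi:ℂ) ^ (-s/2) * (Complex.Gamma (s/2) * riemannZeta s))) s
      (mul_ne_zero hs0 (sub_ne_zero.2 hs1)) (mul_ne_zero hp0 (mul_ne_zero hG0 hz0)) (by fun_prop)
      (hdp.differentiableAt.mul (hdG.mul hdz)),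
      logDeriv_mul (f := fun s : ℂ => s) (g := fun s => s-1) s hs0 (sub_ne_zero.2 hs1) (by fun_prop) (by fun_prop),
      logDeriv_mul (f := fun s : ℂ => (Real.pi:ℂ) ^ (-s/2)) (g := fun s => (Complex.Gamma (s/2) * riemannZeta s)) s
        hp0 (mul_ne_zero hG0 hz0) hdp.differentiableAt (hdG.mul hdz),
      logDeriv_mul (f := fun s : ℂ => Complex.Gamma (s/2)) (g := riemannZeta) s hG0 hz0 hdG hdz]
    congr 1
    · congr 1
      · simp [logDeriv_apply]
      · simp [logDeriv_apply]
    · congr 1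
      · rw [logDeriv_apply, hdp.deriv, ← Complex.ofReal_log Real.pi_pos.le]
        field_simp
      · congr 1
        have h0 : HasDerivAt (fun s : ℂ => s/2) (1/2) s := (hasDerivAt_id s).div_const 2
        have := HasDerivAt.comp s hdG'.hasDerivAt h0
        rw [logDeriv_apply, logDeriv_apply]
        rw [show deriv (fun s => Complex.Gamma (s/2)) s = _ from this.deriv]
        ring
  have h2 : (1/s).re = pk 2 τ := by
    rw [one_div, Complex.inv_re, Complex.normSq_apply, pk, hs]; simp; ring
  have h3 : (1/(s-1)).re = pk 1 τ := by
    rw [one_div, Complex.inv_re, Complex.normSq_apply, pk, hs]; simp; norm_num; ring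
  have h4 : (-(Real.log Real.pi : ℂ)/2).re = -Real.log Real.pi / 2 := by
    rw [← Complex.ofReal_neg]; simp
  have h5 : s/2 = 1 + (τ/2:ℝ) * Complex.I := by rw [hs]; push_cast; ring
  have h6 := (dgT_hasSum τ).tsum_eq
  have h7 := (ld_zeta τ).tsum_eq
  rw [h6, h7, h1]
  simp only [Complex.add_re, h2, h3, h4, h5, Complex.neg_re, cG]
  have h8 : (logDeriv Complex.Gamma (1 + (τ/2:ℝ) * Complex.I) / 2).re = (logDeriv Complex.Gamma (1 + (τ/2:ℝ) * Complex.I)).re / 2 := by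
    simp
  rw [h8]
  rw [← hs]
  ring

theorem zero_formula (τ : ℝ) :
    HasSum (fun ρ : ℂ => (mz ρ : ℝ) * (pk (2 - ρ.re) (ρ.im - τ) + pk (1 + ρ.re) (ρ.im - τ)))
    (2 * pk 2 τ + 2 * pk 1 τ + cG + ∑' n, dgT τ n
      - 2 * ∑' n : ℕ, vM n / (n:ℝ)^2 * Real.cos (τ * Real.log n)) := by
  rw [← ldxi_right]; exact zero_sum τ

noncomputable def gp (v : ℝ) : ℝ := (1 - v) * (1 + v/4)
noncomputable def gc (v : ℝ) : ℝ := max 0 (gp |v|)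
noncomputable def Kf (A l y : ℝ) : ℝ := ∫ u in (0:ℝ)..A, gp (u/A) * Real.exp (-l*u) * Real.cos (u*y)

theorem gp_cont : Continuous gp := by unfold gp; fun_prop
theorem gc_cont : Continuous gc := by unfold gc; exact continuous_const.max (gp_cont.comp continuous_abs)
theorem gp_bd (v : ℝ) (h0 : 0 ≤ v) (h1 : v ≤ 1) : 0 ≤ gp v ∧ gp v ≤ 1 := by
  unfold gp; constructor <;> nlinarith
theorem gc_eq (v : ℝ) (h0 : 0 ≤ v) (h1 : v ≤ 1) : gc v = gp v := by
  rw [gc, abs_of_nonneg h0, max_eq_right (gp_bd v h0 h1).1]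
theorem gc_zero (v : ℝ) (h : 1 ≤ |v|) : gc v = 0 := by
  rw [gc, max_eq_left]; unfold gp; nlinarith
theorem gc_nonneg (v : ℝ) : 0 ≤ gc v := le_max_left _ _
theorem gc_le_one (v : ℝ) : gc v ≤ 1 := by
  rcases le_total 1 |v| with h | h
  · rw [gc_zero v h]; norm_num
  · rw [gc]; exact max_le (by norm_num) (gp_bd _ (abs_nonneg v) h).2

theorem ibp2 (p p1 p2 : ℝ → ℝ) (hp : ∀ u, HasDerivAt p (p1 u) u) (hp1 : ∀ u, HasDerivAt p1 (p2 u) u)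
    (hp2 : Continuous p2) (A y : ℝ) :
    y^2 * ∫ u in (0:ℝ)..A, p u * Real.cos (u*y) =
      p A * (y * Real.sin (A*y)) + p1 A * Real.cos (A*y) - p1 0 - ∫ u in (0:ℝ)..A, p2 u * Real.cos (u*y) := by
  have hpc : Continuous p := continuous_iff_continuousAt.2 fun u => (hp u).continuousAt
  have hd : ∀ u, HasDerivAt (fun u => p u * (y * Real.sin (u*y)) + p1 u * Real.cos (u*y))
      (y^2 * (p u * Real.cos (u*y)) + p2 u * Real.cos (u*y)) u := by
    intro u
    have hu : HasDerivAt (fun u : ℝ => u*y) y u := by simpa using (hasDerivAt_id u).mul_const y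
    have hs := hu.sin
    have hc := hu.cos
    have := ((hp u).mul (hs.const_mul y)).add ((hp1 u).mul hc)
    exact this.congr_deriv (by ring)
  have hI := intervalIntegral.integral_eq_sub_of_hasDerivAt (a := 0) (b := A) (fun u _ => hd u)
    (Continuous.intervalIntegrable (by fun_prop) _ _)
  rw [intervalIntegral.integral_add (Continuous.intervalIntegrable (by fun_prop) _ _)
    (Continuous.intervalIntegrable (by fun_prop) _ _), intervalIntegral.integral_const_mul] at hI
  simp at hI
  linarith

theorem Kf_abs1 (A l y : ℝ) (hA : 0 < A) : |Kf A l y| ≤ A * Real.exp (A * |l|) := by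
  have := intervalIntegral.norm_integral_le_of_norm_le_const (a := 0) (b := A) (C := Real.exp (A * |l|))
    (f := fun u => gp (u/A) * Real.exp (-l*u) * Real.cos (u*y)) (fun u hu => by
      rw [uIoc_of_le hA.le] at hu
      have h0 : 0 ≤ u/A := by have := hu.1; positivity
      have h1 : u/A ≤ 1 := (div_le_one hA).2 hu.2
      have hg := gp_bd _ h0 h1
      rw [norm_mul, norm_mul, Real.norm_eq_abs, Real.norm_eq_abs, Real.norm_eq_abs, abs_of_nonneg hg.1,
        abs_of_pos (Real.exp_pos _)]
      have he : Real.exp (-l*u) ≤ Real.exp (A * |l|) := by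
        refine Real.exp_le_exp.2 ?_
        have : -l ≤ |l| := neg_le_abs l
        nlinarith [abs_nonneg l, hu.1, hu.2]
      calc gp (u/A) * Real.exp (-l*u) * |Real.cos (u*y)| ≤ 1 * Real.exp (A * |l|) * 1 := by
            gcongr
            · exact hg.2
            · exact Real.abs_cos_le_one _
        _ = _ := by ring)
  rw [sub_zero, abs_of_pos hA, Real.norm_eq_abs, mul_comm] at this
  exact this

theorem Kf_dec (A l y : ℝ) (hA : 0 < A) :
    |Kf A l y| ≤ 4 * A * Real.exp (A * |l|) * (1 + A * |l|)^2 / (1 + (A*y)^2) := by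
  set a := A * |l| with ha
  have ha0 : 0 ≤ a := by positivity
  have h1 := Kf_abs1 A l y hA
  rw [← ha] at h1
  set p : ℝ → ℝ := fun u => gp (u/A) * Real.exp (-l*u)
  set p1 : ℝ → ℝ := fun u => ((-3/4 - (u/A)/2)/A - l * gp (u/A)) * Real.exp (-l*u) with hp1d
  set p2 : ℝ → ℝ := fun u => (-(1/2)/A^2 - 2 * l * ((-3/4 - (u/A)/2)/A) + l^2 * gp (u/A)) * Real.exp (-l*u) with hp2d
  have hue : ∀ u, HasDerivAt (fun u => Real.exp (-l*u)) (-l * Real.exp (-l*u)) u := by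
    intro u
    have : HasDerivAt (fun u : ℝ => -l*u) (-l) u := by simpa using (hasDerivAt_id u).const_mul (-l)
    convert this.exp using 1; ring
  have hgd : ∀ u, HasDerivAt (fun u => gp (u/A)) ((-3/4 - (u/A)/2)/A) u := by
    intro u
    have h : HasDerivAt (fun u : ℝ => u/A) (1/A) u := (hasDerivAt_id u).div_const A
    have := (h.const_sub 1).mul ((h.div_const 4).const_add 1)
    exact this.congr_deriv (by field_simp; ring)
  have hp : ∀ u, HasDerivAt p (p1 u) u := by
    intro u
    exact ((hgd u).mul (hue u)).congr_deriv (by simp only [hp1d]; ring)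
  have hp1 : ∀ u, HasDerivAt p1 (p2 u) u := by
    intro u
    have h : HasDerivAt (fun u : ℝ => (-3/4 - (u/A)/2)/A) (-(1/2)/A^2) u := by
      have := ((((hasDerivAt_id u).div_const A).div_const 2).const_sub (-3/4)).div_const A
      exact this.congr_deriv (by field_simp)
    exact ((h.sub ((hgd u).const_mul l)).mul (hue u)).congr_deriv (by simp only [hp2d, Pi.sub_apply]; ring)
  have hp2 : Continuous p2 := by
    have := gp_cont
    simp only [hp2d]; fun_prop
  have hib := ibp2 p p1 p2 hp hp1 hp2 A y
  have e0 : (∫ u in (0:ℝ)..A, p u * Real.cos (u*y)) = Kf A l y := rfl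
  have epA : p A = 0 := by simp [p, gp, div_self hA.ne']
  rw [e0, epA, zero_mul, zero_add] at hib
  have hexpb : ∀ u, 0 ≤ u → u ≤ A → Real.exp (-l*u) ≤ Real.exp a := by
    intro u h0 h1
    refine Real.exp_le_exp.2 ?_
    have : -l ≤ |l| := neg_le_abs l
    nlinarith [abs_nonneg l]
  have hI := intervalIntegral.norm_integral_le_of_norm_le_const (a := 0) (b := A)
    (C := (1/2/A^2 + 5/2 * |l|/A + l^2) * Real.exp a)
    (f := fun u => p2 u * Real.cos (u*y)) (fun u hu => by
      rw [uIoc_of_le hA.le] at hu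
      have h0 : 0 ≤ u/A := by have := hu.1; positivity
      have h1 : u/A ≤ 1 := (div_le_one hA).2 hu.2
      have hg := gp_bd _ h0 h1
      have hb : |(-(1/2)/A^2 - 2 * l * ((-3/4 - (u/A)/2)/A) + l^2 * gp (u/A))| ≤ 1/2/A^2 + 5/2 * |l|/A + l^2 := by
        refine (abs_add_le _ _).trans (add_le_add ((abs_sub _ _).trans (add_le_add ?_ ?_)) ?_)
        · rw [neg_div, abs_neg, abs_of_pos (by positivity)]
        · rw [abs_mul, abs_mul, abs_div, abs_of_pos hA, abs_of_nonpos (by linarith : (-3/4 - (u/A)/2) ≤ 0)]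
          rw [abs_two, ← mul_div_assoc]
          refine div_le_div_of_nonneg_right ?_ hA.le
          nlinarith [abs_nonneg l]
        · rw [abs_of_nonneg (by nlinarith [sq_nonneg l])]
          nlinarith [sq_nonneg l]
      rw [norm_mul, Real.norm_eq_abs, Real.norm_eq_abs, hp2d, abs_mul, abs_of_pos (Real.exp_pos _)]
      calc _ ≤ ((1/2/A^2 + 5/2 * |l|/A + l^2) * Real.exp a) * 1 := by
            refine mul_le_mul (mul_le_mul hb (hexpb u hu.1.le hu.2) (Real.exp_pos _).le (by positivity))
              (Real.abs_cos_le_one _) (abs_nonneg _) (by positivity)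
        _ = _ := mul_one _)
  rw [sub_zero, abs_of_pos hA, Real.norm_eq_abs] at hI
  have hea : 1 ≤ Real.exp a := Real.one_le_exp ha0
  have hpA : |p1 A * Real.cos (A*y)| ≤ 5/4/A * Real.exp a := by
    rw [abs_mul]
    have : p1 A = (-(5/4/A)) * Real.exp (-l*A) := by
      simp only [hp1d, gp, div_self hA.ne']; ring
    rw [this, abs_mul, abs_neg, abs_of_pos (by positivity : 0 < 5/4/A), abs_of_pos (Real.exp_pos _)]
    calc _ ≤ (5/4/A * Real.exp a) * 1 := by
          refine mul_le_mul (mul_le_mul_of_nonneg_left (hexpb A hA.le le_rfl) (by positivity)) (Real.abs_cos_le_one _) (abs_nonneg _) (by positivity)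
      _ = _ := mul_one _
  have hp0 : |p1 0| ≤ (3/4/A + |l|) * Real.exp a := by
    have : p1 0 = -(3/4/A) - l := by simp [hp1d, gp]; ring
    rw [this]
    have h2 : |-(3/4/A) - l| ≤ 3/4/A + |l| := by
      refine (abs_sub _ _).trans ?_
      rw [abs_neg, abs_of_pos (by positivity : 0 < 3/4/A)]
    have : 0 ≤ 3/4/A + |l| := by positivity
    nlinarith
  have h2 : y^2 * |Kf A l y| ≤ Real.exp a * (5/4/A + (3/4/A + |l|) + A * (1/2/A^2 + 5/2 * |l|/A + l^2)) := by
    have : y^2 * |Kf A l y| = |y^2 * Kf A l y| := by rw [abs_mul, abs_of_nonneg (sq_nonneg y)]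
    rw [this, hib]
    refine ((abs_sub _ _).trans (add_le_add ((abs_sub _ _).trans (add_le_add hpA hp0)) hI)).trans (le_of_eq ?_)
    ring
  have h3 : A^2 * (y^2 * |Kf A l y|) ≤ A * Real.exp a * (5/2 + 7/2 * a + a^2) := by
    calc _ ≤ A^2 * (Real.exp a * (5/4/A + (3/4/A + |l|) + A * (1/2/A^2 + 5/2 * |l|/A + l^2))) := by gcongr
      _ = A * Real.exp a * (5/2 + 7/2 * a + a^2) := by
        rw [ha]
        have : l^2 = |l|^2 := (sq_abs l).symm
        rw [this]
        field_simp
        ring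
  rw [le_div_iff₀ (by positivity)]
  have h4 : |Kf A l y| * (1 + (A*y)^2) ≤ A * Real.exp a * (7/2 + 7/2 * a + a^2) := by nlinarith
  refine h4.trans ?_
  have : 0 ≤ A * Real.exp a := by positivity
  nlinarith

theorem Kf_cont (A l : ℝ) : Continuous (Kf A l) := by
  unfold Kf
  have := gp_cont
  exact intervalIntegral.continuous_parametric_intervalIntegral_of_continuous' (by fun_prop) 0 A

theorem Kf_even (A l y : ℝ) : Kf A l (-y) = Kf A l y := by
  unfold Kf; simp

theorem integrable_dec (A : ℝ) (hA : 0 < A) (C : ℝ) : Integrable (fun y : ℝ => C / (1 + (A*y)^2)) := by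
  have := (integrable_inv_one_add_sq.comp_mul_left' hA.ne').const_mul C
  simpa [div_eq_mul_inv] using this

theorem Kf_integrable (A l : ℝ) (hA : 0 < A) : Integrable (Kf A l) := by
  refine (integrable_dec A hA (4 * A * Real.exp (A * |l|) * (1 + A * |l|)^2)).mono'
    (Kf_cont A l).aestronglyMeasurable (Eventually.of_forall fun y => ?_)
  exact Kf_dec A l y hA

/-- passing from half line to [0,A] -/
theorem Kf_half (A l y : ℝ) (hA : 0 < A) :
    ∫ u in Ioi (0:ℝ), gc (u/A) * Real.exp (-l*u) * Real.cos (u*y) = Kf A l y := by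
  rw [Kf, intervalIntegral.integral_of_le hA.le]
  have e : ∫ u in Ioc (0:ℝ) A, gp (u/A) * Real.exp (-l*u) * Real.cos (u*y) =
      ∫ u in Ioc (0:ℝ) A, gc (u/A) * Real.exp (-l*u) * Real.cos (u*y) := by
    refine setIntegral_congr_fun measurableSet_Ioc fun u hu => ?_
    rw [gc_eq _ (by have := hu.1; positivity) ((div_le_one hA).2 hu.2)]
  rw [e]
  refine setIntegral_eq_of_subset_of_forall_sdiff_eq_zero measurableSet_Ioi (fun u hu => hu.1) ?_
  intro u hu
  have h1 : 0 < u := hu.1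
  have h2 : A < u := by
    by_contra h; exact hu.2 ⟨h1, not_lt.1 h⟩
  rw [gc_zero _ (by rw [abs_of_pos (by positivity)]; exact (one_le_div hA).2 h2.le)]
  simp

noncomputable def EE (A l u : ℝ) : ℝ := gc (u/A) * Real.exp (-l*|u|)

theorem EE_cont (A l : ℝ) : Continuous (EE A l) := by
  have := gc_cont
  unfold EE; fun_prop

theorem EE_integrable (A l : ℝ) (hA : 0 < A) : Integrable (EE A l) := by
  refine (EE_cont A l).integrable_of_hasCompactSupport ?_
  refine HasCompactSupport.intro (isCompact_Icc (a := -A) (b := A)) fun u hu => ?_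
  rw [EE, gc_zero, zero_mul]
  rw [abs_div, abs_of_pos hA, one_le_div hA]
  by_contra h
  exact hu (abs_le.1 (not_le.1 h).le)

theorem EE_fourier (A l w : ℝ) (hA : 0 < A) :
    ∫ u : ℝ, EE A l u * Real.cos (u*w) = 2 * Kf A l w := by
  rw [← Kf_half A l w hA, ← integral_comp_abs (f := fun u => gc (u/A) * Real.exp (-l*u) * Real.cos (u*w))]
  congr 1
  ext u
  simp only [EE]
  have h1 : gc (|u|/A) = gc (u/A) := by unfold gc; simp [abs_div]
  have h2 : Real.cos (|u| * w) = Real.cos (u*w) := by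
    rcases abs_choice u with h | h <;> rw [h]
    rw [neg_mul, Real.cos_neg]
  rw [h1, h2]

open FourierTransform in
theorem Kf_inv (A l u : ℝ) (hA : 0 < A) :
    ∫ y : ℝ, Kf A l y * Real.cos (u*y) = Real.pi * EE A l u := by
  set f : ℝ → ℂ := fun u => (EE A l u : ℂ) with hf
  have hfi : Integrable f := (EE_integrable A l hA).ofReal
  have hfc : Continuous f := Complex.continuous_ofReal.comp (EE_cont A l)
  have hF : ∀ w, 𝓕 f w = ((2 * Kf A l (2*Real.pi*w) : ℝ) : ℂ) := by
    intro w
    rw [Real.fourier_real_eq_integral_exp_smul]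
    have e1 : ∀ v : ℝ, Complex.exp (↑(-2 * Real.pi * v * w) * Complex.I) • f v =
        ((EE A l v * Real.cos (v*(2*Real.pi*w)) : ℝ) : ℂ) - ((EE A l v * Real.sin (v*(2*Real.pi*w)) : ℝ) : ℂ) * Complex.I := by
      intro v
      rw [Complex.exp_mul_I, hf, ← Complex.ofReal_cos, ← Complex.ofReal_sin,
        show -2 * Real.pi * v * w = -(v*(2*Real.pi*w)) by ring, Real.cos_neg, Real.sin_neg, smul_eq_mul]
      push_cast; ring
    simp_rw [e1]
    have hic : Integrable (fun v => EE A l v * Real.cos (v*(2*Real.pi*w))) :=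
      (EE_integrable A l hA).mul_bdd (c := 1) (by fun_prop) (Eventually.of_forall fun v => Real.abs_cos_le_one _)
    have his : Integrable (fun v => EE A l v * Real.sin (v*(2*Real.pi*w))) :=
      (EE_integrable A l hA).mul_bdd (c := 1) (by fun_prop) (Eventually.of_forall fun v => Real.abs_sin_le_one _)
    rw [integral_sub hic.ofReal (his.ofReal.mul_const _), integral_mul_const, integral_complex_ofReal, integral_complex_ofReal, EE_fourier A l _ hA]
    have hz : ∫ v, EE A l v * Real.sin (v*(2*Real.pi*w)) = 0 := by
      have h := integral_neg_eq_self (fun v => EE A l v * Real.sin (v*(2*Real.pi*w))) volume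
      have e : ∀ v, EE A l (-v) * Real.sin (-v*(2*Real.pi*w)) = -(EE A l v * Real.sin (v*(2*Real.pi*w))) := by
        intro v
        have : EE A l (-v) = EE A l v := by simp [EE, gc, neg_div]
        rw [this, neg_mul, Real.sin_neg]; ring
      simp_rw [e] at h
      rw [integral_neg] at h
      linarith
    rw [hz]; simp
  have h2pi : (2*Real.pi) ≠ 0 := by positivity
  have hKi : Integrable (fun w => 2 * Kf A l (2*Real.pi*w)) :=
    ((Kf_integrable A l hA).comp_mul_left' h2pi).const_mul 2
  have hFi : Integrable (𝓕 f) := by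
    have : 𝓕 f = fun w => ((2 * Kf A l (2*Real.pi*w) : ℝ) : ℂ) := funext hF
    rw [this]; exact hKi.ofReal
  have hinv := congrFun (hfc.fourierInv_fourier_eq hfi hFi) u
  rw [Real.fourierInv_eq'] at hinv
  simp_rw [hF] at hinv
  have hre := congrArg Complex.re hinv
  rw [← Complex.reCLM_apply, ← ContinuousLinearMap.integral_comp_comm] at hre
  · have e2 : ∀ v : ℝ, Complex.reCLM (Complex.exp (↑(2 * Real.pi * inner ℝ v u) * Complex.I) • ((2 * Kf A l (2*Real.pi*v) : ℝ) : ℂ)) =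
        (fun y => 2 * (Kf A l y * Real.cos (u*y))) (2*Real.pi*v) := by
      intro v
      simp only [Complex.reCLM_apply, smul_eq_mul, Complex.re_mul_ofReal, Complex.exp_ofReal_mul_I_re]
      have : inner ℝ v u = u * v := by simp [inner]
      rw [this, show 2 * Real.pi * (u*v) = u * (2*Real.pi*v) by ring]
      ring
    simp_rw [e2] at hre
    rw [Measure.integral_comp_mul_left (fun y => 2 * (Kf A l y * Real.cos (u*y))), integral_const_mul] at hre
    rw [abs_of_pos (by positivity)] at hre
    simp only [smul_eq_mul, hf, Complex.ofReal_re] at hre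
    rw [← hre]
    field_simp
  · refine hKi.ofReal.bdd_mul (c := 1) (by fun_prop) (Eventually.of_forall fun v => ?_)
    rw [Complex.norm_exp_ofReal_mul_I]

theorem Kf_inv_sin (A l u : ℝ) : ∫ y : ℝ, Kf A l y * Real.sin (u*y) = 0 := by
  have h := integral_neg_eq_self (fun y => Kf A l y * Real.sin (u*y)) volume
  simp only [Kf_even, mul_neg, Real.sin_neg] at h
  rw [integral_neg] at h
  linarith

theorem Kf_inv_shift (A l u c : ℝ) (hA : 0 < A) :
    ∫ y : ℝ, Kf A l y * Real.cos (u*(y + c)) = Real.pi * EE A l u * Real.cos (u*c) := by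
  have e : ∀ y, Kf A l y * Real.cos (u*(y+c)) = Kf A l y * Real.cos (u*y) * Real.cos (u*c) - Kf A l y * Real.sin (u*y) * Real.sin (u*c) := by
    intro y; rw [mul_add, Real.cos_add]; ring
  simp_rw [e]
  have hK := Kf_integrable A l hA
  have hic : Integrable (fun y => Kf A l y * Real.cos (u*y)) :=
      hK.mul_bdd (c := 1) (by fun_prop) (Eventually.of_forall fun v => Real.abs_cos_le_one _)
  have his : Integrable (fun y => Kf A l y * Real.sin (u*y)) :=
      hK.mul_bdd (c := 1) (by fun_prop) (Eventually.of_forall fun v => Real.abs_sin_le_one _)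
  rw [integral_sub (hic.mul_const _) (his.mul_const _), integral_mul_const, integral_mul_const, Kf_inv A l u hA,
    Kf_inv_sin A l u]
  ring

theorem pk_lap (b y : ℝ) (hb : 0 < b) : ∫ v in Ioi (0:ℝ), Real.exp (-b*v) * Real.cos (v*y) = pk b y := by
  have hre : (-(b:ℂ) + y * Complex.I).re < 0 := by simpa using hb
  have h := integral_exp_mul_complex_Ioi hre 0
  have hi := integrableOn_exp_mul_complex_Ioi hre 0
  have h2 := congrArg Complex.re h
  rw [← Complex.reCLM_apply, ← ContinuousLinearMap.integral_comp_comm _ hi] at h2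
  have e : ∀ v : ℝ, Complex.reCLM (Complex.exp ((-(b:ℂ) + y * Complex.I) * v)) = Real.exp (-b*v) * Real.cos (v*y) := by
    intro v
    rw [Complex.reCLM_apply, Complex.exp_re]
    simp [mul_comm]
  simp_rw [e] at h2
  rw [h2]
  simp [pk, Complex.div_re, Complex.normSq]
  ring_nf

theorem Kf_fub (A l c : ℝ) (hA : 0 < A) (F : ℝ → ℝ) (hF : IntegrableOn F (Ioi 0)) :
    ∫ y : ℝ, Kf A l y * (∫ v in Ioi (0:ℝ), F v * Real.cos (v*(y+c))) =
      Real.pi * ∫ v in Ioi (0:ℝ), F v * EE A l v * Real.cos (v*c) := by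
  have hK := Kf_integrable A l hA
  simp_rw [← integral_const_mul]
  rw [integral_integral_swap]
  · refine integral_congr_ae (Eventually.of_forall fun v => ?_)
    have := Kf_inv_shift A l v c hA
    calc (∫ y, Kf A l y * (F v * Real.cos (v*(y+c)))) = ∫ y, F v * (Kf A l y * Real.cos (v*(y+c))) := by
          congr 1; ext y; ring
      _ = Real.pi * (F v * EE A l v * Real.cos (v*c)) := by rw [integral_const_mul, this]; ring
  · have h1 := hK.mul_prod hF
    have h2 := h1.mul_bdd (c := 1) (g := fun z : ℝ × ℝ => Real.cos (z.2*(z.1+c))) (by fun_prop)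
      (Eventually.of_forall fun v => Real.abs_cos_le_one _)
    refine h2.congr (Eventually.of_forall fun z => ?_)
    simp only [Function.uncurry]; ring

theorem exp_intOn (b : ℝ) (hb : 0 < b) : IntegrableOn (fun v : ℝ => Real.exp (-b*v)) (Ioi 0) :=
  integrableOn_exp_mul_Ioi (by linarith) 0

theorem Kf_ker (A l b y : ℝ) (hA : 0 < A) (hb : 0 < b) :
    ∫ t : ℝ, Kf A l t * pk b (y - t) = Real.pi * Kf A (l+b) y := by
  have h := Kf_fub A l (-y) hA _ (exp_intOn b hb)
  have e : ∀ t : ℝ, ∫ v in Ioi (0:ℝ), Real.exp (-b*v) * Real.cos (v*(t + -y)) = pk b (y - t) := by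
    intro t
    rw [pk_lap b _ hb]; unfold pk; congr 2; ring
  simp_rw [e] at h
  rw [h, ← Kf_half A (l+b) y hA]
  congr 1
  refine setIntegral_congr_fun measurableSet_Ioi fun v hv => ?_
  have hv : 0 < v := hv
  simp only [EE, abs_of_pos hv, mul_neg, Real.cos_neg]
  rw [show -(l+b)*v = -b*v + -l*v by ring, Real.exp_add]; ring

theorem gcexp_intOn (A l : ℝ) (hA : 0 < A) : IntegrableOn (fun v : ℝ => gc (v/A) * Real.exp (-l*v)) (Ioi 0) := by
  refine ((EE_integrable A l hA).integrableOn (s := Ioi 0)).congr_fun (fun v hv => ?_) measurableSet_Ioi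
  have hv : 0 < v := hv
  simp only [EE, abs_of_pos hv]

theorem Kf_plan (A l m a b : ℝ) (hA : 0 < A) :
    ∫ t : ℝ, Kf A l (a - t) * Kf A m (b - t) =
      Real.pi * ∫ u in (0:ℝ)..A, gp (u/A)^2 * Real.exp (-(l+m)*u) * Real.cos (u*(a-b)) := by
  have h := Kf_fub A l (b-a) hA _ (gcexp_intOn A m hA)
  simp_rw [Kf_half A m _ hA] at h
  rw [← integral_sub_left_eq_self _ volume a] at h
  have e : ∀ t : ℝ, Kf A m (a - t + (b - a)) = Kf A m (b - t) := by
    intro t; congr 1; ring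
  simp_rw [e] at h
  rw [h]
  congr 1
  rw [intervalIntegral.integral_of_le hA.le]
  have e2 : ∫ u in Ioc (0:ℝ) A, gp (u/A)^2 * Real.exp (-(l+m)*u) * Real.cos (u*(a-b)) =
      ∫ u in Ioc (0:ℝ) A, gc (u/A) * Real.exp (-m*u) * EE A l u * Real.cos (u*(b-a)) := by
    refine setIntegral_congr_fun measurableSet_Ioc fun u hu => ?_
    have hu0 : 0 < u := hu.1
    simp only [EE, abs_of_pos hu0]
    rw [gc_eq _ (by positivity) ((div_le_one hA).2 hu.2), show u*(b-a) = -(u*(a-b)) by ring, Real.cos_neg,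
      show -(l+m)*u = -m*u + -l*u by ring, Real.exp_add]; ring
  rw [e2]
  refine setIntegral_eq_of_subset_of_forall_sdiff_eq_zero measurableSet_Ioi (fun u hu => hu.1) ?_
  intro u hu
  have h1 : 0 < u := hu.1
  have h2 : A < u := by
    by_contra h; exact hu.2 ⟨h1, not_lt.1 h⟩
  rw [gc_zero _ (by rw [abs_of_pos (by positivity)]; exact (one_le_div hA).2 h2.le)]
  simp

noncomputable def HH (A x y : ℝ) : ℝ := Kf A x y + Kf A (-x) y

theorem HH_cont (A x : ℝ) : Continuous (HH A x) := (Kf_cont A x).add (Kf_cont A (-x))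

theorem HH_neg (A x y : ℝ) : HH A (-x) y = HH A x y := by
  simp [HH]; ring

theorem HH_integrable (A x a : ℝ) (hA : 0 < A) : Integrable (fun t => HH A x (a - t)) :=
  (((Kf_integrable A x hA).add (Kf_integrable A (-x) hA))).comp_sub_left a

theorem HH_int (A x a : ℝ) (hA : 0 < A) : ∫ t, HH A x (a - t) = 2 * Real.pi := by
  rw [integral_sub_left_eq_self (HH A x) volume a]
  unfold HH
  rw [integral_add (Kf_integrable A x hA) (Kf_integrable A (-x) hA)]
  have : ∀ l, ∫ y, Kf A l y = Real.pi := by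
    intro l
    have := Kf_inv A l 0 hA
    simpa [EE, gc, gp] using this
  rw [this, this]; ring

theorem HH_dec (A x y : ℝ) (hA : 0 < A) :
    |HH A x y| ≤ 8 * A * Real.exp (A * |x|) * (1 + A * |x|)^2 / (1 + (A*y)^2) := by
  have h1 := Kf_dec A x y hA
  have h2 := Kf_dec A (-x) y hA
  rw [abs_neg] at h2
  refine (abs_add_le _ _).trans ((add_le_add h1 h2).trans (le_of_eq (by ring)))

theorem Kf_bdd (A l : ℝ) (hA : 0 < A) : ∃ C, ∀ y, |Kf A l y| ≤ C := ⟨_, fun y => Kf_abs1 A l y hA⟩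

theorem Kf_mul_int (A l m a b : ℝ) (hA : 0 < A) : Integrable (fun t => Kf A l (a - t) * Kf A m (b - t)) := by
  have := Kf_cont A m
  exact ((Kf_integrable A l hA).comp_sub_left a).mul_bdd (c := A * Real.exp (A * |m|)) (by fun_prop)
    (Eventually.of_forall fun v => Kf_abs1 A m _ hA)

theorem HH_mul_int (A x x' a b : ℝ) (hA : 0 < A) : Integrable (fun t => HH A x (a - t) * HH A x' (b - t)) := by
  have := (((Kf_mul_int A x x' a b hA).add (Kf_mul_int A x (-x') a b hA)).add
    (Kf_mul_int A (-x) x' a b hA)).add (Kf_mul_int A (-x) (-x') a b hA)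
  refine this.congr (Eventually.of_forall fun t => ?_)
  simp only [HH, Pi.add_apply]; ring

noncomputable def JZ (A z c : ℝ) : ℝ := ∫ u in (0:ℝ)..A, gp (u/A)^2 * Real.cosh (z*u) * Real.cos (u*c)

theorem HH_plan (A x x' a b : ℝ) (hA : 0 < A) :
    ∫ t, HH A x (a - t) * HH A x' (b - t) = 2 * Real.pi * (JZ A (x+x') (a-b) + JZ A (x-x') (a-b)) := by
  have e : ∀ t, HH A x (a - t) * HH A x' (b - t) = Kf A x (a-t) * Kf A x' (b-t) + Kf A x (a-t) * Kf A (-x') (b-t)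
      + Kf A (-x) (a-t) * Kf A x' (b-t) + Kf A (-x) (a-t) * Kf A (-x') (b-t) := by
    intro t; simp only [HH]; ring
  simp_rw [e]
  have i1 := Kf_mul_int A x x' a b hA
  have i2 := Kf_mul_int A x (-x') a b hA
  have i3 := Kf_mul_int A (-x) x' a b hA
  have i4 := Kf_mul_int A (-x) (-x') a b hA
  have i12 : Integrable (fun t => Kf A x (a-t) * Kf A x' (b-t) + Kf A x (a-t) * Kf A (-x') (b-t)) := i1.add i2
  have i123 : Integrable (fun t => Kf A x (a-t) * Kf A x' (b-t) + Kf A x (a-t) * Kf A (-x') (b-t)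
      + Kf A (-x) (a-t) * Kf A x' (b-t)) := i12.add i3
  rw [integral_add i123 i4, integral_add i12 i3, integral_add i1 i2,
    Kf_plan _ _ _ _ _ hA, Kf_plan _ _ _ _ _ hA, Kf_plan _ _ _ _ _ hA, Kf_plan _ _ _ _ _ hA]
  have hg := gp_cont
  have key : ∀ z, JZ A z (a-b) * 2 = (∫ u in (0:ℝ)..A, gp (u/A)^2 * Real.exp (-z*u) * Real.cos (u*(a-b))) +
      ∫ u in (0:ℝ)..A, gp (u/A)^2 * Real.exp (-(-z)*u) * Real.cos (u*(a-b)) := by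
    intro z
    rw [← intervalIntegral.integral_add (Continuous.intervalIntegrable (by fun_prop) _ _)
      (Continuous.intervalIntegrable (by fun_prop) _ _), JZ, ← intervalIntegral.integral_mul_const]
    congr 1; ext u
    rw [Real.cosh_eq]; ring_nf
  have k1 := key (x+x')
  have k2 := key (x-x')
  rw [show -(x+x') = -x + -x' by ring] at k1
  rw [show -(x-x') = -x + x' by ring] at k2
  rw [show x + -x' = x - x' by ring]
  rw [show -(x+x') = -x + -x' by ring, show -(x-x') = -x + x' by ring]
  linear_combination (-Real.pi) * k1 + (-Real.pi) * k2

theorem JZ_zero (A z : ℝ) (hA : 0 < A) : A * (181/480) ≤ JZ A z 0 := by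
  have hg := gp_cont
  have h1 : A * (181/480) = ∫ u in (0:ℝ)..A, gp (u/A)^2 := by
    rw [intervalIntegral.integral_comp_div (fun v => gp v^2) hA.ne']
    rw [zero_div, div_self hA.ne', smul_eq_mul]
    congr 1
    have e : ∀ v : ℝ, gp v^2 = 1 - (3/2) * v^1 + (1/16) * v^2 + (3/8) * v^3 + (1/16) * v^4 := by
      intro v; unfold gp; ring
    simp_rw [e]
    rw [intervalIntegral.integral_add, intervalIntegral.integral_add, intervalIntegral.integral_add, intervalIntegral.integral_sub]
    · simp only [intervalIntegral.integral_const_mul, integral_pow, intervalIntegral.integral_const]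
      norm_num
    all_goals exact Continuous.intervalIntegrable (by fun_prop) _ _
  rw [h1, JZ]
  refine intervalIntegral.integral_mono_on hA.le (Continuous.intervalIntegrable (by fun_prop) _ _)
    (Continuous.intervalIntegrable (by fun_prop) _ _) fun u hu => ?_
  have := Real.one_le_cosh (z*u)
  simp only [mul_zero, Real.cos_zero, mul_one]
  nlinarith [sq_nonneg (gp (u/A))]

theorem JZ_nonneg (A z c : ℝ) (hA : 0 < A) (hz : A * |z| ≤ 1/50) : 0 ≤ JZ A z c := by
  have hg := gp_cont
  rcases eq_or_ne c 0 with rfl | hc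
  · exact le_trans (by positivity) (JZ_zero A z hA)
  set p : ℝ → ℝ := fun u => gp (u/A)^2 * Real.cosh (z*u) with hpd
  set g1 : ℝ → ℝ := fun u => 2 * gp (u/A) * ((-3/4 - (u/A)/2)/A) with hg1
  set g2 : ℝ → ℝ := fun u => (1/8 + 9/4*(u/A) + 3/4*(u/A)^2)/A^2 with hg2
  set p1 : ℝ → ℝ := fun u => g1 u * Real.cosh (z*u) + gp (u/A)^2 * (z * Real.sinh (z*u)) with hp1d
  set p2 : ℝ → ℝ := fun u => g2 u * Real.cosh (z*u) + 2 * g1 u * (z * Real.sinh (z*u)) + gp (u/A)^2 * (z^2 * Real.cosh (z*u)) with hp2d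
  have hzu : ∀ u, HasDerivAt (fun u : ℝ => z*u) z u := fun u => by simpa using (hasDerivAt_id u).const_mul z
  have hch : ∀ u, HasDerivAt (fun u => Real.cosh (z*u)) (z * Real.sinh (z*u)) u := fun u =>
    (hzu u).cosh.congr_deriv (by ring)
  have hsh : ∀ u, HasDerivAt (fun u => z * Real.sinh (z*u)) (z^2 * Real.cosh (z*u)) u := fun u =>
    ((hzu u).sinh.const_mul z).congr_deriv (by ring)
  have hgd : ∀ u, HasDerivAt (fun u => gp (u/A)) ((-3/4 - (u/A)/2)/A) u := by
    intro u
    have h : HasDerivAt (fun u : ℝ => u/A) (1/A) u := (hasDerivAt_id u).div_const A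
    have := (h.const_sub 1).mul ((h.div_const 4).const_add 1)
    exact this.congr_deriv (by field_simp; ring)
  have hgd2 : ∀ u, HasDerivAt (fun u => gp (u/A)^2) (g1 u) u := fun u =>
    ((hgd u).pow 2).congr_deriv (by simp [hg1])
  have hgd3 : ∀ u, HasDerivAt g1 (g2 u) u := by
    intro u
    have h : HasDerivAt (fun u : ℝ => (-3/4 - (u/A)/2)/A) (-(1/2)/A^2) u := by
      have := ((((hasDerivAt_id u).div_const A).div_const 2).const_sub (-3/4)).div_const A
      exact this.congr_deriv (by field_simp)
    refine (((hgd u).const_mul 2).mul h).congr_deriv ?_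
    simp only [hg2, gp]
    field_simp; ring
  have hp : ∀ u, HasDerivAt p (p1 u) u := fun u =>
    ((hgd2 u).mul (hch u)).congr_deriv (by simp only [hp1d])
  have hp1 : ∀ u, HasDerivAt p1 (p2 u) u := fun u =>
    (((hgd3 u).mul (hch u)).add ((hgd2 u).mul (hsh u))).congr_deriv (by simp only [hp2d]; ring)
  have hp2 : Continuous p2 := by
    simp only [hp2d, hg2, hg1]; fun_prop
  have hib := ibp2 p p1 p2 hp hp1 hp2 A c
  have hI := intervalIntegral.integral_eq_sub_of_hasDerivAt (a := 0) (b := A) (fun u _ => hp1 u)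
    (Continuous.intervalIntegrable (by fun_prop) _ _)
  have epA : p A = 0 := by simp [hpd, gp, div_self hA.ne']
  have epA1 : p1 A = 0 := by simp [hp1d, hg1, gp, div_self hA.ne']
  rw [epA, epA1] at hib
  rw [epA1] at hI
  have e0 : (∫ u in (0:ℝ)..A, p u * Real.cos (u*c)) = JZ A z c := rfl
  rw [e0] at hib
  have hle : ∫ u in (0:ℝ)..A, p2 u * Real.cos (u*c) ≤ ∫ u in (0:ℝ)..A, p2 u := by
    refine intervalIntegral.integral_mono_on hA.le (Continuous.intervalIntegrable (by fun_prop) _ _)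
      (Continuous.intervalIntegrable (by fun_prop) _ _) fun u hu => ?_
    have hpos : 0 ≤ p2 u := by
      have h0 : 0 ≤ u/A := by have := hu.1; positivity
      have h1 : u/A ≤ 1 := (div_le_one hA).2 hu.2
      have hg := gp_bd _ h0 h1
      set v := u/A
      have hcpos := Real.cosh_pos (z*u)
      have hs : |z * Real.sinh (z*u)| ≤ |z| * Real.cosh (z*u) := by
        rw [abs_mul]
        refine mul_le_mul_of_nonneg_left ?_ (abs_nonneg _)
        rw [abs_le]
        constructor
        · have := Real.cosh_add_sinh (z*u)
          have := Real.exp_pos (z*u)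
          linarith
        · have := Real.cosh_sub_sinh (z*u)
          have := Real.exp_pos (-(z*u))
          linarith
      have hg1b : |g1 u| ≤ (5/2)/A := by
        simp only [hg1]
        rw [abs_mul, abs_div, abs_of_pos hA, ← mul_div_assoc]
        refine div_le_div_of_nonneg_right ?_ hA.le
        rw [abs_of_nonneg (by linarith), abs_of_nonpos (by linarith)]
        nlinarith
      have hm : |2 * g1 u * (z * Real.sinh (z*u))| ≤ 2 * ((5/2)/A) * (|z| * Real.cosh (z*u)) := by
        rw [abs_mul, abs_mul, abs_two]
        gcongr
      have hm2 : 2 * ((5/2)/A) * (|z| * Real.cosh (z*u)) ≤ (1/8)/A^2 * Real.cosh (z*u) := by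
        rw [← mul_assoc]
        refine mul_le_mul_of_nonneg_right ?_ hcpos.le
        rw [le_div_iff₀ (by positivity)]
        calc 2 * ((5/2)/A) * |z| * A^2 = 5 * (A * |z|) := by field_simp
          _ ≤ 1/8 := by linarith
      have hm3 : (1/8)/A^2 * Real.cosh (z*u) ≤ g2 u * Real.cosh (z*u) := by
        refine mul_le_mul_of_nonneg_right ?_ hcpos.le
        simp only [hg2]
        gcongr
        nlinarith
      have hm4 : 0 ≤ gp v^2 * (z^2 * Real.cosh (z*u)) := by positivity
      have := neg_le_of_abs_le hm
      simp only [hp2d]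
      linarith
    have := Real.cos_le_one (u*c)
    nlinarith
  have : 0 ≤ c^2 * JZ A z c := by rw [hib]; linarith
  exact nonneg_of_mul_nonneg_right this (by positivity)

theorem HH_pair_nonneg (A x x' a b : ℝ) (hA : 0 < A) (hx : A * |x| ≤ 1/100) (hx' : A * |x'| ≤ 1/100) :
    0 ≤ ∫ t, HH A x (a - t) * HH A x' (b - t) := by
  rw [HH_plan _ _ _ _ _ hA]
  have h1 : A * |x+x'| ≤ 1/50 := by have := abs_add_le x x'; nlinarith
  have h2 : A * |x-x'| ≤ 1/50 := by have := abs_sub x x'; nlinarith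
  have := JZ_nonneg A _ (a-b) hA h1
  have := JZ_nonneg A _ (a-b) hA h2
  have := Real.pi_pos
  positivity

theorem HH_pair_diag (A x x' a : ℝ) (hA : 0 < A) :
    4 * Real.pi * (A * (181/480)) ≤ ∫ t, HH A x (a - t) * HH A x' (a - t) := by
  rw [HH_plan _ _ _ _ _ hA, sub_self]
  have := JZ_zero A (x+x') hA
  have := JZ_zero A (x-x') hA
  have := Real.pi_pos
  nlinarith

theorem mz_countable : Countable {ρ : ℂ // mz ρ ≠ 0} := by
  have h := (zero_formula 0).summable.countable_support
  refine (h.mono ?_).to_subtype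
  intro ρ hρ
  have hs := mz_strip ρ hρ
  rw [Function.mem_support]
  have h1 : 0 < pk (2 - ρ.re) (ρ.im - 0) := by
    unfold pk; have : 0 < 2 - ρ.re := by linarith
    positivity
  have h2 : 0 < pk (1 + ρ.re) (ρ.im - 0) := by
    unfold pk; have : 0 < 1 + ρ.re := by linarith
    positivity
  have h3 : (0:ℝ) < mz ρ := by exact_mod_cast Nat.pos_of_ne_zero hρ
  positivity

theorem wt_int (A l t : ℝ) (hA : 1 ≤ A) : Integrable (fun s => |Kf A l s| * (1 + √|s+t|)) := by
  have hA0 : 0 < A := by linarith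
  set C := 4 * A * Real.exp (A * |l|) * (1 + A * |l|)^2 with hC
  have hC0 : 0 ≤ C := by positivity
  have hi : Integrable (fun s : ℝ => (1 + ‖s‖)^(-(3/2:ℝ))) := integrable_one_add_norm (by simp; norm_num)
  have hK := Kf_cont A l
  refine (hi.const_mul (2 * C * (1 + √(1+|t|)))).mono' (by fun_prop) (Eventually.of_forall fun s => ?_)
  have h1 := Kf_dec A l s hA0
  rw [← hC] at h1
  have hs0 := abs_nonneg s
  have hw : (0:ℝ) < 1 + |s| := by positivity
  have e : (1 + ‖s‖)^(-(3/2:ℝ)) = √(1+|s|) / (1+|s|)^2 := by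
    rw [Real.norm_eq_abs, Real.sqrt_eq_rpow, ← Real.rpow_natCast, ← Real.rpow_sub hw]; norm_num
  have h2 : C / (1 + (A*s)^2) ≤ 2 * C / (1+|s|)^2 := by
    rw [div_le_div_iff₀ (by positivity) (by positivity)]
    have : (1+|s|)^2 ≤ 2 * (1 + (A*s)^2) := by
      have h3 : s^2 ≤ (A*s)^2 := by rw [mul_pow]; nlinarith [sq_nonneg s, one_le_pow₀ hA (n := 2)]
      nlinarith [sq_abs s, sq_nonneg (1 - |s|)]
    nlinarith
  have h4 : √|s+t| ≤ √(1+|t|) * √(1+|s|) := by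
    rw [← Real.sqrt_mul (by positivity)]
    refine Real.sqrt_le_sqrt ((abs_add_le _ _).trans ?_)
    nlinarith [abs_nonneg t]
  have h5 : 1 ≤ √(1+|s|) := Real.one_le_sqrt.2 (by linarith)
  rw [Real.norm_eq_abs, abs_of_nonneg (by positivity), e]
  calc |Kf A l s| * (1 + √|s+t|) ≤ (2 * C / (1+|s|)^2) * (√(1+|s|) + √(1+|t|) * √(1+|s|)) := by
        refine mul_le_mul (h1.trans h2) (by linarith) (by positivity) (by positivity)
    _ = _ := by ring

theorem pk_shift_neg (b s t : ℝ) : pk b (s+t) = pk b (-t - s) := by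
  unfold pk; congr 2; ring

theorem pk_cont (b : ℝ) (hb : 0 < b) : Continuous (pk b) := by
  unfold pk
  exact Continuous.div (by fun_prop) (by fun_prop) (fun y => by positivity)

theorem pk_le (b y : ℝ) (hb : 0 < b) : pk b y ≤ 1/b := by
  unfold pk; rw [div_le_div_iff₀ (by positivity) hb]; nlinarith [sq_nonneg y]

theorem Kpk_int (A l b c : ℝ) (hA : 0 < A) (hb : 0 < b) : Integrable (fun s => Kf A l s * pk b (c - s)) := by
  have := pk_cont b hb
  refine (Kf_integrable A l hA).mul_bdd (c := 1/b) (by fun_prop) (Eventually.of_forall fun s => ?_)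
  rw [Real.norm_eq_abs, abs_of_nonneg (pk_nonneg _ _ hb.le)]
  exact pk_le b _ hb

theorem dgT_eq (τ : ℝ) (n : ℕ) : dgT τ n = 2*τ^2/((2*n+2)*((2*n+2)^2+τ^2)) := by
  have : (0:ℝ) < 2*n+2 := by positivity
  unfold dgT pk; field_simp; ring

noncomputable def cn (n : ℕ) : ℝ := 2 / ((n:ℝ)+1)^(3/2:ℝ)

theorem cn_summable : Summable cn := by
  have h := (Real.summable_one_div_nat_rpow (p := 3/2)).2 (by norm_num)
  have := ((summable_nat_add_iff 1).2 h).mul_left 2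
  refine this.congr fun n => ?_
  simp [cn]; ring

theorem dgT_bd (τ : ℝ) (n : ℕ) : 0 ≤ dgT τ n ∧ dgT τ n ≤ √|τ| * cn n := by
  rw [dgT_eq]
  refine ⟨by positivity, ?_⟩
  set b : ℝ := 2*n+2
  set c : ℝ := n+1
  have hc : 0 < c := by positivity
  have hbc : b = 2*c := by simp [b, c]; ring
  set x := √|τ|
  set w := √c
  have hw : 0 < w := Real.sqrt_pos.2 hc
  have hx : 0 ≤ x := Real.sqrt_nonneg _
  have hx2 : τ^2 = x^4 := by
    rw [← sq_abs, show x^4 = (x^2)^2 by ring, Real.sq_sqrt (abs_nonneg _)]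
  have hcw : c = w^2 := (Real.sq_sqrt hc.le).symm
  have e : c^(3/2:ℝ) = w^3 := by
    rw [show w^3 = w^(3:ℝ) by norm_cast, show w = c^(1/2:ℝ) from Real.sqrt_eq_rpow c, ← Real.rpow_mul hc.le]; norm_num
  rw [cn, e, hx2, hbc, hcw, ← mul_div_assoc]
  rw [div_le_div_iff₀ (by positivity) (by positivity)]
  have h1 : x^3 * w ≤ 4*w^4 + x^4 := by
    rcases le_total x w with h | h
    · have : x^3 ≤ w^3 := pow_le_pow_left₀ hx h 3
      nlinarith [pow_pos hw 4, pow_nonneg hx 4]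
    · nlinarith [pow_pos hw 4, pow_nonneg hx 3]
  have : 0 ≤ x * w^2 := by positivity
  nlinarith

theorem ld_sum : Summable (fun n : ℕ => vM n / (n:ℝ)^2) := by
  have := (ld_zeta 0).summable
  simpa using this

theorem vM_nonneg (n : ℕ) : 0 ≤ vM n := ArithmeticFunction.vonMangoldt_nonneg

noncomputable def Dg (τ : ℝ) : ℝ := ∑' n, dgT τ n
noncomputable def Cz (τ : ℝ) : ℝ := ∑' n : ℕ, vM n/(n:ℝ)^2 * Real.cos (τ * Real.log n)

theorem Dg_meas : Measurable Dg := by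
  refine measurable_of_tendsto_metrizable (f := fun k τ => ∑ n ∈ Finset.range k, dgT τ n) ?_ ?_
  · intro k
    refine Finset.measurable_sum _ fun n _ => ?_
    have : Continuous (fun τ => dgT τ n) := by
      have := pk_cont (2*(n:ℝ)+2) (by positivity)
      unfold dgT; fun_prop
    exact this.measurable
  · rw [tendsto_pi_nhds]
    intro τ
    exact (dgT_hasSum τ).summable.hasSum.tendsto_sum_nat

theorem Dg_bd (τ : ℝ) : 0 ≤ Dg τ ∧ Dg τ ≤ √|τ| * ∑' n, cn n := by
  refine ⟨tsum_nonneg fun n => (dgT_bd τ n).1, ?_⟩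
  rw [← tsum_mul_left]
  exact (dgT_hasSum τ).summable.tsum_le_tsum (fun n => (dgT_bd τ n).2) (cn_summable.mul_left _)

theorem Cz_cont : Continuous Cz := by
  refine continuous_tsum (u := fun n : ℕ => vM n/(n:ℝ)^2) (fun n => by fun_prop) ld_sum fun n τ => ?_
  have := vM_nonneg n
  rw [norm_mul, Real.norm_eq_abs, Real.norm_eq_abs, abs_of_nonneg (by positivity)]
  exact mul_le_of_le_one_right (by positivity) (Real.abs_cos_le_one _)

theorem Cz_bd (τ : ℝ) : |Cz τ| ≤ ∑' n : ℕ, vM n/(n:ℝ)^2 := by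
  refine tsum_of_norm_bounded (f := fun n : ℕ => vM n/(n:ℝ)^2 * Real.cos (τ * Real.log n)) ld_sum.hasSum fun n => ?_
  have := vM_nonneg n
  rw [norm_mul, Real.norm_eq_abs, Real.norm_eq_abs, abs_of_nonneg (by positivity)]
  exact mul_le_of_le_one_right (by positivity) (Real.abs_cos_le_one _)

noncomputable def aN (A : ℝ) (n : ℕ) : ℝ := vM n / √(n:ℝ) * gc (Real.log n / A)

noncomputable def RR (τ : ℝ) : ℝ := 2 * pk 2 τ + 2 * pk 1 τ + cG + Dg τ - 2 * Cz τ

theorem RR_meas : Measurable RR := by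
  have h1 := (pk_cont 2 (by norm_num)).measurable
  have h2 := (pk_cont 1 (by norm_num)).measurable
  have h3 := Dg_meas
  have h4 := Cz_cont.measurable
  unfold RR; fun_prop

theorem RR_bd : ∃ C, 0 ≤ C ∧ ∀ τ, |RR τ| ≤ C * (1 + √|τ|) := by
  set V := ∑' n : ℕ, vM n/(n:ℝ)^2
  set S := ∑' n, cn n
  have hV : 0 ≤ V := (abs_nonneg _).trans (Cz_bd 0)
  have hS : 0 ≤ S := tsum_nonneg fun n => by unfold cn; positivity
  refine ⟨3 + |cG| + S + 2 * V, by positivity, fun τ => ?_⟩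
  have h1 := pk_le 2 τ (by norm_num)
  have h2 := pk_le 1 τ (by norm_num)
  have h1' := pk_nonneg 2 τ (by norm_num)
  have h2' := pk_nonneg 1 τ (by norm_num)
  have h3 := Dg_bd τ
  have h4 := abs_le.1 (Cz_bd τ)
  have h5 := abs_le.1 (le_refl |cG|)
  have hx := Real.sqrt_nonneg |τ|
  have hc := abs_nonneg cG
  have e1 : 0 ≤ |cG| * √|τ| := by positivity
  have e2 : 0 ≤ V * √|τ| := by positivity
  have h3' : Dg τ ≤ √|τ| * S := h3.2
  unfold RR
  rw [abs_le]
  constructor <;> nlinarith [h3.1]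

theorem explicit_zero (A t : ℝ) (hA : 1 ≤ A) :
    HasSum (fun ρ : ℂ => (mz ρ : ℝ) * (Real.pi * HH A (ρ.re - 1/2) (ρ.im - t)))
      (∫ s, Kf A (-3/2) s * RR (s+t)) := by
  have hA0 : 0 < A := by linarith
  have := mz_countable
  have hsub : Function.support (fun ρ : ℂ => (mz ρ : ℝ) * (Real.pi * HH A (ρ.re - 1/2) (ρ.im - t))) ⊆ {ρ | mz ρ ≠ 0} := by
    intro ρ hρ h
    rw [Function.mem_support] at hρ
    apply hρ; simp [h]
  rw [← hasSum_subtype_iff_of_support_subset hsub]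
  set f : ℂ → ℝ → ℝ := fun ρ τ => (mz ρ : ℝ) * (pk (2 - ρ.re) (ρ.im - τ) + pk (1 + ρ.re) (ρ.im - τ)) with hf
  have hfs : ∀ τ, HasSum (fun ρ : {ρ : ℂ // mz ρ ≠ 0} => f ρ τ) (RR τ) := by
    intro τ
    have hsub2 : Function.support (fun ρ => f ρ τ) ⊆ {ρ | mz ρ ≠ 0} := by
      intro ρ hρ h
      rw [Function.mem_support] at hρ
      apply hρ; simp [hf, h]
    exact (hasSum_subtype_iff_of_support_subset hsub2).2 (zero_formula τ)
  have hf0 : ∀ (ρ : {ρ : ℂ // mz ρ ≠ 0}) τ, 0 ≤ f ρ τ := by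
    intro ρ τ
    have hs := mz_strip ρ ρ.2
    exact mul_nonneg (by positivity) (add_nonneg (pk_nonneg _ _ (by linarith)) (pk_nonneg _ _ (by linarith)))
  have hK := Kf_cont A (-3/2)
  have hfc : ∀ (ρ : {ρ : ℂ // mz ρ ≠ 0}), Continuous (f ρ) := by
    intro ρ
    have hs := mz_strip ρ ρ.2
    have h1 := pk_cont (2 - (ρ:ℂ).re) (by linarith)
    have h2 := pk_cont (1 + (ρ:ℂ).re) (by linarith)
    simp only [hf]; fun_prop
  have := hasSum_integral_of_dominated_convergence (μ := volume)
    (F := fun (ρ : {ρ : ℂ // mz ρ ≠ 0}) s => Kf A (-3/2) s * f ρ (s+t))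
    (f := fun s => Kf A (-3/2) s * RR (s+t)) (fun ρ s => |Kf A (-3/2) s| * f ρ (s+t))
    (fun ρ => by have := hfc ρ; fun_prop)
    (fun ρ => Eventually.of_forall fun s => by
      rw [norm_mul, Real.norm_eq_abs, Real.norm_eq_abs, abs_of_nonneg (hf0 ρ _)])
    (Eventually.of_forall fun s => (hfs (s+t)).summable.mul_left _)
    (by
      have e : (fun s => ∑' ρ : {ρ : ℂ // mz ρ ≠ 0}, |Kf A (-3/2) s| * f ρ (s+t)) = fun s => |Kf A (-3/2) s| * RR (s+t) := by
        ext s; rw [tsum_mul_left, (hfs (s+t)).tsum_eq]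
      rw [e]
      obtain ⟨C, hC, hb⟩ := RR_bd
      have hm := RR_meas
      refine ((wt_int A (-3/2) t hA).const_mul C).mono' (hK.abs.measurable.mul (hm.comp (measurable_id.add_const t))).aestronglyMeasurable (Eventually.of_forall fun s => ?_)
      rw [norm_mul, Real.norm_eq_abs, Real.norm_eq_abs, abs_abs]
      have := hb (s+t)
      nlinarith [abs_nonneg (Kf A (-3/2) s)])
    (Eventually.of_forall fun s => (hfs (s+t)).mul_left _)
  refine this.congr_fun ?_
  intro ρ
  have hs := mz_strip ρ ρ.2
  have e : ∀ s, Kf A (-3/2) s * f ρ (s+t) = (mz ρ : ℝ) * (Kf A (-3/2) s * pk (2 - (ρ:ℂ).re) ((ρ:ℂ).im - t - s) +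
      Kf A (-3/2) s * pk (1 + (ρ:ℂ).re) ((ρ:ℂ).im - t - s)) := by
    intro s
    simp only [hf]
    rw [show (ρ:ℂ).im - (s+t) = (ρ:ℂ).im - t - s by ring]; ring
  simp_rw [e]
  rw [integral_const_mul, integral_add (Kpk_int _ _ _ _ hA0 (by linarith)) (Kpk_int _ _ _ _ hA0 (by linarith)),
    Kf_ker _ _ _ _ hA0 (by linarith), Kf_ker _ _ _ _ hA0 (by linarith)]
  simp only [Function.comp, HH]
  rw [show (-3/2 + (2 - (ρ:ℂ).re)) = -((ρ:ℂ).re - 1/2) by ring, show (-3/2 + (1 + (ρ:ℂ).re)) = (ρ:ℂ).re - 1/2 by ring]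
  ring

theorem explicit_dg (A t : ℝ) (hA : 1 ≤ A) :
    HasSum (fun n : ℕ => Real.pi * (2/(2*(n:ℝ)+2) - 2 * Kf A (2*n+1/2) t)) (∫ s, Kf A (-3/2) s * Dg (s+t)) := by
  have hA0 : 0 < A := by linarith
  have hK := Kf_cont A (-3/2)
  have hc : ∀ n, Continuous (fun τ => dgT τ n) := by
    intro n
    have := pk_cont (2*(n:ℝ)+2) (by positivity)
    unfold dgT; fun_prop
  have := hasSum_integral_of_dominated_convergence (μ := volume)
    (F := fun (n : ℕ) s => Kf A (-3/2) s * dgT (s+t) n)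
    (f := fun s => Kf A (-3/2) s * Dg (s+t)) (fun n s => |Kf A (-3/2) s| * (√|s+t| * cn n))
    (fun n => (hK.mul ((hc n).comp (continuous_id.add continuous_const))).aestronglyMeasurable)
    (fun n => Eventually.of_forall fun s => by
      have := dgT_bd (s+t) n
      rw [norm_mul, Real.norm_eq_abs, Real.norm_eq_abs, abs_of_nonneg this.1]
      exact mul_le_mul_of_nonneg_left this.2 (abs_nonneg _))
    (Eventually.of_forall fun s => (cn_summable.mul_left _).mul_left _)
    (by
      have e : (fun s => ∑' n, |Kf A (-3/2) s| * (√|s+t| * cn n)) = fun s => |Kf A (-3/2) s| * (√|s+t| * ∑' n, cn n) := by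
        ext s; rw [tsum_mul_left, tsum_mul_left]
      rw [e]
      have hS : 0 ≤ ∑' n, cn n := tsum_nonneg fun n => by unfold cn; positivity
      refine ((wt_int A (-3/2) t hA).const_mul (∑' n, cn n)).mono' (by fun_prop) (Eventually.of_forall fun s => ?_)
      rw [Real.norm_eq_abs, abs_of_nonneg (by positivity)]
      have : 0 ≤ |Kf A (-3/2) s| * ∑' n, cn n := by positivity
      nlinarith)
    (Eventually.of_forall fun s => (dgT_hasSum (s+t)).summable.hasSum.mul_left _)
  refine this.congr_fun ?_
  intro n
  have e : ∀ s, Kf A (-3/2) s * dgT (s+t) n = Kf A (-3/2) s * (2/(2*(n:ℝ)+2)) - 2 * (Kf A (-3/2) s * pk (2*n+2) (-t - s)) := by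
    intro s
    rw [dgT, pk_shift_neg]; ring
  simp_rw [e]
  have hKi := Kf_inv A (-3/2) 0 hA0
  simp [EE, gc, gp] at hKi
  rw [integral_sub ((Kf_integrable _ _ hA0).mul_const _) ((Kpk_int _ _ _ _ hA0 (by positivity)).const_mul 2),
    integral_mul_const, integral_const_mul, Kf_ker _ _ _ _ hA0 (by positivity), Kf_even,
    show (-3/2 + (2*(n:ℝ)+2)) = 2*n+1/2 by ring]
  have : ∫ s, Kf A (-3/2) s = Real.pi := by simpa using hKi
  rw [this]; ring

theorem explicit_pr (A t : ℝ) (hA : 1 ≤ A) :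
    HasSum (fun n : ℕ => Real.pi * (aN A n * Real.cos (t * Real.log n))) (∫ s, Kf A (-3/2) s * Cz (s+t)) := by
  have hA0 : 0 < A := by linarith
  have hK := Kf_cont A (-3/2)
  have := hasSum_integral_of_dominated_convergence (μ := volume)
    (F := fun (n : ℕ) s => Kf A (-3/2) s * (vM n/(n:ℝ)^2 * Real.cos ((s+t) * Real.log n)))
    (f := fun s => Kf A (-3/2) s * Cz (s+t)) (fun n s => |Kf A (-3/2) s| * (vM n/(n:ℝ)^2))
    (fun n => by fun_prop)
    (fun n => Eventually.of_forall fun s => by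
      have := vM_nonneg n
      rw [norm_mul, norm_mul, Real.norm_eq_abs, Real.norm_eq_abs, Real.norm_eq_abs, abs_of_nonneg (by positivity : 0 ≤ vM n/(n:ℝ)^2)]
      refine mul_le_mul_of_nonneg_left ?_ (abs_nonneg _)
      exact mul_le_of_le_one_right (by positivity) (Real.abs_cos_le_one _))
    (Eventually.of_forall fun s => ld_sum.mul_left _)
    (by
      simp_rw [tsum_mul_left]
      exact (Kf_integrable _ _ hA0).abs.mul_const _)
    (Eventually.of_forall fun s => (ld_zeta (s+t)).summable.hasSum.mul_left _)
  refine this.congr_fun ?_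
  intro n
  rcases Nat.eq_zero_or_pos n with rfl | hn
  · simp [vM, aN]
  have hn0 : (0:ℝ) < n := by exact_mod_cast hn
  have hl : 0 ≤ Real.log n := Real.log_nonneg (by exact_mod_cast hn)
  have e : ∀ s, Kf A (-3/2) s * (vM n/(n:ℝ)^2 * Real.cos ((s+t) * Real.log n)) =
      vM n/(n:ℝ)^2 * (Kf A (-3/2) s * Real.cos (Real.log n * (s+t))) := by
    intro s; rw [mul_comm (s+t)]; ring
  simp_rw [e]
  rw [integral_const_mul, Kf_inv_shift _ _ _ _ hA0, EE, abs_of_nonneg hl]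
  have e3 : Real.exp (-(-3/2) * Real.log n) = (n:ℝ)^2 / √n := by
    rw [show -(-3/2) * Real.log n = Real.log n * 2 - Real.log n * (1/2) by ring, Real.exp_sub, Real.sqrt_eq_rpow,
      Real.rpow_def_of_pos hn0, show Real.log n * 2 = Real.log n + Real.log n by ring, Real.exp_add, Real.exp_log hn0]
    ring_nf
  rw [e3, aN, mul_comm t]
  field_simp

noncomputable def SG (A t : ℝ) : ℝ := ∑' n : ℕ, (2/(2*(n:ℝ)+2) - 2 * Kf A (2*n+1/2) t)
noncomputable def DD (A t : ℝ) : ℝ := ∑' n : ℕ, aN A n * Real.cos (t * Real.log n)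

theorem explicit_formula (A t : ℝ) (hA : 1 ≤ A) :
    HasSum (fun ρ : ℂ => (mz ρ : ℝ) * HH A (ρ.re - 1/2) (ρ.im - t))
      (2 * Kf A (1/2) t + 2 * Kf A (-1/2) t + cG + SG A t - 2 * DD A t) := by
  have hA0 : 0 < A := by linarith
  have hpi := Real.pi_pos
  have h := (explicit_zero A t hA).mul_left (Real.pi⁻¹)
  have hd := (explicit_dg A t hA).mul_left (Real.pi⁻¹)
  have hp := (explicit_pr A t hA).mul_left (Real.pi⁻¹)
  simp_rw [inv_mul_cancel_left₀ hpi.ne'] at hd hp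
  have hd' := hd.tsum_eq
  have hp' := hp.tsum_eq
  have hK := Kf_cont A (-3/2)
  have i1 : Integrable (fun s => Kf A (-3/2) s * pk 2 (-t - s)) := Kpk_int _ _ _ _ hA0 (by norm_num)
  have i2 : Integrable (fun s => Kf A (-3/2) s * pk 1 (-t - s)) := Kpk_int _ _ _ _ hA0 (by norm_num)
  have i3 : Integrable (fun s => Kf A (-3/2) s * cG) := (Kf_integrable _ _ hA0).mul_const _
  have i4 : Integrable (fun s => Kf A (-3/2) s * Dg (s+t)) := by
    have hm := Dg_meas
    have hS : 0 ≤ ∑' n, cn n := tsum_nonneg fun n => by unfold cn; positivity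
    refine ((wt_int A (-3/2) t hA).const_mul (∑' n, cn n)).mono' (hK.measurable.mul (hm.comp (measurable_id.add_const t))).aestronglyMeasurable (Eventually.of_forall fun s => ?_)
    have := Dg_bd (s+t)
    rw [norm_mul, Real.norm_eq_abs, Real.norm_eq_abs, abs_of_nonneg this.1]
    have : Dg (s+t) ≤ (1 + √|s+t|) * ∑' n, cn n := by nlinarith [this.2]
    calc _ ≤ |Kf A (-3/2) s| * ((1 + √|s+t|) * ∑' n, cn n) := by gcongr
      _ = _ := by ring
  have i5 : Integrable (fun s => Kf A (-3/2) s * Cz (s+t)) := by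
    have := Cz_cont
    exact (Kf_integrable _ _ hA0).mul_bdd (by fun_prop) (Eventually.of_forall fun s => Cz_bd (s+t))
  have e : (fun s => Kf A (-3/2) s * RR (s+t)) = fun s => (((2 * (Kf A (-3/2) s * pk 2 (-t - s)) + 2 * (Kf A (-3/2) s * pk 1 (-t - s)))
      + Kf A (-3/2) s * cG) + Kf A (-3/2) s * Dg (s+t)) - 2 * (Kf A (-3/2) s * Cz (s+t)) := by
    ext s; rw [RR, pk_shift_neg, pk_shift_neg]; ring
  have j1 : Integrable (fun s => 2 * (Kf A (-3/2) s * pk 2 (-t - s))) := i1.const_mul 2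
  have j2 : Integrable (fun s => 2 * (Kf A (-3/2) s * pk 1 (-t - s))) := i2.const_mul 2
  have j12 : Integrable (fun s => 2 * (Kf A (-3/2) s * pk 2 (-t - s)) + 2 * (Kf A (-3/2) s * pk 1 (-t - s))) := j1.add j2
  have j3 : Integrable (fun s => 2 * (Kf A (-3/2) s * pk 2 (-t - s)) + 2 * (Kf A (-3/2) s * pk 1 (-t - s)) + Kf A (-3/2) s * cG) := j12.add i3
  have j4 : Integrable (fun s => 2 * (Kf A (-3/2) s * pk 2 (-t - s)) + 2 * (Kf A (-3/2) s * pk 1 (-t - s)) + Kf A (-3/2) s * cG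
    + Kf A (-3/2) s * Dg (s+t)) := j3.add i4
  rw [e, integral_sub j4 (i5.const_mul 2), integral_add j3 i4, integral_add j12 i3, integral_add j1 j2,
    integral_const_mul, integral_const_mul, integral_const_mul, integral_mul_const, Kf_ker _ _ _ _ hA0 (by norm_num),
    Kf_ker _ _ _ _ hA0 (by norm_num), Kf_even, Kf_even] at h
  have hKi := Kf_inv A (-3/2) 0 hA0
  have : ∫ s, Kf A (-3/2) s = Real.pi := by simpa [EE, gc, gp] using hKi
  rw [this] at h
  have e2 : (2 * Kf A (1/2) t + 2 * Kf A (-1/2) t + cG + SG A t - 2 * DD A t) =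
      Real.pi⁻¹ * (2 * (Real.pi * Kf A (-3/2 + 2) t) + 2 * (Real.pi * Kf A (-3/2 + 1) t) + Real.pi * cG +
        (∫ s, Kf A (-3/2) s * Dg (s+t)) - 2 * ∫ s, Kf A (-3/2) s * Cz (s+t)) := by
    rw [SG, DD, hd', hp']
    norm_num
    field_simp
  rw [e2]
  refine h.congr_fun fun ρ => ?_
  field_simp

noncomputable def Gx (s x : ℝ) : ℝ := -(1/2) * Real.log (1 + s^2/x^2)

theorem Gx_deriv (s x : ℝ) (hx : 0 < x) : HasDerivAt (Gx s) (s^2/(x*(x^2+s^2))) x := by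
  have h1 : HasDerivAt (fun x : ℝ => s^2/x^2) (s^2 * (-(2*x)/(x^2)^2)) x := by
    have := (((hasDerivAt_pow 2 x).inv (by positivity : x^2 ≠ 0)).const_mul (s^2))
    refine (this.congr_deriv (by simp)).congr_of_eventuallyEq ?_
    exact Eventually.of_forall fun y => by simp [div_eq_mul_inv]
  have hpos : 0 < 1 + s^2/x^2 := by positivity
  refine (((h1.const_add 1).log hpos.ne').const_mul (-(1/2))).congr_deriv ?_
  have : x^2 + s^2 ≠ 0 := by positivity
  field_simp

theorem Gx_step (s : ℝ) (n : ℕ) : dgT (2*s) (n+1) ≤ Gx s (n+2) - Gx s (n+1) ∧ Gx s (n+2) - Gx s (n+1) ≤ dgT (2*s) n := by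
  have hn : (0:ℝ) ≤ n := by positivity
  obtain ⟨c, hc, h⟩ := exists_hasDerivAt_eq_slope (Gx s) (fun x => s^2/(x*(x^2+s^2))) (by linarith : (n:ℝ)+1 < n+2)
    (fun x hx => (Gx_deriv s x (by have := hx.1; linarith)).continuousAt.continuousWithinAt)
    (fun x hx => Gx_deriv s x (by have := hx.1; linarith))
  rw [show (n:ℝ)+2-(n+1) = 1 by ring, div_one] at h
  rw [← h, dgT_eq, dgT_eq]
  have hc0 : 0 < c := by have := hc.1; linarith
  have key : ∀ a b : ℝ, 0 < a → a ≤ b → s^2/(b*(b^2+s^2)) ≤ s^2/(a*(a^2+s^2)) := by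
    intro a b ha hab
    have : 0 < b := by linarith
    gcongr
  have e : ∀ a : ℝ, 0 < a → s^2/(a*(a^2+s^2)) = 2*(2*s)^2/((2*a)*((2*a)^2+(2*s)^2)) := by
    intro a ha; field_simp
  constructor
  · have := key c (n+2) hc0 hc.2.le
    rw [e (n+2) (by positivity)] at this
    convert this using 3 <;> (push_cast; ring)
  · have := key (n+1) c (by positivity) hc.1.le
    rw [e (n+1) (by positivity)] at this
    convert this using 3 <;> (push_cast; ring)

theorem Dg_log (s : ℝ) : 1/2 * Real.log (1+s^2) ≤ Dg (2*s) ∧ Dg (2*s) ≤ 1 + 1/2 * Real.log (1+s^2) := by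
  have hs := (dgT_hasSum (2*s)).summable
  have hG1 : Gx s 1 = -(1/2 * Real.log (1+s^2)) := by simp [Gx]
  have hGn : ∀ x, Gx s x ≤ 0 := by
    intro x
    have : 0 ≤ Real.log (1 + s^2/x^2) := Real.log_nonneg (by have : 0 ≤ s^2/x^2 := by positivity
                                                             linarith)
    unfold Gx; linarith
  have hlow : ∀ N : ℕ, Gx s (N+1) - Gx s 1 ≤ ∑ n ∈ Finset.range N, dgT (2*s) n := by
    intro N
    induction N with
    | zero => simp
    | succ k ih =>
      rw [Finset.sum_range_succ]
      have := (Gx_step s k).2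
      push_cast
      rw [show (k:ℝ)+1+1 = k+2 by ring]; linarith
  have hup : ∀ N : ℕ, ∑ n ∈ Finset.range N, dgT (2*s) (n+1) ≤ Gx s (N+1) - Gx s 1 := by
    intro N
    induction N with
    | zero => simp
    | succ k ih =>
      rw [Finset.sum_range_succ]
      have := (Gx_step s k).1
      push_cast
      rw [show (k:ℝ)+1+1 = k+2 by ring]; linarith
  have hlim : Tendsto (fun N : ℕ => Gx s ((N:ℝ)+1)) atTop (𝓝 0) := by
    have h1 : Tendsto (fun N : ℕ => ((N:ℝ)+1)^2) atTop atTop := by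
      refine (tendsto_pow_atTop (by norm_num)).comp ?_
      exact tendsto_atTop_add_const_right _ _ tendsto_natCast_atTop_atTop
    have h2 := (tendsto_const_nhds (x := s^2)).div_atTop h1
    have h3 := ((h2.const_add 1).log (by norm_num)).const_mul (-(1/2))
    simpa [Gx] using h3
  constructor
  · have h := hs.hasSum.tendsto_sum_nat
    have := le_of_tendsto_of_tendsto (hlim.sub_const (Gx s 1)) h (Eventually.of_forall hlow)
    rw [hG1] at this
    unfold Dg; linarith
  · unfold Dg
    rw [hs.tsum_eq_zero_add]
    have h0 : dgT (2*s) 0 ≤ 1 := by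
      rw [dgT_eq, div_le_one (by positivity)]; push_cast; nlinarith [sq_nonneg s]
    have h1 : ∑' n, dgT (2*s) (n+1) ≤ 1/2 * Real.log (1+s^2) := by
      refine Real.tsum_le_of_sum_range_le (fun n => (dgT_bd _ _).1) fun N => ?_
      have := hup N
      have := hGn (N+1)
      linarith
    linarith

theorem Dg_log' (t : ℝ) (ht : 1 ≤ t) : |Dg t - Real.log t| ≤ 2 := by
  have h := Dg_log (t/2)
  rw [show 2*(t/2) = t by ring] at h
  have h1 : Real.log (1+(t/2)^2) ≤ 2 * Real.log t + 1 := by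
    have : Real.log (1+(t/2)^2) ≤ Real.log (t^2 * 2) := Real.log_le_log (by positivity) (by nlinarith)
    rw [Real.log_mul (by positivity) (by norm_num), Real.log_pow] at this
    have := Real.log_two_lt_d9
    push_cast at *; linarith
  have h2 : 2 * Real.log t - 2 ≤ Real.log (1+(t/2)^2) := by
    have : Real.log (t^2 / 4) ≤ Real.log (1+(t/2)^2) := Real.log_le_log (by positivity) (by nlinarith)
    rw [Real.log_div (by positivity) (by norm_num), Real.log_pow, show (4:ℝ) = 2^2 by norm_num, Real.log_pow] at this
    have := Real.log_two_lt_d9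
    push_cast at *; linarith
  rw [abs_le]; constructor <;> linarith [h.1, h.2]

theorem gc_lip (v : ℝ) (hv : 0 ≤ v) : |gc v - 1| ≤ v := by
  have h1 := gc_nonneg v
  have h2 := gc_le_one v
  rw [abs_le]
  refine ⟨?_, by linarith⟩
  rcases le_total v 1 with h | h
  · rw [gc_eq v hv h]; unfold gp; nlinarith
  · linarith

theorem int_u_exp (l : ℝ) (hl : 0 < l) : ∫ u in Ioi (0:ℝ), u * Real.exp (-l*u) = 1/l^2 := by
  have := Real.integral_rpow_mul_exp_neg_mul_Ioi (a := 2) (r := l) (by norm_num) hl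
  norm_num at this
  simpa using this

theorem intOn_u_exp (l : ℝ) (hl : 0 < l) : IntegrableOn (fun u : ℝ => u * Real.exp (-l*u)) (Ioi 0) := by
  have := integrableOn_rpow_mul_exp_neg_mul_rpow (s := 1) (p := 1) (b := l) (by norm_num) (by norm_num) hl
  simpa using this

theorem Kf_pk (A l t : ℝ) (hA : 0 < A) (hl : 0 < l) : |Kf A l t - pk l t| ≤ 1/(A*l^2) := by
  rw [← Kf_half A l t hA, ← pk_lap l t hl]
  have i1 : IntegrableOn (fun u => gc (u/A) * Real.exp (-l*u) * Real.cos (u*t)) (Ioi 0) :=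
    (gcexp_intOn A l hA).mul_bdd (c := 1) (by fun_prop) (Eventually.of_forall fun v => Real.abs_cos_le_one _)
  have i2 : IntegrableOn (fun u => Real.exp (-l*u) * Real.cos (u*t)) (Ioi 0) :=
    (exp_intOn l hl).mul_bdd (c := 1) (by fun_prop) (Eventually.of_forall fun v => Real.abs_cos_le_one _)
  rw [← integral_sub i1 i2]
  have e : 1/(A*l^2) = ∫ u in Ioi (0:ℝ), 1/A * (u * Real.exp (-l*u)) := by
    rw [integral_const_mul, int_u_exp l hl]; field_simp
  rw [e]
  rw [← Real.norm_eq_abs]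
  refine norm_integral_le_of_norm_le ((intOn_u_exp l hl).const_mul _) ?_
  refine (ae_restrict_iff' measurableSet_Ioi).2 (Eventually.of_forall fun u hu => ?_)
  have hu : 0 < u := hu
  have hg := gc_lip (u/A) (by positivity)
  rw [show gc (u/A) * Real.exp (-l*u) * Real.cos (u*t) - Real.exp (-l*u) * Real.cos (u*t) =
    (gc (u/A) - 1) * Real.exp (-l*u) * Real.cos (u*t) by ring, norm_mul, norm_mul, Real.norm_eq_abs, Real.norm_eq_abs,
    Real.norm_eq_abs, abs_of_pos (Real.exp_pos _)]
  calc _ ≤ u/A * Real.exp (-l*u) * 1 := by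
        gcongr
        exact Real.abs_cos_le_one _
    _ = _ := by ring

theorem pk_diff (b c t : ℝ) (hb : 0 < b) (hbc : b ≤ c) : |pk b t - pk c t| ≤ (c - b)/b^2 := by
  have hc : 0 < c := by linarith
  have e : pk b t - pk c t = (c-b) * (b*c - t^2) / ((b^2+t^2)*(c^2+t^2)) := by
    unfold pk; field_simp; ring
  rw [e, abs_div, abs_mul, abs_of_nonneg (by linarith : 0 ≤ c - b), abs_of_pos (by positivity : 0 < (b^2+t^2)*(c^2+t^2))]
  rw [div_le_div_iff₀ (by positivity) (by positivity)]
  have h1 : |b*c - t^2| ≤ c^2 + t^2 := by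
    rw [abs_le]; constructor <;> nlinarith [sq_nonneg t]
  have h2 : |b*c - t^2| * b^2 ≤ (b^2+t^2)*(c^2+t^2) := by
    have h3 : b^2 ≤ b^2+t^2 := by nlinarith [sq_nonneg t]
    calc _ ≤ (c^2+t^2) * (b^2+t^2) := by gcongr
      _ = _ := by ring
  calc (c-b) * |b*c - t^2| * b^2 = (c-b) * (|b*c - t^2| * b^2) := by ring
    _ ≤ _ := by gcongr

noncomputable def qn (n : ℕ) : ℝ := 5 / (2*(n:ℝ)+1/2)^2

theorem qn_summable : Summable qn := by
  have h := (summable_nat_add_iff 1).2 (Real.summable_one_div_nat_pow (p := 2).2 (by norm_num))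
  refine Summable.of_nonneg_of_le (fun n => by unfold qn; positivity) (fun n => ?_) (h.mul_left 20)
  unfold qn
  rw [← mul_div_assoc, mul_one, div_le_div_iff₀ (by positivity) (by positivity)]
  push_cast
  have : (0:ℝ) ≤ n := by positivity
  nlinarith

theorem SG_Dg (A t : ℝ) (hA : 1 ≤ A) : |SG A t - Dg t| ≤ ∑' n, qn n := by
  have hA0 : 0 < A := by linarith
  have h1 : Summable (fun n : ℕ => (2/(2*(n:ℝ)+2) - 2 * Kf A (2*n+1/2) t)) := by
    have := (explicit_dg A t hA).summable.mul_left (Real.pi⁻¹)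
    simpa [inv_mul_cancel_left₀ Real.pi_pos.ne'] using this
  rw [SG, Dg, ← h1.tsum_sub (dgT_hasSum t).summable]
  rw [← Real.norm_eq_abs]
  refine tsum_of_norm_bounded qn_summable.hasSum fun n => ?_
  have hb : (0:ℝ) < 2*n+1/2 := by positivity
  have k1 := Kf_pk A (2*n+1/2) t hA0 hb
  have k2 := pk_diff (2*n+1/2) (2*n+2) t hb (by linarith)
  have k3 : 1/(A*(2*(n:ℝ)+1/2)^2) ≤ 1/(2*(n:ℝ)+1/2)^2 := by
    apply one_div_le_one_div_of_le (by positivity)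
    nlinarith [sq_nonneg (2*(n:ℝ)+1/2)]
  have e : (2/(2*(n:ℝ)+2) - 2 * Kf A (2*n+1/2) t) - dgT t n =
      -2 * ((Kf A (2*n+1/2) t - pk (2*n+1/2) t) + (pk (2*n+1/2) t - pk (2*n+2) t)) := by
    unfold dgT; ring
  rw [e, Real.norm_eq_abs, abs_mul, abs_neg, abs_two]
  have := abs_add_le (Kf A (2*n+1/2) t - pk (2*n+1/2) t) (pk (2*n+1/2) t - pk (2*n+2) t)
  have e2 : qn n = 2 * (1/(2*(n:ℝ)+1/2)^2 + ((2*n+2) - (2*n+1/2))/(2*(n:ℝ)+1/2)^2) := by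
    unfold qn; field_simp; ring
  rw [e2]; linarith

theorem S_est : ∃ C, 0 ≤ C ∧ ∀ A t : ℝ, 1 ≤ A → Real.exp A ≤ t →
    |∑' ρ : ℂ, (mz ρ : ℝ) * HH A (ρ.re - 1/2) (ρ.im - t) - (Real.log t - 2 * DD A t)| ≤ C := by
  have hq : 0 ≤ ∑' n, qn n := tsum_nonneg fun n => by unfold qn; positivity
  refine ⟨12 + 18 + |cG| + ∑' n, qn n + 2, by positivity, fun A t hA ht => ?_⟩
  have hA0 : 0 < A := by linarith
  have ht1 : 1 ≤ t := le_trans (Real.one_le_exp hA0.le) ht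
  rw [(explicit_formula A t hA).tsum_eq]
  have h1 := SG_Dg A t hA
  have h2 := Dg_log' t ht1
  have h3 := Kf_pk A (1/2) t hA0 (by norm_num)
  have h4 := pk_le (1/2) t (by norm_num)
  have h5 := pk_nonneg (1/2) t (by norm_num)
  have h6 : 1/(A*(1/2)^2) ≤ 4 := by
    rw [div_le_iff₀ (by positivity)]; nlinarith
  have h7 : |Kf A (-1/2) t| ≤ 9 := by
    refine (Kf_dec A (-1/2) t hA0).trans ?_
    have e : |(-1/2:ℝ)| = 1/2 := by rw [abs_of_neg] <;> norm_num
    rw [e, div_le_iff₀ (by positivity)]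
    have hA2 : A ≤ t := by have := Real.add_one_le_exp A; linarith
    have h8 : Real.exp (A*(1/2)) ≤ t := le_trans (Real.exp_le_exp.2 (by linarith)) ht
    have h9 : (1 + A*(1/2))^2 ≤ 9/4*A^2 := by nlinarith
    have he := Real.exp_pos (A*(1/2))
    calc 4 * A * Real.exp (A*(1/2)) * (1 + A*(1/2))^2 ≤ 4 * t * t * (9/4*A^2) := by gcongr
      _ = 9 * (A*t)^2 := by ring
      _ ≤ _ := by linarith
  have b1 := abs_le.1 h1
  have b2 := abs_le.1 h2
  have b3 := abs_le.1 h3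
  have b7 := abs_le.1 h7
  have b8 := abs_le.1 (le_refl |cG|)
  norm_num at h4
  rw [abs_le]
  constructor <;> linarith [b1.1, b1.2, b2.1, b2.2, b3.1, b3.2, b7.1, b7.2, b8.1, b8.2]

theorem CNT : ∃ C, 0 < C ∧ ∀ t : ℝ, Summable (fun ρ : ℂ => (mz ρ : ℝ) / (1 + (ρ.im - t)^2)) ∧
    ∑' ρ : ℂ, (mz ρ : ℝ) / (1 + (ρ.im - t)^2) ≤ C * (1 + Real.log (1+t^2)) := by
  set V := ∑' n : ℕ, vM n/(n:ℝ)^2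
  have hV : 0 ≤ V := (abs_nonneg _).trans (Cz_bd 0)
  refine ⟨4 * (4 + |cG| + 2*V + 1), by positivity, fun t => ?_⟩
  have hz := zero_formula t
  have hle : ∀ ρ : ℂ, (mz ρ : ℝ) / (1 + (ρ.im - t)^2) ≤ 4 * ((mz ρ : ℝ) * (pk (2 - ρ.re) (ρ.im - t) + pk (1 + ρ.re) (ρ.im - t))) := by
    intro ρ
    by_cases h0 : mz ρ = 0
    · simp [h0]
    have hs := mz_strip ρ h0
    have h1 : 1/(1 + (ρ.im - t)^2) ≤ 4 * pk (2 - ρ.re) (ρ.im - t) := by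
      unfold pk
      have : 0 < 2 - ρ.re := by linarith
      rw [← mul_div_assoc, div_le_div_iff₀ (by positivity) (by positivity)]
      nlinarith [sq_nonneg (ρ.im - t)]
    have h2 : 0 ≤ pk (1 + ρ.re) (ρ.im - t) := pk_nonneg _ _ (by linarith)
    have hm : (0:ℝ) ≤ mz ρ := by positivity
    calc (mz ρ : ℝ) / (1 + (ρ.im - t)^2) = mz ρ * (1/(1 + (ρ.im - t)^2)) := by ring
      _ ≤ mz ρ * (4 * pk (2 - ρ.re) (ρ.im - t) + 4 * pk (1 + ρ.re) (ρ.im - t)) := by gcongr; linarith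
      _ = _ := by ring
  have hsum : Summable (fun ρ : ℂ => (mz ρ : ℝ) / (1 + (ρ.im - t)^2)) :=
    Summable.of_nonneg_of_le (fun ρ => by positivity) hle (hz.summable.mul_left 4)
  refine ⟨hsum, (hsum.tsum_le_tsum hle (hz.summable.mul_left 4)).trans ?_⟩
  rw [tsum_mul_left, hz.tsum_eq, mul_assoc]
  refine mul_le_mul_of_nonneg_left ?_ (by norm_num)
  have h1 := pk_le 2 t (by norm_num)
  have h2 := pk_le 1 t (by norm_num)
  have h3 := (Dg_log (t/2)).2
  rw [show 2*(t/2) = t by ring] at h3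
  have h3' : Real.log (1+(t/2)^2) ≤ Real.log (1+t^2) := Real.log_le_log (by positivity) (by nlinarith [sq_nonneg t])
  have hl : 0 ≤ Real.log (1+t^2) := Real.log_nonneg (by nlinarith [sq_nonneg t])
  have h4 := neg_le_of_abs_le (Cz_bd t)
  have h5 := le_abs_self cG
  have h6 := abs_nonneg cG
  have e1 : ∑' n, dgT t n = Dg t := rfl
  have e2 : ∑' n : ℕ, vM n/(n:ℝ)^2 * Real.cos (t * Real.log n) = Cz t := rfl
  rw [e1, e2]
  have h4' : -V ≤ Cz t := h4
  have : 0 ≤ (|cG| + 2*V) * Real.log (1+t^2) := by positivity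
  nlinarith

noncomputable def MM (N : ℕ) : ℝ := ∑ n ∈ Finset.Ioc 0 N, vM n / n

theorem sum_log_eq (N : ℕ) : ∑ n ∈ Finset.Ioc 0 N, vM n * ((N / n : ℕ) : ℝ) = Real.log (N.factorial) := by
  have h := ArithmeticFunction.sum_Ioc_mul_zeta_eq_sum (R := ℝ) ArithmeticFunction.vonMangoldt N
  rw [ArithmeticFunction.vonMangoldt_mul_zeta] at h
  unfold vM
  rw [← h]
  simp only [ArithmeticFunction.log_apply]
  induction N with
  | zero => simp
  | succ k ih =>
    rw [Finset.sum_Ioc_succ_top (by omega), Nat.factorial_succ]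
    push_cast
    rw [Real.log_mul (by positivity) (by positivity), ih]
    · ring
    · have h := ArithmeticFunction.sum_Ioc_mul_zeta_eq_sum (R := ℝ) ArithmeticFunction.vonMangoldt k
      rw [ArithmeticFunction.vonMangoldt_mul_zeta] at h
      exact h

theorem MM_bd (N : ℕ) (hN : 1 ≤ N) : Real.log N - 1 ≤ MM N ∧ MM N ≤ Real.log N + 6 := by
  have hN0 : (0:ℝ) < N := by exact_mod_cast hN
  have h := sum_log_eq N
  have e : N * MM N = ∑ n ∈ Finset.Ioc 0 N, vM n * ((N:ℝ)/n) := by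
    unfold MM; rw [Finset.mul_sum]; refine Finset.sum_congr rfl fun n _ => by ring
  have hlow : Real.log (N.factorial) ≤ N * MM N := by
    rw [← h, e]
    refine Finset.sum_le_sum fun n hn => mul_le_mul_of_nonneg_left Nat.cast_div_le (vM_nonneg n)
  have hup : N * MM N ≤ Real.log (N.factorial) + Chebyshev.psi N := by
    rw [← h, e, Chebyshev.psi, Nat.floor_natCast, ← Finset.sum_add_distrib]
    refine Finset.sum_le_sum fun n hn => ?_
    have hn0 : (0:ℝ) < n := by exact_mod_cast (Finset.mem_Ioc.1 hn).1
    have h1 : (N:ℝ)/n ≤ ((N / n : ℕ) : ℝ) + 1 := by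
      rw [← Nat.floor_div_eq_div (K := ℝ)]
      exact (Nat.lt_floor_add_one _).le
    have := mul_le_mul_of_nonneg_left h1 (vM_nonneg n)
    have e2 : (ArithmeticFunction.vonMangoldt n : ℝ) = vM n := rfl
    rw [e2]; linarith
  have hpsi := Chebyshev.psi_le_const_mul_self hN0.le
  have hl4 : Real.log 4 ≤ 2 := by
    rw [show (4:ℝ) = 2^2 by norm_num, Real.log_pow]; have := Real.log_two_lt_d9; push_cast; linarith
  have hst := Stirling.le_log_factorial_stirling (n := N) (by omega)
  have hfac : Real.log (N.factorial) ≤ N * Real.log N := by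
    rw [← Real.log_pow]
    refine Real.log_le_log (by positivity) ?_
    exact_mod_cast Nat.factorial_le_pow N
  have hlN : 0 ≤ Real.log N := Real.log_nonneg (by exact_mod_cast hN)
  have hlp : 0 ≤ Real.log (2*Real.pi) := Real.log_nonneg (by have := Real.pi_gt_three; linarith)
  constructor
  · have : N * (Real.log N - 1) ≤ N * MM N := by nlinarith
    exact le_of_mul_le_mul_left this hN0
  · have : N * MM N ≤ N * (Real.log N + 6) := by nlinarith
    exact le_of_mul_le_mul_left this hN0

theorem MM_exp (u : ℝ) (hu : 0 ≤ u) : |MM ⌊Real.exp u⌋₊ - u| ≤ 6 := by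
  have h1 : 1 ≤ Real.exp u := Real.one_le_exp hu
  have hN : 1 ≤ ⌊Real.exp u⌋₊ := Nat.one_le_floor_iff _ |>.2 h1
  have h := MM_bd _ hN
  have hN' : (1:ℝ) ≤ (⌊Real.exp u⌋₊ : ℝ) := by exact_mod_cast hN
  have hle : ((⌊Real.exp u⌋₊ : ℕ) : ℝ) ≤ Real.exp u := Nat.floor_le (by positivity)
  have hge : Real.exp u ≤ 2 * (⌊Real.exp u⌋₊ : ℝ) := by
    have := Nat.lt_floor_add_one (Real.exp u); linarith
  have l1 : Real.log (⌊Real.exp u⌋₊ : ℝ) ≤ u := by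
    have := Real.log_le_log (by linarith) hle; rwa [Real.log_exp] at this
  have l2 : u ≤ Real.log 2 + Real.log (⌊Real.exp u⌋₊ : ℝ) := by
    have := Real.log_le_log (by positivity) hge
    rwa [Real.log_exp, Real.log_mul (by norm_num) (by linarith)] at this
  have := Real.log_two_lt_d9
  rw [abs_le]; constructor <;> linarith [h.1, h.2]

noncomputable def ph (v : ℝ) : ℝ := v - (3/2)*v^2 + (1/16)*v^3 + (3/8)*v^4 + (1/16)*v^5
noncomputable def ph1 (v : ℝ) : ℝ := 1 - 3*v + (3/16)*v^2 + (3/2)*v^3 + (5/16)*v^4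

theorem ph_deriv (v : ℝ) : HasDerivAt ph (ph1 v) v := by
  have h := ((((hasDerivAt_id v).sub ((hasDerivAt_pow 2 v).const_mul (3/2))).add ((hasDerivAt_pow 3 v).const_mul (1/16))).add
    ((hasDerivAt_pow 4 v).const_mul (3/8))).add ((hasDerivAt_pow 5 v).const_mul (1/16))
  refine (h.congr_deriv ?_)
  unfold ph1; norm_num; ring

theorem ph_eq (v : ℝ) : ph v = v * gp v^2 := by unfold ph gp; ring

theorem wt_layer (A b : ℝ) (hA : 0 < A) (hb : 0 < b) (hbA : b ≤ A) :
    b * gc (b/A)^2 = ∫ u in Ioc 0 A, (Ici b).indicator (fun u => - ph1 (u/A)) u := by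
  rw [setIntegral_indicator measurableSet_Ici]
  have e : Ioc 0 A ∩ Ici b = Icc b A := by
    ext u; simp only [mem_inter_iff, mem_Ioc, mem_Ici, mem_Icc]
    constructor
    · rintro ⟨⟨_, h1⟩, h2⟩; exact ⟨h2, h1⟩
    · rintro ⟨h1, h2⟩; exact ⟨⟨by linarith, h2⟩, h1⟩
  rw [e, integral_Icc_eq_integral_Ioc, ← intervalIntegral.integral_of_le hbA]
  have hd : ∀ u, HasDerivAt (fun u => -A * ph (u/A)) (-ph1 (u/A)) u := by
    intro u
    have h : HasDerivAt (fun u : ℝ => u/A) (1/A) u := (hasDerivAt_id u).div_const A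
    exact (((ph_deriv (u/A)).comp u h).const_mul (-A)).congr_deriv (by field_simp)
  rw [intervalIntegral.integral_eq_sub_of_hasDerivAt (fun u _ => hd u)
    (Continuous.intervalIntegrable (by unfold ph1; fun_prop) _ _)]
  rw [gc_eq _ (by positivity) ((div_le_one hA).2 hbA), div_self hA.ne', ph_eq, ph_eq]
  simp [gp]; field_simp

theorem sum_sq_bd (A : ℝ) (hA : 1 ≤ A) :
    ∑ n ∈ Finset.Ioc 1 ⌊Real.exp A⌋₊, aN A n ^ 2 ≤ A^2 * (97/960) + 36 * A := by
  have hA0 : 0 < A := by linarith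
  set N := ⌊Real.exp A⌋₊ with hN
  have hlogn : ∀ n ∈ Finset.Ioc 1 N, 0 < Real.log n ∧ Real.log n ≤ A := by
    intro n hn
    rw [Finset.mem_Ioc] at hn
    have h1 : (1:ℝ) < n := by exact_mod_cast hn.1
    have h2 : (n:ℝ) ≤ Real.exp A := (Nat.le_floor_iff (by positivity)).1 hn.2
    exact ⟨Real.log_pos h1, (Real.log_le_iff_le_exp (by linarith)).2 h2⟩
  have step1 : ∑ n ∈ Finset.Ioc 1 N, aN A n ^ 2 ≤
      ∑ n ∈ Finset.Ioc 1 N, ∫ u in Ioc 0 A, vM n / n * (Ici (Real.log n)).indicator (fun u => - ph1 (u/A)) u := by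
    refine Finset.sum_le_sum fun n hn => ?_
    have h := hlogn n hn
    rw [integral_const_mul, ← wt_layer A _ hA0 h.1 h.2]
    have hn0 : (0:ℝ) < n := by have := (Finset.mem_Ioc.1 hn).1; exact_mod_cast (by omega : 0 < n)
    have hv := vM_nonneg n
    have hv2 : vM n ≤ Real.log n := ArithmeticFunction.vonMangoldt_le_log
    unfold aN
    rw [mul_pow, div_pow, Real.sq_sqrt hn0.le, ← mul_assoc]
    refine mul_le_mul_of_nonneg_right ?_ (sq_nonneg _)
    rw [div_mul_eq_mul_div]
    refine div_le_div_of_nonneg_right ?_ hn0.le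
    nlinarith
  have hcont : Continuous (fun u => - ph1 (u/A)) := by unfold ph1; fun_prop
  have hint : ∀ n ∈ Finset.Ioc 1 N, IntegrableOn (fun u => vM n / n * (Ici (Real.log n)).indicator (fun u => - ph1 (u/A)) u) (Ioc 0 A) := by
    intro n _
    refine Integrable.const_mul ?_ _
    exact (hcont.integrableOn_Ioc (a := 0) (b := A)).indicator measurableSet_Ici
  rw [← integral_finsetSum _ hint] at step1
  refine step1.trans ?_
  have hb : ∀ u ∈ Ioc 0 A, ∑ n ∈ Finset.Ioc 1 N, vM n / n * (Ici (Real.log n)).indicator (fun u => - ph1 (u/A)) u ≤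
      - ph1 (u/A) * u + 36 := by
    intro u hu
    have e : ∑ n ∈ Finset.Ioc 1 N, vM n / n * (Ici (Real.log n)).indicator (fun u => - ph1 (u/A)) u =
        - ph1 (u/A) * MM ⌊Real.exp u⌋₊ := by
      unfold MM
      rw [Finset.mul_sum]
      have hsub : Finset.Ioc 1 ⌊Real.exp u⌋₊ ⊆ Finset.Ioc 1 N := 
        Finset.Ioc_subset_Ioc_right (Nat.floor_mono (Real.exp_le_exp.2 hu.2))
      have hsub2 : Finset.Ioc 1 ⌊Real.exp u⌋₊ ⊆ Finset.Ioc 0 ⌊Real.exp u⌋₊ := 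
        Finset.Ioc_subset_Ioc_left (by omega)
      rw [← Finset.sum_subset hsub, ← Finset.sum_subset hsub2]
      · refine Finset.sum_congr rfl fun n hn => ?_
        rw [Finset.mem_Ioc] at hn
        have h1 : (0:ℝ) < n := by exact_mod_cast (by omega : 0 < n)
        have h2 : (n:ℝ) ≤ Real.exp u := (Nat.le_floor_iff (by positivity)).1 hn.2
        rw [indicator_of_mem]
        · ring
        · exact (Real.log_le_iff_le_exp h1).2 h2
      · intro n hn hn'
        have : n = 1 := by rw [Finset.mem_Ioc] at hn hn'; omega
        subst this; simp [vM]
      · intro n hn hn'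
        rw [Finset.mem_Ioc] at hn hn'
        have h3 : ⌊Real.exp u⌋₊ < n := by omega
        have h1 : (0:ℝ) < n := by exact_mod_cast (by omega : 0 < n)
        rw [indicator_of_notMem, mul_zero]
        rw [mem_Ici, not_le, Real.lt_log_iff_exp_lt h1]
        exact (Nat.floor_lt (by positivity)).1 h3
    rw [e]
    have hM := MM_exp u hu.1.le
    have hv0 : 0 ≤ u/A := by have := hu.1; positivity
    have hv1 : u/A ≤ 1 := (div_le_one hA0).2 hu.2
    have hph : |ph1 (u/A)| ≤ 6 := by
      set v := u/A
      have h2 : v^2 ≤ 1 := pow_le_one₀ hv0 hv1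
      have h3 : v^3 ≤ 1 := pow_le_one₀ hv0 hv1
      have h4 : v^4 ≤ 1 := pow_le_one₀ hv0 hv1
      have : 0 ≤ v^2 := by positivity
      have : 0 ≤ v^3 := by positivity
      have : 0 ≤ v^4 := by positivity
      unfold ph1
      rw [abs_le]; constructor <;> linarith
    have : |ph1 (u/A) * (MM ⌊Real.exp u⌋₊ - u)| ≤ 6 * 6 := by
      rw [abs_mul]; gcongr
    have := neg_le_of_abs_le this
    nlinarith
  have hmono := setIntegral_mono_on (s := Ioc 0 A) (integrable_finset_sum _ hint)
    (Continuous.integrableOn_Ioc (by unfold ph1; fun_prop : Continuous (fun u => - ph1 (u/A) * u + 36))) measurableSet_Ioc hb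
  refine hmono.trans (le_of_eq ?_)
  rw [← intervalIntegral.integral_of_le hA0.le]
  have e2 : ∀ u, - ph1 (u/A) * u + 36 = (fun v => A * (- ph1 v * v) + 36) (u/A) := by
    intro u; simp only; field_simp
  simp_rw [e2]
  rw [intervalIntegral.integral_comp_div (fun v => A * (- ph1 v * v) + 36) hA0.ne']
  rw [zero_div, div_self hA0.ne', smul_eq_mul, intervalIntegral.integral_add (Continuous.intervalIntegrable (by unfold ph1; fun_prop) _ _)
    (Continuous.intervalIntegrable (by fun_prop) _ _), intervalIntegral.integral_const_mul]
  have e3 : ∀ v : ℝ, -ph1 v * v = (-1) * v^1 + 3 * v^2 + (-3/16) * v^3 + (-3/2) * v^4 + (-5/16) * v^5 := by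
    intro v; unfold ph1; ring
  simp_rw [e3]
  have : ∫ v in (0:ℝ)..1, ((-1) * v^1 + 3 * v^2 + (-3/16) * v^3 + (-3/2) * v^4 + (-5/16) * v^5) = 97/960 := by
    rw [intervalIntegral.integral_add, intervalIntegral.integral_add, intervalIntegral.integral_add, intervalIntegral.integral_add]
    · simp only [intervalIntegral.integral_const_mul, integral_pow]
      norm_num
    all_goals exact Continuous.intervalIntegrable (by fun_prop) _ _
  rw [this]
  simp; ring

theorem DD_eq (A t : ℝ) (hA : 1 ≤ A) : DD A t = ∑ n ∈ Finset.Ioc 1 ⌊Real.exp A⌋₊, aN A n * Real.cos (t * Real.log n) := by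
  have hA0 : 0 < A := by linarith
  unfold DD
  refine tsum_eq_sum fun n hn => ?_
  have : aN A n = 0 := by
    rw [Finset.mem_Ioc, not_and_or] at hn
    rcases hn with h | h
    · have : n = 0 ∨ n = 1 := by omega
      rcases this with rfl | rfl <;> simp [aN, vM]
    · have h1 : Real.exp A < n := (Nat.floor_lt (by positivity)).1 (not_le.1 h)
      have h2 : A < Real.log n := (Real.lt_log_iff_exp_lt (lt_trans (Real.exp_pos A) h1)).2 h1
      rw [aN, gc_zero, mul_zero]
      rw [abs_of_pos (by have : 0 < Real.log n := by linarith
                         positivity), one_le_div hA0]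
      exact h2.le
  rw [this, zero_mul]

theorem cos_int_bd (T m : ℝ) (hm : m ≠ 0) : |∫ t in T..2*T, Real.cos (t*m)| ≤ 2/|m| := by
  rw [intervalIntegral.integral_comp_mul_right (fun t => Real.cos t) hm, integral_cos, smul_eq_mul, abs_mul, abs_inv,
    inv_mul_eq_div]
  refine div_le_div_of_nonneg_right ?_ (abs_nonneg _)
  refine (abs_sub _ _).trans ?_
  have := Real.abs_sin_le_one (2*T*m)
  have := Real.abs_sin_le_one (T*m)
  linarith

theorem log_gap (m n X : ℝ) (hm : 0 < m) (hn : 0 < n) (hmX : m ≤ X) (hnX : n ≤ X) :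
    |m - n| / X ≤ |Real.log m - Real.log n| := by
  have key : ∀ m n : ℝ, 0 < m → 0 < n → m ≤ X → n ≤ m → (m-n)/X ≤ Real.log m - Real.log n := by
    intro m n hm hn hmX hnm
    have h := Real.one_sub_inv_le_log_of_pos (by positivity : 0 < m/n)
    rw [Real.log_div hm.ne' hn.ne'] at h
    refine le_trans ?_ h
    rw [inv_div, one_sub_div hm.ne']
    exact div_le_div_of_nonneg_left (by linarith) hm hmX
  rcases le_total n m with h | h
  · rw [abs_of_nonneg (by linarith)]
    exact (key m n hm hn hmX h).trans (le_abs_self _)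
  · rw [abs_sub_comm, abs_of_nonneg (by linarith), abs_sub_comm]
    exact (key n m hn hm hnX h).trans (le_abs_self _)

theorem harm_bd (N m : ℕ) (hm : m ≤ N) : ∑ n ∈ Finset.range (N+1), (if n = m then 0 else 1/|(m:ℝ)-n|) ≤ 2 * (1 + Real.log N) := by
  have hh : ∀ k : ℕ, k ≤ N → ∑ j ∈ Finset.range k, (1:ℝ)/((j:ℝ)+1) ≤ 1 + Real.log N := by
    intro k hk
    have h1 : ∑ j ∈ Finset.range k, (1:ℝ)/((j:ℝ)+1) ≤ ∑ j ∈ Finset.range N, (1:ℝ)/((j:ℝ)+1) :=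
      Finset.sum_le_sum_of_subset_of_nonneg (Finset.range_subset_range.2 hk) fun j _ _ => by positivity
    refine h1.trans ?_
    have := harmonic_le_one_add_log N
    simpa [harmonic] using this
  obtain ⟨k, rfl⟩ := Nat.exists_eq_add_of_le hm
  rw [show m + k + 1 = m + (k+1) by ring, Finset.sum_range_add, Finset.sum_range_succ' _ k]
  have h1 : ∑ n ∈ Finset.range m, (if n = m then 0 else 1/|(m:ℝ)-n|) ≤ 1 + Real.log ((m+k:ℕ):ℝ) := by
    refine le_trans (le_of_eq ?_) (hh m (by omega))
    rw [← Finset.sum_range_reflect]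
    refine Finset.sum_congr rfl fun j hj => ?_
    have hj := Finset.mem_range.1 hj
    rw [if_neg (by omega)]
    have : ((m - 1 - j : ℕ) : ℝ) = m - 1 - j := by
      rw [Nat.cast_sub (by omega), Nat.cast_sub (by omega)]; simp
    rw [this, show (m:ℝ) - (m - 1 - j) = j + 1 by ring, abs_of_pos (by positivity)]
  have h2 : ∑ j ∈ Finset.range k, (if m + (j+1) = m then 0 else 1/|(m:ℝ)-((m + (j+1) : ℕ):ℝ)|) ≤ 1 + Real.log ((m+k:ℕ):ℝ) := by
    refine le_trans (le_of_eq ?_) (hh k (by omega))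
    refine Finset.sum_congr rfl fun j hj => ?_
    rw [if_neg (by omega)]
    push_cast
    rw [show (m:ℝ) - (m + (j+1)) = -(j+1) by ring, abs_neg, abs_of_pos (by positivity)]
  simp only [add_zero, if_true]
  linarith

theorem pair_bd (T X : ℝ) (hT : 0 < T) (m n : ℕ) (hm : 2 ≤ m) (hn : 2 ≤ n) (hmX : (m:ℝ) ≤ X) (hnX : (n:ℝ) ≤ X) :
    ∫ t in T..2*T, Real.cos (t * Real.log m) * Real.cos (t * Real.log n) ≤
      1 + (if m = n then T/2 else 0) + X * (if n = m then 0 else 1/|(m:ℝ)-n|) := by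
  have hm' : (2:ℝ) ≤ m := by exact_mod_cast hm
  have hn' : (2:ℝ) ≤ n := by exact_mod_cast hn
  have e : ∀ t : ℝ, Real.cos (t * Real.log m) * Real.cos (t * Real.log n) =
      1/2 * Real.cos (t * (Real.log m - Real.log n)) + 1/2 * Real.cos (t * (Real.log m + Real.log n)) := by
    intro t; rw [mul_sub, mul_add, Real.cos_sub, Real.cos_add]; ring
  simp_rw [e]
  rw [intervalIntegral.integral_add (Continuous.intervalIntegrable (by fun_prop) _ _) (Continuous.intervalIntegrable (by fun_prop) _ _),
    intervalIntegral.integral_const_mul, intervalIntegral.integral_const_mul]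
  have hl2 := Real.log_two_gt_d9
  have l1 : Real.log 2 ≤ Real.log m := Real.log_le_log (by norm_num) hm'
  have l2 : Real.log 2 ≤ Real.log n := Real.log_le_log (by norm_num) hn'
  have hp := cos_int_bd T (Real.log m + Real.log n) (by linarith)
  have hp2 : 2/|Real.log m + Real.log n| ≤ 2 := by
    rw [abs_of_pos (by linarith), div_le_iff₀ (by linarith)]; linarith
  have hp3 := le_of_abs_le (hp.trans hp2)
  by_cases h : m = n
  · subst h
    simp only [if_true, sub_self, mul_zero, Real.cos_zero, intervalIntegral.integral_const, smul_eq_mul]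
    linarith
  · rw [if_neg h, if_neg (Ne.symm h)]
    have hg := log_gap m n X (by linarith) (by linarith) hmX hnX
    have hmn : (0:ℝ) < |(m:ℝ) - n| := abs_pos.2 (sub_ne_zero.2 (by exact_mod_cast h))
    have hX : 0 < X := by linarith
    have hg0 : 0 < |(m:ℝ)-n|/X := by positivity
    have hd := cos_int_bd T (Real.log m - Real.log n) (abs_pos.1 (lt_of_lt_of_le hg0 hg))
    have hd2 : 2/|Real.log m - Real.log n| ≤ 2 / (|(m:ℝ)-n|/X) := div_le_div_of_nonneg_left (by norm_num) hg0 hg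
    have hd3 := le_of_abs_le (hd.trans hd2)
    have : 2 / (|(m:ℝ)-n|/X) = 2 * (X * (1/|(m:ℝ)-n|)) := by field_simp
    rw [this] at hd3
    linarith

theorem aN_bd (A : ℝ) (hA : 1 ≤ A) (n : ℕ) (hn : n ∈ Finset.Ioc 1 ⌊Real.exp A⌋₊) : 0 ≤ aN A n ∧ aN A n ≤ A / √(n:ℝ) := by
  rw [Finset.mem_Ioc] at hn
  have h1 : (1:ℝ) < n := by exact_mod_cast hn.1
  have h2 : (n:ℝ) ≤ Real.exp A := (Nat.le_floor_iff (by positivity)).1 hn.2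
  have h3 : Real.log n ≤ A := (Real.log_le_iff_le_exp (by linarith)).2 h2
  have hv := vM_nonneg n
  have hv2 : vM n ≤ Real.log n := ArithmeticFunction.vonMangoldt_le_log
  have hg := gc_nonneg (Real.log n / A)
  have hg1 := gc_le_one (Real.log n / A)
  unfold aN
  refine ⟨by positivity, ?_⟩
  calc vM n / √(n:ℝ) * gc (Real.log n / A) ≤ A / √(n:ℝ) * 1 := by gcongr; linarith
    _ = _ := mul_one _

theorem DD_mean (A T : ℝ) (hA : 1 ≤ A) (hT : 0 < T) :
    ∫ t in T..2*T, DD A t^2 ≤ T/2 * (A^2 * (97/960) + 36 * A) + 10 * Real.exp A * A^4 := by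
  have hA0 : 0 < A := by linarith
  set N := ⌊Real.exp A⌋₊ with hN
  set S := Finset.Ioc 1 N with hS
  set X := Real.exp A with hX
  have hNX : (N:ℝ) ≤ X := Nat.floor_le (by positivity)
  have hX1 : 1 ≤ X := Real.one_le_exp hA0.le
  have hN1 : 1 ≤ N := (Nat.one_le_floor_iff _).2 hX1
  have hlN : Real.log N ≤ A := (Real.log_le_iff_le_exp (by exact_mod_cast hN1)).2 hNX
  set a := aN A
  have ha := fun n hn => aN_bd A hA n hn
  have e : ∀ t, DD A t^2 = ∑ m ∈ S, ∑ n ∈ S, a m * a n * (Real.cos (t * Real.log m) * Real.cos (t * Real.log n)) := by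
    intro t
    rw [DD_eq A t hA, sq, Finset.sum_mul_sum]
    refine Finset.sum_congr rfl fun m _ => Finset.sum_congr rfl fun n _ => by ring
  simp_rw [e]
  rw [intervalIntegral.integral_finset_sum (fun m _ => Continuous.intervalIntegrable (by fun_prop) _ _)]
  have h1 : ∀ m ∈ S, ∫ t in T..2*T, ∑ n ∈ S, a m * a n * (Real.cos (t * Real.log m) * Real.cos (t * Real.log n)) ≤
      ∑ n ∈ S, a m * a n * (1 + (if m = n then T/2 else 0) + X * (if n = m then 0 else 1/|(m:ℝ)-n|)) := by
    intro m hm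
    rw [intervalIntegral.integral_finset_sum (fun n _ => Continuous.intervalIntegrable (by fun_prop) _ _)]
    refine Finset.sum_le_sum fun n hn => ?_
    rw [intervalIntegral.integral_const_mul]
    have hm' := Finset.mem_Ioc.1 hm
    have hn' := Finset.mem_Ioc.1 hn
    refine mul_le_mul_of_nonneg_left ?_ (mul_nonneg (ha m hm).1 (ha n hn).1)
    exact pair_bd T X hT m n (by omega) (by omega) (le_trans (by exact_mod_cast hm'.2) hNX) (le_trans (by exact_mod_cast hn'.2) hNX)
  refine (Finset.sum_le_sum h1).trans ?_
  have hsq := sum_sq_bd A hA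
  have hsq2 : ∑ n ∈ S, a n^2 ≤ A^2 * (1 + A) := by
    have h2 : ∀ n ∈ S, a n^2 ≤ A^2 * (1/(n:ℝ)) := by
      intro n hn
      have := ha n hn
      have hn0 : (0:ℝ) < n := by have := (Finset.mem_Ioc.1 hn).1; exact_mod_cast (by omega : 0 < n)
      calc a n^2 ≤ (A/√(n:ℝ))^2 := pow_le_pow_left₀ this.1 this.2 2
        _ = _ := by rw [div_pow, Real.sq_sqrt hn0.le]; ring
    refine (Finset.sum_le_sum h2).trans ?_
    rw [← Finset.mul_sum]
    refine mul_le_mul_of_nonneg_left ?_ (by positivity)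
    have h3 : ∑ n ∈ S, 1/(n:ℝ) ≤ ∑ n ∈ Finset.Icc 1 N, 1/(n:ℝ) := by
      refine Finset.sum_le_sum_of_subset_of_nonneg (fun n hn => ?_) fun n _ _ => by positivity
      rw [hS, Finset.mem_Ioc] at hn
      rw [Finset.mem_Icc]; omega
    refine h3.trans ?_
    have := harmonic_le_one_add_log N
    rw [harmonic_eq_sum_Icc] at this
    push_cast at this
    simp only [one_div]
    linarith
  have hcard : (S.card : ℝ) ≤ X := by
    refine le_trans ?_ hNX
    rw [hS, Nat.card_Ioc]; exact_mod_cast Nat.sub_le _ _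
  have hsqnn : 0 ≤ ∑ n ∈ S, a n^2 := Finset.sum_nonneg fun n _ => sq_nonneg _
  have p1 : ∑ m ∈ S, ∑ n ∈ S, a m * a n ≤ X * ∑ n ∈ S, a n^2 := by
    rw [← Finset.sum_mul_sum, ← sq]
    refine (sq_sum_le_card_mul_sum_sq).trans ?_
    exact mul_le_mul_of_nonneg_right hcard hsqnn
  have p2 : ∑ m ∈ S, ∑ n ∈ S, a m * a n * (if m = n then T/2 else 0) = T/2 * ∑ n ∈ S, a n^2 := by
    rw [Finset.mul_sum]
    refine Finset.sum_congr rfl fun m hm => ?_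
    simp only [mul_ite, mul_zero]
    rw [Finset.sum_ite_eq S m, if_pos hm]; ring
  set k : ℕ → ℕ → ℝ := fun m n => if n = m then 0 else 1/|(m:ℝ)-n| with hk
  have hk0 : ∀ m n, 0 ≤ k m n := by
    intro m n; simp only [hk]; split_ifs <;> positivity
  have hks : ∀ m n, k m n = k n m := by
    intro m n; simp only [hk, eq_comm (a := n), abs_sub_comm (m:ℝ)]
  have hkb : ∀ m ∈ S, ∑ n ∈ S, k m n ≤ 2 * (1 + A) := by
    intro m hm
    have hm' := Finset.mem_Ioc.1 hm
    have h1 : ∑ n ∈ S, k m n ≤ ∑ n ∈ Finset.range (N+1), k m n := by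
      refine Finset.sum_le_sum_of_subset_of_nonneg (fun n hn => ?_) fun n _ _ => hk0 m n
      rw [hS, Finset.mem_Ioc] at hn
      rw [Finset.mem_range]; omega
    have := harm_bd N m hm'.2
    have h2 : ∑ n ∈ Finset.range (N+1), k m n ≤ 2 * (1 + Real.log N) := this
    linarith
  have p3 : ∑ m ∈ S, ∑ n ∈ S, a m * a n * k m n ≤ 2 * (1 + A) * ∑ n ∈ S, a n^2 := by
    have h1 : ∑ m ∈ S, ∑ n ∈ S, a m * a n * k m n ≤ ∑ m ∈ S, ∑ n ∈ S, (1/2 * (a m^2 * k m n) + 1/2 * (a n^2 * k n m)) := by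
      refine Finset.sum_le_sum fun m _ => Finset.sum_le_sum fun n _ => ?_
      rw [hks n m]
      nlinarith [mul_nonneg (sq_nonneg (a m - a n)) (hk0 m n)]
    refine h1.trans ?_
    simp_rw [Finset.sum_add_distrib]
    rw [Finset.sum_comm (f := fun m n => 1/2 * (a n^2 * k n m))]
    rw [← Finset.sum_add_distrib, Finset.mul_sum]
    refine Finset.sum_le_sum fun m hm => ?_
    rw [← Finset.mul_sum, ← Finset.mul_sum]
    have := mul_le_mul_of_nonneg_left (hkb m hm) (sq_nonneg (a m))
    linarith
  have e2 : ∑ m ∈ S, ∑ n ∈ S, a m * a n * (1 + (if m = n then T/2 else 0) + X * k m n) =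
      ∑ m ∈ S, ∑ n ∈ S, a m * a n + ∑ m ∈ S, ∑ n ∈ S, a m * a n * (if m = n then T/2 else 0) +
        X * ∑ m ∈ S, ∑ n ∈ S, a m * a n * k m n := by
    simp_rw [Finset.mul_sum, ← Finset.sum_add_distrib]
    refine Finset.sum_congr rfl fun m _ => Finset.sum_congr rfl fun n _ => by ring
  have e3 : ∑ m ∈ S, ∑ n ∈ S, a m * a n * (1 + (if m = n then T/2 else 0) + X * (if n = m then 0 else 1/|(m:ℝ)-n|)) =
    ∑ m ∈ S, ∑ n ∈ S, a m * a n * (1 + (if m = n then T/2 else 0) + X * k m n) := rfl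
  rw [e3, e2, p2]
  have q1 : T/2 * ∑ n ∈ S, a n^2 ≤ T/2 * (A^2 * (97/960) + 36 * A) := mul_le_mul_of_nonneg_left hsq (by positivity)
  have q2 : X * ∑ n ∈ S, a n^2 ≤ X * (2 * A^4) := by
    refine mul_le_mul_of_nonneg_left (hsq2.trans ?_) (by positivity)
    nlinarith [mul_pos hA0 hA0, pow_pos hA0 3, pow_le_pow_right₀ hA (by norm_num : 2 ≤ 4), pow_le_pow_right₀ hA (by norm_num : 3 ≤ 4)]
  have q3 : X * ∑ m ∈ S, ∑ n ∈ S, a m * a n * k m n ≤ X * (8 * A^4) := by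
    refine mul_le_mul_of_nonneg_left (p3.trans ?_) (by positivity)
    calc 2 * (1+A) * ∑ n ∈ S, a n^2 ≤ 2 * (1+A) * (A^2 * (1+A)) := by gcongr
      _ ≤ 2 * (A+A) * (A^2 * (A+A)) := by gcongr
      _ = _ := by ring
  linarith

theorem DD_cont (A : ℝ) (hA : 1 ≤ A) : Continuous (DD A) := by
  have : DD A = fun t => ∑ n ∈ Finset.Ioc 1 ⌊Real.exp A⌋₊, aN A n * Real.cos (t * Real.log n) := funext fun t => DD_eq A t hA
  rw [this]; fun_prop

theorem DD_int (A T : ℝ) (hA : 1 ≤ A) : |∫ t in T..2*T, DD A t| ≤ 4 * Real.exp A * A := by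
  have hA0 : 0 < A := by linarith
  set N := ⌊Real.exp A⌋₊ with hN
  simp_rw [DD_eq A _ hA]
  rw [intervalIntegral.integral_finset_sum (fun m _ => Continuous.intervalIntegrable (by fun_prop) _ _)]
  refine (Finset.abs_sum_le_sum_abs _ _).trans ?_
  have h : ∀ n ∈ Finset.Ioc 1 N, |∫ t in T..2*T, aN A n * Real.cos (t * Real.log n)| ≤ 4 * A := by
    intro n hn
    have ha := aN_bd A hA n hn
    have hn2 : (2:ℝ) ≤ n := by have := (Finset.mem_Ioc.1 hn).1; exact_mod_cast (by omega : 2 ≤ n)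
    have hl2 := Real.log_two_gt_d9
    have l1 : Real.log 2 ≤ Real.log n := Real.log_le_log (by norm_num) hn2
    have hc := cos_int_bd T (Real.log n) (by linarith)
    have hc2 : 2/|Real.log n| ≤ 4 := by
      rw [abs_of_pos (by linarith), div_le_iff₀ (by linarith)]; linarith
    have hs : A/√(n:ℝ) ≤ A := div_le_self hA0.le (Real.one_le_sqrt.2 (by linarith))
    rw [intervalIntegral.integral_const_mul, abs_mul, abs_of_nonneg ha.1]
    calc _ ≤ A * 4 := mul_le_mul (by linarith) (hc.trans hc2) (abs_nonneg _) hA0.le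
      _ = _ := by ring
  refine (Finset.sum_le_sum h).trans ?_
  rw [Finset.sum_const, nsmul_eq_mul, Nat.card_Ioc]
  have hNX : (N:ℝ) ≤ Real.exp A := Nat.floor_le (by positivity)
  have : ((N - 1 : ℕ):ℝ) ≤ Real.exp A := le_trans (by exact_mod_cast Nat.sub_le _ _) hNX
  nlinarith

theorem zeroBand_finite (T : ℝ) : (zeroBand T).Finite := by
  obtain ⟨C, hC, h⟩ := CNT
  have hs := (h 0).1
  have h1 := hs.tendsto_cofinite_zero
  have hpos : (0:ℝ) < 1 / (1 + (2*T)^2) := by positivity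
  have h2 := h1.eventually (gt_mem_nhds hpos)
  rw [Filter.eventually_cofinite] at h2
  refine h2.subset ?_
  intro ρ hρ
  obtain ⟨hz, h3, h4⟩ := hρ
  have hm := (mz_pos_iff ρ).2 hz
  have hm1 : (1:ℝ) ≤ mz ρ := by exact_mod_cast Nat.one_le_iff_ne_zero.2 hm
  show ¬ _
  rw [not_lt]
  have hT : 0 < T := by linarith
  apply div_le_div₀ (by linarith) hm1 (by positivity)
  have : ρ.im^2 ≤ (2*T)^2 := by apply pow_le_pow_left₀ (by linarith) h4
  simpa using this

noncomputable def Bd (T : ℝ) : Finset ℂ := (zeroBand_finite T).toFinset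

theorem mem_Bd (T : ℝ) (ρ : ℂ) : ρ ∈ Bd T ↔ mz ρ ≠ 0 ∧ T < ρ.im ∧ ρ.im ≤ 2 * T := by
  rw [Bd, Set.Finite.mem_toFinset, mz_pos_iff]; rfl

noncomputable def NB (T : ℝ) : ℝ := ∑ ρ ∈ Bd T, (mz ρ : ℝ)

open Classical in
noncomputable def N1 (T : ℝ) : ℝ := ∑ ρ ∈ Bd T, (if ρ.re = 1/2 ∧ mz ρ = 1 then (1:ℝ) else 0)

theorem NB_eq (T : ℝ) : Ntot T = NB T := by
  rw [Ntot, NB, finsum_mem_eq_finite_toFinset_sum _ (zeroBand_finite T)]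
  apply Finset.sum_congr rfl
  intro ρ hρ
  rw [Set.Finite.mem_toFinset] at hρ
  rw [zetaMult_eq ρ hρ.1]

theorem N1_eq (T : ℝ) : NlineSimple T = N1 T := by
  classical
  have hf : {ρ ∈ zeroBand T | ρ.re = 1/2 ∧ zetaMult ρ = 1}.Finite :=
    (zeroBand_finite T).subset (fun ρ h => h.1)
  rw [NlineSimple, N1, finsum_mem_eq_finite_toFinset_sum _ hf, ← Finset.sum_filter]
  apply Finset.sum_congr _ (fun _ _ => rfl)
  ext ρ
  rw [Set.Finite.mem_toFinset, Finset.mem_filter, Bd, Set.Finite.mem_toFinset]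
  constructor
  · rintro ⟨h1, h2, h3⟩
    rw [zetaMult_eq ρ h1.1] at h3
    exact ⟨h1, h2, h3⟩
  · rintro ⟨h1, h2, h3⟩
    rw [← zetaMult_eq ρ h1.1] at h3
    exact ⟨h1, h2, h3⟩

open Classical in
noncomputable def DB (T : ℝ) : ℝ := ∑ ρ ∈ Bd T, ∑ ρ' ∈ Bd T,
  (if ρ.im = ρ'.im then (mz ρ : ℝ) * mz ρ' else 0)

theorem DB_ge (T : ℝ) : 2 * NB T - N1 T ≤ DB T := by
  classical
  rw [NB, N1, DB, Finset.mul_sum, ← Finset.sum_sub_distrib]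
  apply Finset.sum_le_sum
  intro ρ hρ
  have hρ' := (mem_Bd T ρ).1 hρ
  have hm1 : 1 ≤ mz ρ := Nat.one_le_iff_ne_zero.2 hρ'.1
  have hm1R : (1:ℝ) ≤ mz ρ := by exact_mod_cast hm1
  have hnn : ∀ ρ' ∈ Bd T, (0:ℝ) ≤ (if ρ.im = ρ'.im then (mz ρ : ℝ) * mz ρ' else 0) := by
    intro ρ' _
    split_ifs <;> positivity
  have hself := Finset.single_le_sum hnn hρ
  rw [if_pos rfl] at hself
  by_cases h1 : ρ.re = 1/2 ∧ mz ρ = 1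
  · rw [if_pos h1]
    rw [h1.2] at hself ⊢
    push_cast at hself ⊢
    linarith
  rw [if_neg h1]
  by_cases h2 : mz ρ = 1
  · have hre : ρ.re ≠ 1/2 := fun h => h1 ⟨h, h2⟩
    set σ : ℂ := 1 - starRingEnd ℂ ρ with hσ
    have hmσ : mz σ = mz ρ := by rw [hσ, mz_symm, mz_conj]
    have him : σ.im = ρ.im := by simp [hσ]
    have hres : σ.re = 1 - ρ.re := by simp [hσ]
    have hne : ρ ≠ σ := by
      intro h
      have := congrArg Complex.re h
      rw [hres] at this
      exact hre (by linarith)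
    have hσB : σ ∈ Bd T := by
      rw [mem_Bd, hmσ, him]; exact hρ'
    have hsub : ({ρ, σ} : Finset ℂ) ⊆ Bd T := by
      intro z hz
      simp only [Finset.mem_insert, Finset.mem_singleton] at hz
      rcases hz with rfl | rfl <;> assumption
    have h3 := Finset.sum_le_sum_of_subset_of_nonneg hsub (fun i hi _ => hnn i hi)
    rw [Finset.sum_pair hne, if_pos rfl, if_pos him.symm, hmσ, h2] at h3
    rw [h2]
    push_cast at h3 ⊢
    linarith
  · have : 2 ≤ mz ρ := by omega
    have : (2:ℝ) ≤ mz ρ := by exact_mod_cast this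
    nlinarith

noncomputable def SB (A T t : ℝ) : ℝ := ∑ ρ ∈ Bd T, (mz ρ : ℝ) * HH A (ρ.re - 1/2) (ρ.im - t)

noncomputable def wB (T t : ℝ) : ℝ := ∑ ρ ∈ Bd T, (mz ρ : ℝ) / (1 + (ρ.im - t)^2)

theorem SB_integrable (A T : ℝ) (hA : 0 < A) : Integrable (SB A T) := by
  unfold SB
  apply integrable_finset_sum
  intro ρ _
  exact (HH_integrable A _ _ hA).const_mul _

theorem SB_cont (A T : ℝ) : Continuous (SB A T) := by
  unfold SB
  apply continuous_finset_sum
  intro ρ _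
  exact continuous_const.mul ((HH_cont A _).comp (by fun_prop))

theorem SB_int (A T : ℝ) (hA : 0 < A) : ∫ t, SB A T t = 2 * Real.pi * NB T := by
  unfold SB NB
  rw [integral_finset_sum]
  · rw [Finset.mul_sum]
    apply Finset.sum_congr rfl
    intro ρ _
    rw [integral_const_mul, HH_int A _ _ hA]; ring
  · intro ρ _
    exact (HH_integrable A _ _ hA).const_mul _

theorem SB_sq (A T : ℝ) : (fun t => SB A T t ^ 2) = fun t => ∑ ρ ∈ Bd T, ∑ ρ' ∈ Bd T,
    ((mz ρ : ℝ) * mz ρ') * (HH A (ρ.re - 1/2) (ρ.im - t) * HH A (ρ'.re - 1/2) (ρ'.im - t)) := by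
  funext t
  rw [SB, sq, Finset.sum_mul_sum]
  apply Finset.sum_congr rfl; intro ρ _
  apply Finset.sum_congr rfl; intro ρ' _
  ring

theorem SB_sq_integrable (A T : ℝ) (hA : 0 < A) : Integrable (fun t => SB A T t ^ 2) := by
  rw [SB_sq]
  apply integrable_finset_sum; intro ρ _
  apply integrable_finset_sum; intro ρ' _
  exact (HH_mul_int A _ _ _ _ hA).const_mul _

theorem SB_sq_ge (A T : ℝ) (hA : 0 < A) (hx : ∀ ρ ∈ Bd T, A * |ρ.re - 1/2| ≤ 1/100) :
    4 * Real.pi * (A * (181/480)) * DB T ≤ ∫ t, SB A T t ^ 2 := by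
  classical
  rw [SB_sq, integral_finset_sum]
  · rw [DB, Finset.mul_sum]
    apply Finset.sum_le_sum; intro ρ hρ
    rw [integral_finset_sum]
    · rw [Finset.mul_sum]
      apply Finset.sum_le_sum; intro ρ' hρ'
      rw [integral_const_mul]
      split_ifs with h
      · rw [← h]
        rw [mul_comm]
        exact mul_le_mul_of_nonneg_left (HH_pair_diag A _ _ _ hA) (by positivity)
      · rw [mul_zero]
        exact mul_nonneg (by positivity) (HH_pair_nonneg A _ _ _ _ hA (hx ρ hρ) (hx ρ' hρ'))
    · intro ρ' _
      exact (HH_mul_int A _ _ _ _ hA).const_mul _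
  · intro ρ _
    apply integrable_finset_sum; intro ρ' _
    exact (HH_mul_int A _ _ _ _ hA).const_mul _

theorem w1_integrable (a : ℝ) : Integrable (fun t : ℝ => 1 / (1 + (a - t)^2)) := by
  have h := integrable_inv_one_add_sq
  have := h.comp_sub_left a
  simpa [one_div] using this

theorem wB_integrable (T : ℝ) : Integrable (wB T) := by
  unfold wB
  apply integrable_finset_sum; intro ρ _
  have := (w1_integrable ρ.im).const_mul (mz ρ : ℝ)
  simpa [div_eq_mul_inv] using this

theorem wB_int (T : ℝ) : ∫ t, wB T t = Real.pi * NB T := by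
  unfold wB NB
  have h1 : ∀ a : ℝ, ∫ t : ℝ, 1 / (1 + (a - t)^2) = Real.pi := by
    intro a
    have := integral_sub_left_eq_self (fun y : ℝ => 1 / (1 + y^2)) volume a
    rw [this]
    simpa [one_div] using integral_univ_inv_one_add_sq
  have h2 : ∀ (ρ : ℂ), (fun t : ℝ => (mz ρ : ℝ) / (1 + (ρ.im - t)^2)) = fun t => (mz ρ : ℝ) * (1 / (1 + (ρ.im - t)^2)) := by
    intro ρ; funext t; ring
  rw [integral_finset_sum]
  · rw [Finset.mul_sum]
    apply Finset.sum_congr rfl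
    intro ρ _
    rw [h2, integral_const_mul, h1]; ring
  · intro ρ _
    rw [h2]
    exact (w1_integrable ρ.im).const_mul (mz ρ : ℝ)

theorem wB_nonneg (T t : ℝ) : 0 ≤ wB T t := by
  unfold wB; positivity

theorem NB_nonneg (T : ℝ) : 0 ≤ NB T := by unfold NB; positivity

theorem box_ev (b : ℝ → ℝ) (hblim : Tendsto b atTop (nhds 0))
    (hbox : ∀ᶠ T in atTop, ∀ ρ ∈ zeroBand T, |ρ.re - 1/2| < b T / (2 * Real.log T)) :
    ∀ᶠ T : ℝ in atTop, ∀ ρ : ℂ, mz ρ ≠ 0 → √T < |ρ.im| →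
      (24/25 * Real.log T) * |ρ.re - 1/2| ≤ 1/100 := by
  have h1 : ∀ᶠ T in atTop, b T < 1/200 := hblim.eventually (gt_mem_nhds (by norm_num))
  obtain ⟨T0, hT0⟩ := eventually_atTop.1 (hbox.and h1)
  have h2 : Tendsto (fun T : ℝ => √T / 2) atTop atTop :=
    Real.tendsto_sqrt_atTop.atTop_div_const (by norm_num)
  filter_upwards [h2.eventually_ge_atTop T0, eventually_ge_atTop (16:ℝ)] with T hT hT16
  have hpos : ∀ ρ : ℂ, mz ρ ≠ 0 → √T < ρ.im → (24/25 * Real.log T) * |ρ.re - 1/2| ≤ 1/100 := by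
    intro ρ hm him
    have hsq4 : 4 ≤ √T := by
      rw [show (4:ℝ) = √(4^2) by rw [Real.sqrt_sq]; norm_num]
      exact Real.sqrt_le_sqrt (by linarith)
    obtain ⟨hb1, hb2⟩ := hT0 (ρ.im/2) (by linarith)
    have hb3 := hb1 ρ ⟨(mz_pos_iff ρ).1 hm, by linarith, by linarith⟩
    have hL : 0 < Real.log T := Real.log_pos (by linarith)
    have hlog : Real.log T / 4 ≤ Real.log (ρ.im/2) := by
      have hss : √(√T) ≤ ρ.im/2 := by
        have h2' : 2 ≤ √(√T) := by
          rw [show (2:ℝ) = √(2^2) by rw [Real.sqrt_sq]; norm_num]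
          exact Real.sqrt_le_sqrt (by linarith)
        have : √(√T) * √(√T) = √T := Real.mul_self_sqrt (by positivity)
        nlinarith
      have h3 : Real.log (√(√T)) = Real.log T / 4 := by
        rw [Real.log_sqrt (by positivity), Real.log_sqrt (by linarith)]; ring
      rw [← h3]
      exact Real.log_le_log (by positivity) hss
    have hl2 : 0 < Real.log (ρ.im/2) := by linarith
    have h4 : |ρ.re - 1/2| * (2 * Real.log (ρ.im/2)) < b (ρ.im/2) := by
      rwa [lt_div_iff₀ (by positivity)] at hb3
    have h5 := abs_nonneg (ρ.re - 1/2)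
    nlinarith [mul_le_mul_of_nonneg_left hlog h5]
  intro ρ hm him
  rcases le_or_gt 0 ρ.im with h | h
  · rw [abs_of_nonneg h] at him
    exact hpos ρ hm him
  · rw [abs_of_neg h] at him
    have := hpos (starRingEnd ℂ ρ) (by rwa [mz_conj]) (by simpa using him)
    simpa using this

theorem HH_high (A x y : ℝ) (hA : 1 ≤ A) (hx : A * |x| ≤ 1/100) :
    |HH A x y| ≤ 9 * A / (1 + (A*y)^2) := by
  refine (HH_dec A x y (by linarith)).trans ?_
  apply div_le_div_of_nonneg_right _ (by positivity)
  have h0 : 0 ≤ A * |x| := by positivity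
  have h1 : Real.exp (A * |x|) ≤ 100/99 := by
    refine (Real.exp_le_exp.2 hx).trans ?_
    have := Real.one_sub_le_exp_neg (1/100)
    rw [Real.exp_neg] at this
    rw [show (100/99:ℝ) = (99/100)⁻¹ by norm_num]
    rw [le_inv_comm₀ (Real.exp_pos _) (by norm_num)]
    linarith
  have h2 : (1 + A * |x|)^2 ≤ (101/100)^2 := pow_le_pow_left₀ (by positivity) (by linarith) 2
  have h3 : Real.exp (A * |x|) * (1 + A * |x|)^2 ≤ 9/8 :=
    (mul_le_mul h1 h2 (by positivity) (by norm_num)).trans (by norm_num)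
  calc 8 * A * Real.exp (A * |x|) * (1 + A * |x|)^2
      = 8 * A * (Real.exp (A * |x|) * (1 + A * |x|)^2) := by ring
    _ ≤ 8 * A * (9/8) := by gcongr
    _ = 9 * A := by ring

noncomputable def iE (a t : ℝ) : ℝ := (Icc (a-1) (a+1)).indicator (fun _ => (1:ℝ)) t

theorem iE_nonneg (a t : ℝ) : 0 ≤ iE a t := Set.indicator_nonneg (fun _ _ => by norm_num) _
theorem iE_le (a t : ℝ) : iE a t ≤ 1 := Set.indicator_le_self' (fun _ _ => by norm_num) _
theorem iE_one (a t : ℝ) (h : |t - a| ≤ 1) : iE a t = 1 := by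
  rw [abs_le] at h
  exact Set.indicator_of_mem (show t ∈ Icc (a-1) (a+1) from ⟨by linarith, by linarith⟩) _

theorem HH_phi (A x y T t : ℝ) (hA : 1 ≤ A) (hx : A * |x| ≤ 1/100)
    (h : |t - T| ≤ |y| ∨ |t - 2*T| ≤ |y|) :
    |HH A x y| ≤ (18/A + 9*A*(iE T t + iE (2*T) t)) / (1 + y^2) := by
  have h0 := HH_high A x y hA hx
  have i1 := iE_nonneg T t
  have i2 := iE_nonneg (2*T) t
  have hA0 : 0 < A := by linarith
  rcases le_or_gt 1 |y| with hy | hy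
  · refine h0.trans ?_
    have hy2 : 1 ≤ y^2 := by rw [← sq_abs]; nlinarith
    have : 9 * A / (1 + (A*y)^2) ≤ (18/A) / (1 + y^2) := by
      rw [div_div, div_le_div_iff₀ (by positivity) (by positivity)]
      nlinarith [sq_nonneg A, mul_le_mul_of_nonneg_left hy2 (sq_nonneg A)]
    refine this.trans ?_
    apply div_le_div_of_nonneg_right _ (by positivity)
    have : 0 ≤ 9*A*(iE T t + iE (2*T) t) := by positivity
    linarith
  · refine h0.trans ?_
    have hi : 1 ≤ iE T t + iE (2*T) t := by
      rcases h with h | h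
      · rw [iE_one T t (by linarith)]; linarith
      · rw [iE_one (2*T) t (by linarith)]; linarith
    apply div_le_div₀ (by positivity) _ (by positivity)
    · have : y^2 ≤ (A*y)^2 := by
        rw [mul_pow]; nlinarith [sq_nonneg y, one_le_pow₀ hA (n := 2)]
      linarith
    · have : 0 ≤ 18/A := by positivity
      nlinarith

theorem SB_out (A T t : ℝ) (hA : 1 ≤ A) (hx : ∀ ρ ∈ Bd T, A * |ρ.re - 1/2| ≤ 1/100)
    (ht : t < T ∨ 2*T < t) :
    |SB A T t| ≤ (18/A + 9*A*(iE T t + iE (2*T) t)) * wB T t := by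
  rw [SB, wB, Finset.mul_sum]
  refine (Finset.abs_sum_le_sum_abs _ _).trans ?_
  apply Finset.sum_le_sum
  intro ρ hρ
  rw [abs_mul, Nat.abs_cast]
  obtain ⟨_, h1, h2⟩ := (mem_Bd T ρ).1 hρ
  have := HH_phi A (ρ.re-1/2) (ρ.im - t) T t hA (hx ρ hρ) (by
    rcases ht with h | h
    · left; rw [abs_of_neg (by linarith), abs_of_pos (by linarith)]; linarith
    · right; rw [abs_of_pos (by linarith), abs_of_neg (by linarith)]; linarith)
  calc (mz ρ : ℝ) * |HH A (ρ.re-1/2) (ρ.im - t)| ≤ (mz ρ : ℝ) * _ :=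
        mul_le_mul_of_nonneg_left this (by positivity)
    _ = _ := by ring

theorem wB_le_full (T t : ℝ) : wB T t ≤ ∑' ρ : ℂ, (mz ρ:ℝ) / (1 + (ρ.im - t)^2) := by
  obtain ⟨C, hC, h⟩ := CNT
  exact (h t).1.sum_le_tsum (Bd T) (fun ρ _ => by positivity)

theorem wB_out (T t : ℝ) (hT : 0 < T) : (t < T → wB T t ≤ wB T T) ∧ (2*T < t → wB T t ≤ wB T (2*T)) := by
  constructor
  · intro h
    apply Finset.sum_le_sum
    intro ρ hρ
    obtain ⟨_, h1, h2⟩ := (mem_Bd T ρ).1 hρ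
    apply div_le_div_of_nonneg_left (by positivity) (by positivity)
    have := pow_le_pow_left₀ (a := ρ.im - T) (b := ρ.im - t) (by linarith) (by linarith) 2
    linarith
  · intro h
    apply Finset.sum_le_sum
    intro ρ hρ
    obtain ⟨_, h1, h2⟩ := (mem_Bd T ρ).1 hρ
    apply div_le_div_of_nonneg_left (by positivity) (by positivity)
    have := pow_le_pow_left₀ (a := 2*T - ρ.im) (b := t - ρ.im) (by linarith) (by linarith) 2
    nlinarith

theorem HH_low (A x y g T : ℝ) (hA : 1 ≤ A) (hx : |x| ≤ 1/2) (hT : 1 ≤ T) (hg : g^2 ≤ T) (hy : T/2 ≤ |y|)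
    (hk : 64 * A * Real.exp (A/2) * (1 + A)^2 ≤ T) :
    |HH A x y| ≤ 1 / (1 + g^2) := by
  refine (HH_dec A x y (by linarith)).trans ?_
  rw [div_le_div_iff₀ (by positivity) (by positivity)]
  have h1 : A * |x| ≤ A/2 := by nlinarith
  have h2 : 8 * A * Real.exp (A * |x|) * (1 + A * |x|)^2 ≤ T / 8 := by
    have : 8 * A * Real.exp (A * |x|) * (1 + A * |x|)^2 ≤ 8 * A * Real.exp (A/2) * (1 + A)^2 := by
      gcongr; linarith
    linarith
  have h3 : T^2/4 ≤ (A*y)^2 := by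
    have : T/2 ≤ |A*y| := by
      rw [abs_mul, abs_of_pos (by linarith : 0 < A)]
      nlinarith [abs_nonneg y]
    rw [← sq_abs (A*y)]
    nlinarith
  have h4 : 8 * A * Real.exp (A * |x|) * (1 + A * |x|)^2 * (1 + g^2) ≤ T/8 * (2 * T) :=
    mul_le_mul h2 (by linarith) (by positivity) (by positivity)
  nlinarith

theorem SB_in (A T t : ℝ) (hA : 1 ≤ A) (hT : 16 ≤ T)
    (hx : ∀ ρ : ℂ, mz ρ ≠ 0 → √T < |ρ.im| → A * |ρ.re - 1/2| ≤ 1/100)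
    (hk : 64 * A * Real.exp (A/2) * (1 + A)^2 ≤ T)
    (ht : T ≤ t) (ht2 : t ≤ 2*T) :
    |∑' ρ : ℂ, (mz ρ:ℝ) * HH A (ρ.re - 1/2) (ρ.im - t) - SB A T t| ≤
      (18/A + 9*A*(iE T t + iE (2*T) t)) * (∑' ρ : ℂ, (mz ρ:ℝ) / (1 + (ρ.im - t)^2))
      + ∑' ρ : ℂ, (mz ρ:ℝ) / (1 + (ρ.im - 0)^2) := by
  classical
  obtain ⟨C, hC, h⟩ := CNT
  have hs1 := (h t).1
  have hs0 := (h 0).1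
  have hsum := (explicit_formula A t hA).summable
  set φ := 18/A + 9*A*(iE T t + iE (2*T) t) with hφ
  have hφ0 : 0 ≤ φ := by
    have i1 := iE_nonneg T t
    have i2 := iE_nonneg (2*T) t
    positivity
  have hS : SB A T t = ∑' ρ : ℂ, (if ρ ∈ Bd T then (mz ρ:ℝ) * HH A (ρ.re - 1/2) (ρ.im - t) else 0) := by
    rw [tsum_eq_sum (s := Bd T)]
    · rw [SB]; apply Finset.sum_congr rfl; intro ρ hρ; rw [if_pos hρ]
    · intro ρ hρ; rw [if_neg hρ]
  have hSs : Summable (fun ρ : ℂ => (if ρ ∈ Bd T then (mz ρ:ℝ) * HH A (ρ.re - 1/2) (ρ.im - t) else 0)) :=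
    summable_of_ne_finset_zero (s := Bd T) (fun ρ hρ => if_neg hρ)
  rw [hS, ← hsum.tsum_sub hSs, ← tsum_mul_left, ← (hs1.mul_left φ).tsum_add hs0, ← Real.norm_eq_abs]
  apply tsum_of_norm_bounded ((hs1.mul_left φ).add hs0).hasSum
  intro ρ
  rw [Real.norm_eq_abs]
  have hnn1 : 0 ≤ φ * ((mz ρ:ℝ) / (1 + (ρ.im - t)^2)) := by positivity
  have hnn2 : 0 ≤ (mz ρ:ℝ) / (1 + (ρ.im - 0)^2) := by positivity
  by_cases hB : ρ ∈ Bd T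
  · rw [if_pos hB, sub_self, abs_zero]
    exact add_nonneg hnn1 hnn2
  rw [if_neg hB, sub_zero]
  by_cases hm : mz ρ = 0
  · simp [hm]
  rw [abs_mul, Nat.abs_cast]
  have hsq : √T ≤ T/2 := by
    rw [Real.sqrt_le_left (by linarith)]; nlinarith
  rcases le_or_gt |ρ.im| (√T) with hlow | hhigh
  · have h1 := HH_low A (ρ.re-1/2) (ρ.im - t) (ρ.im - 0) T hA (by
      have := mz_strip ρ hm
      rw [abs_le]; constructor <;> linarith) (by linarith) (by
      rw [sub_zero, ← sq_abs]
      have := Real.sq_sqrt (show 0 ≤ T by linarith)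
      have h5 := pow_le_pow_left₀ (abs_nonneg _) hlow 2
      linarith) (by
      have := (abs_le.1 hlow).2
      rw [abs_of_nonpos (by linarith)]; linarith) hk
    have : (mz ρ:ℝ) * |HH A (ρ.re - 1/2) (ρ.im - t)| ≤ (mz ρ:ℝ) * (1 / (1 + (ρ.im - 0)^2)) :=
      mul_le_mul_of_nonneg_left h1 (by positivity)
    rw [mul_one_div] at this
    linarith
  · have h1 := HH_phi A (ρ.re-1/2) (ρ.im - t) T t hA (hx ρ hm hhigh) (by
      by_cases hc : T < ρ.im
      · have hc2 : 2*T < ρ.im := by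
          by_contra hcon
          exact hB ((mem_Bd T ρ).2 ⟨hm, hc, by linarith⟩)
        right
        rw [abs_of_nonpos (by linarith), abs_of_pos (by linarith)]; linarith
      · left
        rw [abs_of_nonneg (by linarith), abs_of_nonpos (by linarith)]; linarith)
    have : (mz ρ:ℝ) * |HH A (ρ.re - 1/2) (ρ.im - t)| ≤ (mz ρ:ℝ) * (φ / (1 + (ρ.im - t)^2)) :=
      mul_le_mul_of_nonneg_left h1 (by positivity)
    have e : (mz ρ:ℝ) * (φ / (1 + (ρ.im - t)^2)) = φ * ((mz ρ:ℝ) / (1 + (ρ.im - t)^2)) := by ring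
    linarith

noncomputable def MT (A T t : ℝ) : ℝ :=
  (Icc T (2*T)).indicator (fun t => Real.log T - 2 * DD A t) t

noncomputable def iT (T t : ℝ) : ℝ := (Icc T (2*T)).indicator (fun _ => (1:ℝ)) t

theorem pointwise_main : ∃ K : ℝ, 1 ≤ K ∧ ∀ A T : ℝ, 1 ≤ A → A ≤ Real.log T → Real.log T ≤ 2 * A →
    16 ≤ T → Real.exp A ≤ T → 64 * A * Real.exp (A/2) * (1 + A)^2 ≤ T →
    (∀ ρ : ℂ, mz ρ ≠ 0 → √T < |ρ.im| → A * |ρ.re - 1/2| ≤ 1/100) →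
    ∀ t, wB T t ≤ K * Real.log T ∧
      |SB A T t - MT A T t| ≤ K * iT T t + 18/A * wB T t
        + K * Real.log T^2 * (iE T t + iE (2*T) t) := by
  obtain ⟨C, hC, hCN⟩ := CNT
  obtain ⟨C0, hC0, hS⟩ := S_est
  set W0 := ∑' ρ : ℂ, (mz ρ:ℝ) / (1 + (ρ.im - 0)^2) with hW0
  have hW0n : 0 ≤ W0 := tsum_nonneg (fun ρ => by positivity)
  refine ⟨C0 + 2 + 36 * (4*C) + W0 + 9 * (4*C), by nlinarith, ?_⟩
  intro A T hA hAL hLA hT hexp hk hx t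
  set L := Real.log T with hL
  have hL1 : 1 ≤ L := by linarith
  have hfull : ∀ u, T ≤ u → u ≤ 2*T → ∑' ρ : ℂ, (mz ρ:ℝ) / (1 + (ρ.im - u)^2) ≤ 4 * C * L := by
    intro u h1 h2
    refine (hCN u).2.trans ?_
    have h3 : Real.log (1 + u^2) ≤ 3 * L := by
      have : Real.log (T^3) = 3 * L := by rw [Real.log_pow]; norm_num [hL]
      rw [← this]
      apply Real.log_le_log (by positivity)
      nlinarith [mul_le_mul_of_nonneg_left hT (sq_nonneg T), pow_le_pow_left₀ (by linarith) h2 2]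
    nlinarith
  have hwB : wB T t ≤ 4 * C * L := by
    by_cases h1 : t < T
    · exact ((wB_out T t (by linarith)).1 h1).trans ((wB_le_full T T).trans (hfull T le_rfl (by linarith)))
    by_cases h2 : 2*T < t
    · exact ((wB_out T t (by linarith)).2 h2).trans
        ((wB_le_full T (2*T)).trans (hfull (2*T) (by linarith) le_rfl))
    · exact (wB_le_full T t).trans (hfull t (by linarith) (by linarith))
  have hBx : ∀ ρ ∈ Bd T, A * |ρ.re - 1/2| ≤ 1/100 := by
    intro ρ hρ
    obtain ⟨h0, h1, h2⟩ := (mem_Bd T ρ).1 hρ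
    apply hx ρ h0
    rw [abs_of_pos (by linarith)]
    have hsq : √T ≤ T := by
      rw [Real.sqrt_le_left (by linarith)]; nlinarith
    linarith
  have i1 := iE_nonneg T t
  have i2 := iE_nonneg (2*T) t
  have hw0 := wB_nonneg T t
  have hAw : ∀ w, 0 ≤ w → w ≤ 4 * C * L → 9 * A * (iE T t + iE (2*T) t) * w
      ≤ 9 * (4 * C) * L^2 * (iE T t + iE (2*T) t) := by
    intro w h0 h1
    have : A * w ≤ L * (4 * C * L) := mul_le_mul hAL h1 h0 (by linarith)
    nlinarith [mul_le_mul_of_nonneg_right this (add_nonneg i1 i2)]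
  have hrest : 0 ≤ (C0 + 2 + 36 * (4*C) + W0) * L^2 * (iE T t + iE (2*T) t) := by positivity
  constructor
  · nlinarith
  by_cases hin : t ∈ Icc T (2*T)
  · obtain ⟨h1, h2⟩ := hin
    have hM : MT A T t = L - 2 * DD A t :=
      Set.indicator_of_mem (show t ∈ Icc T (2*T) from ⟨h1, h2⟩) _
    have hi : iT T t = 1 := Set.indicator_of_mem (show t ∈ Icc T (2*T) from ⟨h1, h2⟩) _
    rw [hM, hi]
    have e1 := hS A t hA (hexp.trans h1)
    have e2 := SB_in A T t hA hT hx hk h1 h2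
    have e3 : |Real.log t - L| ≤ 1 := by
      have l1 : L ≤ Real.log t := Real.log_le_log (by linarith) h1
      have l2 : Real.log t ≤ Real.log 2 + L := by
        rw [hL, ← Real.log_mul (by norm_num) (by linarith)]
        exact Real.log_le_log (by linarith) h2
      rw [abs_of_nonneg (by linarith)]
      linarith [Real.log_two_lt_d9]
    have hf := hfull t h1 h2
    set W := ∑' ρ : ℂ, (mz ρ:ℝ) / (1 + (ρ.im - t)^2) with hW
    have hWn : 0 ≤ W := tsum_nonneg (fun ρ => by positivity)
    set S := ∑' ρ : ℂ, (mz ρ:ℝ) * HH A (ρ.re - 1/2) (ρ.im - t) with hSd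
    have e4 : 18/A * W ≤ 36 * (4*C) := by
      rw [div_mul_eq_mul_div, div_le_iff₀ (by linarith)]
      nlinarith
    have e5 := hAw W hWn hf
    have e6 : 0 ≤ 18/A * wB T t := by positivity
    have e7 : |SB A T t - (L - 2 * DD A t)| ≤ |S - (Real.log t - 2 * DD A t)| + |S - SB A T t| + |Real.log t - L| := by
      have : SB A T t - (L - 2 * DD A t) = (S - (Real.log t - 2 * DD A t)) - (S - SB A T t) + (Real.log t - L) := by ring
      rw [this]
      refine (abs_add_le _ _).trans ?_
      have := abs_sub (S - (Real.log t - 2 * DD A t)) (S - SB A T t)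
      linarith
    nlinarith
  · have hM : MT A T t = 0 := Set.indicator_of_notMem hin _
    have hi : iT T t = 0 := Set.indicator_of_notMem hin _
    rw [hM, hi, sub_zero]
    have e1 := SB_out A T t hA hBx (by
      by_contra hcon
      push Not at hcon
      exact hin ⟨hcon.1, hcon.2⟩)
    have e5 := hAw _ hw0 hwB
    nlinarith

theorem iE_int (a : ℝ) : Integrable (iE a) ∧ ∫ t, iE a t = 2 := by
  have e : iE a = (Icc (a-1) (a+1)).indicator (fun _ => (1:ℝ)) := rfl
  rw [e]
  constructor
  · exact (integrableOn_const (by simp)).integrable_indicator measurableSet_Icc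
  · rw [integral_indicator measurableSet_Icc]
    simp
    norm_num

theorem iT_int (T : ℝ) (hT : 0 < T) : Integrable (iT T) ∧ ∫ t, iT T t = T := by
  have e : iT T = (Icc T (2*T)).indicator (fun _ => (1:ℝ)) := rfl
  rw [e]
  constructor
  · exact (integrableOn_const (by simp)).integrable_indicator measurableSet_Icc
  · rw [integral_indicator measurableSet_Icc]
    simp
    rw [max_eq_left (by linarith)]; ring

theorem MT_int (A T : ℝ) (hA : 1 ≤ A) (hT : 0 < T) : Integrable (MT A T) ∧
    |(∫ t, MT A T t) - T * Real.log T| ≤ 8 * Real.exp A * A := by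
  have hc := DD_cont A hA
  have hcc : Continuous (fun t => Real.log T - 2 * DD A t) := by fun_prop
  have e : MT A T = (Icc T (2*T)).indicator (fun t => Real.log T - 2 * DD A t) := rfl
  rw [e]
  constructor
  · exact (hcc.continuousOn.integrableOn_Icc).integrable_indicator measurableSet_Icc
  · rw [integral_indicator measurableSet_Icc, integral_Icc_eq_integral_Ioc,
      ← intervalIntegral.integral_of_le (by linarith), intervalIntegral.integral_sub
        (continuous_const.intervalIntegrable _ _) ((hc.const_mul 2).intervalIntegrable _ _),
      intervalIntegral.integral_const, intervalIntegral.integral_const_mul]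
    have h := DD_int A T hA
    rw [smul_eq_mul, show (2*T - T) * Real.log T - 2 * (∫ t in T..2*T, DD A t) - T * Real.log T
      = -(2 * ∫ t in T..2*T, DD A t) by ring, abs_neg, abs_mul, abs_two]
    linarith

theorem MT_sq (A T : ℝ) (hA : 1 ≤ A) (hT : 1 ≤ T) : Integrable (fun t => MT A T t ^ 2) ∧
    (∫ t, MT A T t ^ 2) ≤ T * Real.log T ^ 2 + 16 * Real.log T * Real.exp A * A
      + 4 * (T / 2 * (A ^ 2 * (97 / 960) + 36 * A) + 10 * Real.exp A * A ^ 4) := by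
  have hc := DD_cont A hA
  have hcc : Continuous (fun t => (Real.log T - 2 * DD A t)^2) := by fun_prop
  have e : (fun t => MT A T t ^ 2) = (Icc T (2*T)).indicator (fun t => (Real.log T - 2 * DD A t)^2) := by
    funext t
    rw [MT]
    by_cases h : t ∈ Icc T (2*T)
    · rw [indicator_of_mem h, indicator_of_mem h]
    · rw [indicator_of_notMem h, indicator_of_notMem h]; norm_num
  rw [e]
  constructor
  · exact (hcc.continuousOn.integrableOn_Icc).integrable_indicator measurableSet_Icc
  · rw [integral_indicator measurableSet_Icc, integral_Icc_eq_integral_Ioc,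
      ← intervalIntegral.integral_of_le (by linarith)]
    have e2 : (fun t => (Real.log T - 2 * DD A t)^2) =
        fun t => (Real.log T^2 - (4 * Real.log T) * DD A t) + 4 * DD A t ^ 2 := by
      funext t; ring
    rw [e2, intervalIntegral.integral_add
        ((by fun_prop : Continuous (fun t => Real.log T^2 - (4 * Real.log T) * DD A t)).intervalIntegrable _ _)
        ((by fun_prop : Continuous (fun t => 4 * DD A t ^ 2)).intervalIntegrable _ _),
      intervalIntegral.integral_sub
        (continuous_const.intervalIntegrable _ _) ((hc.const_mul _).intervalIntegrable _ _),
      intervalIntegral.integral_const, intervalIntegral.integral_const_mul,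
      intervalIntegral.integral_const_mul, smul_eq_mul]
    have h := (abs_le.1 (DD_int A T hA)).1
    have h2 := DD_mean A T hA (by linarith)
    have hL : 0 ≤ Real.log T := Real.log_nonneg hT
    nlinarith [mul_le_mul_of_nonneg_left h hL]

theorem four_sq (a b c d : ℝ) : (a + b + c + d)^2 ≤ 4 * (a^2 + b^2 + c^2 + d^2) := by
  linarith [sq_nonneg (a-b), sq_nonneg (a-c), sq_nonneg (a-d), sq_nonneg (b-c), sq_nonneg (b-d),
    sq_nonneg (c-d)]

theorem maj_alg (K L q S M i w e f : ℝ) (hq : 0 ≤ q)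
    (he : 0 ≤ e) (he1 : e ≤ 1) (hf : 0 ≤ f) (hf1 : f ≤ 1) (hi : 0 ≤ i) (hi1 : i ≤ 1) (hw : 0 ≤ w)
    (p1 : w ≤ K * L) (p2 : |S - M| ≤ K * i + q * w + K * L^2 * (e + f)) :
    S^2 ≤ 101/100 * M^2 + (404 * K^2 * i + 404 * (q^2 * (K * L)) * w + 404 * (K^2 * L^4) * (e + f)) := by
  have e1 : S ^ 2 ≤ 101/100 * M ^ 2 + 101 * (S-M)^2 := by
    nlinarith [sq_nonneg (M - 100 * (S - M))]
  have e2 : |S-M| ≤ K * i + q * w + K * L^2 * e + K * L^2 * f := by linarith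
  have e3 : (S-M)^2 ≤ (K * i + q * w + K * L^2 * e + K * L^2 * f)^2 := by
    rw [← sq_abs]; exact pow_le_pow_left₀ (abs_nonneg _) e2 2
  have e4 := four_sq (K * i) (q * w) (K * L^2 * e) (K * L^2 * f)
  have hsq : ∀ x : ℝ, 0 ≤ x → x ≤ 1 → x^2 ≤ x := by intro x h0 h1; nlinarith
  have fa : (K * i)^2 ≤ K^2 * i := by
    rw [mul_pow]; exact mul_le_mul_of_nonneg_left (hsq i hi hi1) (sq_nonneg _)
  have fc : ∀ x : ℝ, 0 ≤ x → x ≤ 1 → (K * L^2 * x)^2 ≤ K^2 * L^4 * x := by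
    intro x h0 h1
    rw [show (K * L^2 * x)^2 = K^2 * L^4 * x^2 by ring]
    exact mul_le_mul_of_nonneg_left (hsq x h0 h1) (by positivity)
  have fb : (q * w)^2 ≤ q^2 * (K * L) * w := by
    rw [mul_pow, mul_assoc (q^2)]
    apply mul_le_mul_of_nonneg_left _ (sq_nonneg _)
    rw [sq]; exact mul_le_mul_of_nonneg_right p1 hw
  have g1 := fc e he he1
  have g2 := fc f hf hf1
  linarith

theorem main_ineq : ∃ K : ℝ, 1 ≤ K ∧ ∀ A T : ℝ, 1 ≤ A → A ≤ Real.log T → Real.log T ≤ 2 * A →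
    16 ≤ T → Real.exp A ≤ T → 64 * A * Real.exp (A/2) * (1 + A)^2 ≤ T →
    (∀ ρ : ℂ, mz ρ ≠ 0 → √T < |ρ.im| → A * |ρ.re - 1/2| ≤ 1/100) →
    |2 * Real.pi * NB T - T * Real.log T| ≤ 8 * Real.exp A * A
      + (K * T + 18/A * (Real.pi * NB T) + 4 * K * Real.log T^2) ∧
    4 * Real.pi * (A * (181/480)) * DB T ≤ 101/100 * (T * Real.log T ^ 2 + 16 * Real.log T * Real.exp A * A
      + 4 * (T / 2 * (A ^ 2 * (97 / 960) + 36 * A) + 10 * Real.exp A * A ^ 4))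
      + 404 * (K^2 * T + (18/A)^2 * (K * Real.log T) * (Real.pi * NB T) + 4 * K^2 * Real.log T^4) := by
  obtain ⟨K, hK, hmain⟩ := pointwise_main
  refine ⟨K, hK, ?_⟩
  intro A T hA hAL hLA hT hexp hk hx
  have hp := hmain A T hA hAL hLA hT hexp hk hx
  set L := Real.log T with hL
  have hL1 : 1 ≤ L := by linarith
  have hA0 : 0 < A := by linarith
  obtain ⟨hMi, hM1⟩ := MT_int A T hA (by linarith)
  obtain ⟨hMi2, hM2⟩ := MT_sq A T hA (by linarith)
  have hSi := SB_integrable A T hA0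
  have hSi2 := SB_sq_integrable A T hA0
  obtain ⟨ti, ti2⟩ := iT_int T (by linarith)
  obtain ⟨ei, ei2⟩ := iE_int T
  obtain ⟨fi, fi2⟩ := iE_int (2*T)
  have wi := wB_integrable T
  have wi2 := wB_int T
  have hBx : ∀ ρ ∈ Bd T, A * |ρ.re - 1/2| ≤ 1/100 := by
    intro ρ hρ
    obtain ⟨h0, h1, h2⟩ := (mem_Bd T ρ).1 hρ
    apply hx ρ h0
    rw [abs_of_pos (by linarith)]
    have hsq : √T ≤ T := by
      rw [Real.sqrt_le_left (by linarith)]; nlinarith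
    linarith
  -- generic integral of majorants
  have hgen : ∀ a b c : ℝ, Integrable (fun t => a * iT T t + b * wB T t + c * (iE T t + iE (2*T) t)) ∧
      ∫ t, (a * iT T t + b * wB T t + c * (iE T t + iE (2*T) t)) = a * T + b * (Real.pi * NB T) + c * 4 := by
    intro a b c
    have j1 : Integrable (fun t => a * iT T t) := ti.const_mul a
    have j2 : Integrable (fun t => b * wB T t) := wi.const_mul b
    have j3 : Integrable (fun t => iE T t + iE (2*T) t) := ei.add fi
    have j4 : Integrable (fun t => c * (iE T t + iE (2*T) t)) := j3.const_mul c
    have j5 : Integrable (fun t => a * iT T t + b * wB T t) := j1.add j2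
    refine ⟨j5.add j4, ?_⟩
    rw [integral_add j5 j4, integral_add j1 j2, integral_const_mul, integral_const_mul,
      integral_const_mul, integral_add ei fi, ti2, wi2, ei2, fi2]
    norm_num
  constructor
  · obtain ⟨g1, g2⟩ := hgen K (18/A) (K * L^2)
    have h1 : |∫ t, (SB A T t - MT A T t)| ≤ K * T + 18/A * (Real.pi * NB T) + (K * L^2) * 4 := by
      rw [← g2, ← Real.norm_eq_abs]
      apply norm_integral_le_of_norm_le g1
      exact Eventually.of_forall (fun t => (hp t).2)
    rw [integral_sub hSi hMi, SB_int A T hA0] at h1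
    have h2 : |2 * Real.pi * NB T - T * L| ≤ |2 * Real.pi * NB T - ∫ t, MT A T t| + |(∫ t, MT A T t) - T * L| :=
      abs_sub_le _ _ _
    linarith
  · obtain ⟨g1, g2⟩ := hgen (404 * K^2) (404 * ((18/A)^2 * (K * L))) (404 * (K^2 * L^4))
    refine (SB_sq_ge A T hA0 hBx).trans ?_
    have hmaj : ∀ t, SB A T t ^ 2 ≤ 101/100 * MT A T t ^ 2 + (404 * K^2 * iT T t
        + 404 * ((18/A)^2 * (K * L)) * wB T t + 404 * (K^2 * L^4) * (iE T t + iE (2*T) t)) := by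
      intro t
      obtain ⟨p1, p2⟩ := hp t
      have i3 : 0 ≤ iT T t := Set.indicator_nonneg (fun _ _ => by norm_num) _
      have i3' : iT T t ≤ 1 := Set.indicator_le_self' (fun _ _ => by norm_num) _
      exact maj_alg K L (18/A) _ _ _ _ _ _ (by positivity) (iE_nonneg T t) (iE_le T t)
        (iE_nonneg (2*T) t) (iE_le (2*T) t) i3 i3' (wB_nonneg T t) p1 p2
    have hI : Integrable (fun t => 101/100 * MT A T t ^ 2) := hMi2.const_mul _
    have h1 : (∫ t, SB A T t ^ 2) ≤ ∫ t, (101/100 * MT A T t ^ 2 + (404 * K^2 * iT T t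
        + 404 * ((18/A)^2 * (K * L)) * wB T t + 404 * (K^2 * L^4) * (iE T t + iE (2*T) t))) :=
      integral_mono hSi2 (hI.add g1) hmaj
    rw [integral_add hI g1, g2, integral_const_mul] at h1
    linarith

theorem final_alg (K L A T G P Q : ℝ) (hK : 1 ≤ K) (hA : A = 24/25 * L) (hL : 10^9 * K^2 ≤ L)
    (hT : 0 < T) (hG : 0 ≤ G) (hGA : G * A^4 ≤ T / 10^5) (hc : K^2 * L^4 ≤ T / 10^7) (hP : 0 ≤ P)
    (h1 : |2 * P - T * L| ≤ 8 * G * A + (K * T + 18/A * P + 4 * K * L^2))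
    (h2 : 4 * (A * (181/480)) * Q ≤ 101/100 * (T * L ^ 2 + 16 * L * G * A
      + 4 * (T / 2 * (A ^ 2 * (97 / 960) + 36 * A) + 10 * G * A ^ 4))
      + 404 * (K^2 * T + (18/A)^2 * (K * L) * P + 4 * K^2 * L^4)) :
    Q ≤ 5/3 * P := by
  have hKK : K ≤ K^2 := by nlinarith
  have hL9 : 10^9 ≤ L := by nlinarith
  have hL0 : 0 < L := by linarith
  have hA1 : 1 ≤ A := by rw [hA]; linarith
  have hA0 : 0 < A := by linarith
  have hAL : A ≤ L := by rw [hA]; linarith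
  have hGA1 : G * A ≤ T / 10^5 := by
    refine le_trans (mul_le_mul_of_nonneg_left ?_ hG) hGA
    calc A = A^1 := by ring
      _ ≤ A^4 := pow_le_pow_right₀ hA1 (by norm_num)
  have hq : 18/A ≤ 1/10^6 := by
    rw [div_le_div_iff₀ hA0 (by norm_num)]; rw [hA]; linarith
  have hq0 : 0 < 18/A := by positivity
  have hKT : K * T ≤ T * L / 10^9 := by
    have : K ≤ L / 10^9 := by linarith
    have := mul_le_mul_of_nonneg_right this hT.le
    linarith
  have hKT2 : K^2 * T ≤ T * L / 10^9 := by
    have : K^2 ≤ L / 10^9 := by linarith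
    have := mul_le_mul_of_nonneg_right this hT.le
    linarith
  have hKL : K * L^2 ≤ T / 10^7 := by
    have : K * L^2 ≤ K^2 * L^4 := by
      have : L^2 ≤ L^4 := pow_le_pow_right₀ (by linarith) (by norm_num)
      exact mul_le_mul hKK this (by positivity) (by positivity)
    linarith
  have hTL : T * 10^9 ≤ T * L := mul_le_mul_of_nonneg_left hL9 hT.le
  have hqP : 18/A * P ≤ P / 10^6 := by
    have := mul_le_mul_of_nonneg_right hq hP
    linarith
  obtain ⟨h1a, h1b⟩ := abs_le.1 h1
  have hPu : P ≤ T * L := by linarith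
  have hPl : (1 - 1/10^5) * (T * L) ≤ 2 * P := by linarith
  have hTLL : T * L * 10^9 ≤ T * L^2 := by
    have := mul_le_mul_of_nonneg_left hL9 (mul_pos hT hL0).le
    linarith
  have t1 : L * G * A ≤ T * L / 10^5 := by
    have := mul_le_mul_of_nonneg_left hGA1 hL0.le
    linarith
  have t2 : T * A ≤ T * L := mul_le_mul_of_nonneg_left hAL hT.le
  have t3 : (18/A)^2 * (K * L) * P ≤ T * L := by
    have e : (18/A)^2 * (K * L) = (18 * 25 / 24)^2 * (K / L) := by
      rw [hA]; field_simp
    have : K / L ≤ 1/10^9 := by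
      rw [div_le_div_iff₀ hL0 (by norm_num)]; linarith
    have e2 : (18/A)^2 * (K * L) ≤ 1 := by rw [e]; linarith
    have := mul_le_mul_of_nonneg_right e2 hP
    linarith
  have t4 : T * A^2 = (24/25)^2 * (T * L^2) := by rw [hA]; ring
  have h3 : 4 * (A * (181/480)) * Q ≤ (101/100 * (1 + 2 * (24/25)^2 * (97/960)) + 1/10^6) * (T * L^2) := by
    have e : 101/100 * (T * L ^ 2 + 16 * L * G * A
      + 4 * (T / 2 * (A ^ 2 * (97 / 960) + 36 * A) + 10 * G * A ^ 4))
      = 101/100 * (T * L^2 + 16 * (L * G * A) + 2 * (97/960) * (T * A^2) + 72 * (T * A) + 40 * (G * A^4)) := by ring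
    rw [e, t4] at h2
    linarith
  have h4 : 4 * (24/25 * (181/480)) * Q ≤ (101/100 * (1 + 2 * (24/25)^2 * (97/960)) + 1/10^6) * (T * L) := by
    rw [hA] at h3
    by_contra hcon
    push Not at hcon
    have := mul_lt_mul_of_pos_right hcon hL0
    linarith
  have hTL0 : 0 < T * L := mul_pos hT hL0
  linarith

theorem one_third_simple_critical (b : ℝ → ℝ) (hbpos : ∀ T, 0 < b T)
    (hblim : Tendsto b atTop (nhds 0))
    (hbox : ∀ᶠ T in atTop, ∀ ρ ∈ zeroBand T, |ρ.re - 1/2| < b T / (2 * Real.log T)) :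
    ∃ ε : ℝ → ℝ, Tendsto ε atTop (nhds 0) ∧
      ∀ᶠ T in atTop, (1/3 + ε T) * Ntot T ≤ NlineSimple T := by
  refine ⟨fun _ => 0, tendsto_const_nhds, ?_⟩
  obtain ⟨K, hK, hmain⟩ := main_ineq
  have l1 := ((isLittleO_pow_exp_pos_mul_atTop 4 (show (0:ℝ) < 1/25 by norm_num)).bound
    (show (0:ℝ) < 1/10^5 by norm_num))
  have l2 := ((isLittleO_pow_exp_pos_mul_atTop 4 (show (0:ℝ) < 1 by norm_num)).bound
    (show (0:ℝ) < 1/(10^7 * K^2) by positivity))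
  filter_upwards [box_ev b hblim hbox, Real.tendsto_log_atTop.eventually l1,
    Real.tendsto_log_atTop.eventually l2,
    Real.tendsto_log_atTop.eventually (eventually_ge_atTop (10^9 * K^2)),
    eventually_ge_atTop (16:ℝ)] with T hx hl1 hl2 hl3 hT
  set L := Real.log T with hL
  set A := 24/25 * L with hA
  have hT0 : 0 < T := by linarith
  have hexpL : Real.exp L = T := Real.exp_log hT0
  have hL9 : 10^9 ≤ L := by nlinarith
  have hA1 : 1 ≤ A := by rw [hA]; linarith
  have hAL : A ≤ L := by rw [hA]; linarith
  rw [Real.norm_eq_abs, Real.norm_eq_abs, abs_of_nonneg (by positivity), abs_of_pos (Real.exp_pos _)] at hl1 hl2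
  have hG : Real.exp A * A^4 ≤ T / 10^5 := by
    have e : T = Real.exp A * Real.exp (1/25 * L) := by
      rw [← Real.exp_add, ← hexpL]; congr 1; rw [hA]; ring
    have : A^4 ≤ L^4 := pow_le_pow_left₀ (by linarith) hAL 4
    calc Real.exp A * A^4 ≤ Real.exp A * (1/10^5 * Real.exp (1/25 * L)) :=
          mul_le_mul_of_nonneg_left (this.trans hl1) (Real.exp_pos _).le
      _ = Real.exp A * Real.exp (1/25 * L) / 10^5 := by ring
      _ = T / 10^5 := by rw [← e]
  have hc : K^2 * L^4 ≤ T / 10^7 := by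
    rw [one_mul, hexpL] at hl2
    calc K^2 * L^4 ≤ K^2 * (1/(10^7*K^2) * T) := mul_le_mul_of_nonneg_left hl2 (by positivity)
      _ = T / 10^7 := by field_simp
  have hk : 64 * A * Real.exp (A/2) * (1 + A)^2 ≤ T := by
    have e1 : Real.exp (A/2) ≤ Real.exp A := Real.exp_le_exp.2 (by linarith)
    have e2 : (1 + A)^2 ≤ (2*A)^2 := pow_le_pow_left₀ (by linarith) (by linarith) 2
    have e3 : A^3 ≤ A^4 := pow_le_pow_right₀ hA1 (by norm_num)
    have e0 := Real.exp_pos A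
    calc 64 * A * Real.exp (A/2) * (1 + A)^2 ≤ 64 * A * Real.exp A * (2*A)^2 := by gcongr
      _ = 256 * (Real.exp A * A^3) := by ring
      _ ≤ 256 * (Real.exp A * A^4) := by gcongr
      _ ≤ T := by linarith
  obtain ⟨m1, m2⟩ := hmain A T hA1 hAL (by rw [← hL, hA]; linarith) hT
    (by rw [← hexpL]; exact Real.exp_le_exp.2 hAL) hk hx
  rw [← hL] at m1 m2
  have hpi := Real.pi_pos
  have hfin := final_alg K L A T (Real.exp A) (Real.pi * NB T) (Real.pi * DB T) hK hA hl3 hT0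
    (Real.exp_pos _).le hG hc (mul_nonneg hpi.le (NB_nonneg T))
    (by rw [← mul_assoc]; exact m1)
    (by rw [show 4 * (A * (181/480)) * (Real.pi * DB T) = 4 * Real.pi * (A * (181/480)) * DB T by ring]
        exact m2)
  have hD : DB T ≤ 5/3 * NB T := by
    by_contra hcon
    push Not at hcon
    have := mul_lt_mul_of_pos_left hcon hpi
    linarith
  rw [NB_eq, N1_eq]
  have := DB_ge T
  linarith
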